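/- ψ_* ∘ φ_* = id, and φ_* ∘ ψ_* is homotopic to the identity map of (B_*(E), b′_*); explicitly, an E-bimodule homotopy ω with b′_{n+1}∘ω_{n+1} + ω_n∘b′_n = φ_n∘ψ_n − id is given recursively by ω_1 = 0 and ω_{n+1}(𝐱) = ξ_{n+1}((φ_n∘ψ_n − id − ω_n∘b′_n)(𝐱)) for 𝐱 ∈ E⊗Ē^n⊗k. Consequently the resolution (X_*, d_*) is a direct summand of the normalized Hochschild resolution of E. -/

import Mathlib

open TensorProduct DirectSum

set_option maxHeartbeats 1000000
set_option maxSynthPendingDepth 3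
set_option synthInstance.maxHeartbeats 400000

noncomputable section

namespace HopfCrossed

variable (k : Type) [CommRing k]

def TpowCat (V : ModuleCat k) : ℕ → ModuleCat k
  | 0 => ModuleCat.of k k
  | n + 1 => ModuleCat.of k (V ⊗[k] (TpowCat V n))

abbrev Tpow (V : Type) [AddCommGroup V] [Module k V] (n : ℕ) : Type :=
  TpowCat k (ModuleCat.of k V) n

def tp {V : Type} [AddCommGroup V] [Module k V] : ∀ {n : ℕ}, (Fin n → V) → Tpow k V n
  | 0, _ => (1 : k)
  | _ + 1, v => (v 0) ⊗ₜ[k] (tp fun i => v i.succ)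

section Coalg
variable {H : Type} [AddCommGroup H] [Module k H]

def itComul [Coalgebra k H] : ∀ n : ℕ, H →ₗ[k] Tpow k H (n + 1)
  | 0 => (TensorProduct.rid k H).symm.toLinearMap
  | n + 1 =>
      (TensorProduct.map LinearMap.id (itComul n)) ∘ₗ (Coalgebra.comul (R := k))

def SRep [Coalgebra k H] (n : ℕ) (h : H) (N : ℕ) (u : Fin N → Fin (n + 1) → H) : Prop :=
  itComul k n h = ∑ i, tp k (u i)

def iterAct {A : Type} [AddCommGroup A] [Module k A]
    (act : H →ₗ[k] A →ₗ[k] A) : ∀ {s : ℕ}, (Fin s → H) → A → A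
  | 0, _, a => a
  | _ + 1, h, a => act (h 0) (iterAct act (fun i => h i.succ) a)

end Coalg

/-- A weak action of a Hopf algebra `H` on a `k`-algebra `A` (Blattner–Cohen–Montgomery,
Doi–Takeuchi), written `act h a = a^h`. -/
structure WeakAction (k A H : Type) [CommRing k] [Ring A] [Algebra k A] [Ring H] [HopfAlgebra k H] : Type where
  act : H →ₗ[k] A →ₗ[k] A
  act_mul : ∀ (h : H) (a b : A) (N : ℕ) (u : Fin N → Fin 2 → H), SRep k 1 h N u →
    act h (a * b) = ∑ i, act (u i 0) a * act (u i 1) b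
  act_one : ∀ h : H, act h 1 = Coalgebra.counit (R := k) h • (1 : A)
  one_act : ∀ a : A, act 1 a = a

variable {A H : Type} [Ring A] [Algebra k A] [Ring H] [HopfAlgebra k H]
variable {k}

/-- Normality of the cocycle `f`. -/
def IsNormal (f : H →ₗ[k] H →ₗ[k] A) : Prop :=
  ∀ h : H, f h 1 = Coalgebra.counit (R := k) h • (1 : A) ∧
    f 1 h = Coalgebra.counit (R := k) h • (1 : A)

/-- The cocycle condition
`f(l⁽¹⁾,m⁽¹⁾)^{h⁽¹⁾} f(h⁽²⁾, l⁽²⁾m⁽²⁾) = f(h⁽¹⁾,l⁽¹⁾) f(h⁽²⁾l⁽²⁾, m)`. -/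
def IsCocycle (W : WeakAction k A H) (f : H →ₗ[k] H →ₗ[k] A) : Prop :=
  ∀ (h l m : H) (N₁ N₂ N₃ : ℕ) (u : Fin N₁ → Fin 2 → H) (v : Fin N₂ → Fin 2 → H)
    (w : Fin N₃ → Fin 2 → H),
    SRep k 1 h N₁ u → SRep k 1 l N₂ v → SRep k 1 m N₃ w →
    (∑ i, ∑ j, ∑ p, W.act (u i 0) (f (v j 0) (w p 0)) * f (u i 1) (v j 1 * w p 1)) =
      ∑ i, ∑ j, f (u i 0) (v j 0) * f (u i 1 * v j 1) m

/-- The twisted module condition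
`(a^{l⁽¹⁾})^{h⁽¹⁾} f(h⁽²⁾,l⁽²⁾) = f(h⁽¹⁾,l⁽¹⁾) a^{h⁽²⁾l⁽²⁾}`. -/
def IsTwistedModule (W : WeakAction k A H) (f : H →ₗ[k] H →ₗ[k] A) : Prop :=
  ∀ (h l : H) (a : A) (N₁ N₂ : ℕ) (u : Fin N₁ → Fin 2 → H) (v : Fin N₂ → Fin 2 → H),
    SRep k 1 h N₁ u → SRep k 1 l N₂ v →
    (∑ i, ∑ j, W.act (u i 0) (W.act (v j 0) a) * f (u i 1) (v j 1)) =
      ∑ i, ∑ j, f (u i 0) (v j 0) * W.act (u i 1 * v j 1) a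

variable (k A H) in
/-- A crossed product `E = A #_f H` of `A` by `H`:  a ring `E` identified with `A ⊗ H`
as a `k`-module, whose multiplication is given by the crossed product formula
`(a # h)(b # l) = a b^{h⁽¹⁾} f(h⁽²⁾,l⁽¹⁾) # h⁽³⁾ l⁽²⁾`. -/
structure CrossedProduct (E : Type) [Ring E] [Algebra k E] extends WeakAction k A H where
  f : H →ₗ[k] H →ₗ[k] A
  ι : (A ⊗[k] H) ≃ₗ[k] E
  ι_one : ι (1 ⊗ₜ[k] 1) = 1
  ι_mul : ∀ (a b : A) (h l : H) (N M : ℕ) (u : Fin N → Fin 3 → H) (v : Fin M → Fin 2 → H),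
    SRep k 2 h N u → SRep k 1 l M v →
    ι (a ⊗ₜ[k] h) * ι (b ⊗ₜ[k] l) =
      ∑ i, ∑ j, ι ((a * act (u i 0) b * f (u i 1) (v j 0)) ⊗ₜ[k] (u i 2 * v j 1))
  f_normal : IsNormal f
  f_cocycle : IsCocycle toWeakAction f
  f_twisted : IsTwistedModule toWeakAction f

namespace CrossedProduct

variable {E : Type} [Ring E] [Algebra k E] (S : CrossedProduct k A H E)

/-- The canonical map `A → E`, `a ↦ a # 1`. -/
def aE : A →ₗ[k] E := S.ι.toLinearMap ∘ₗ (TensorProduct.mk k A H).flip 1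

/-- The canonical map `H → E`, `h ↦ 1 # h`. -/
def hE : H →ₗ[k] E := S.ι.toLinearMap ∘ₗ (TensorProduct.mk k A H) 1

end CrossedProduct


section Hochschild

variable (k) in
/-- For a `k`-algebra `B`, the submodule `k·1 ⊆ B`. -/
abbrev unitSub (B : Type) [Ring B] [Algebra k B] : Submodule k B :=
  LinearMap.range (Algebra.linearMap k B)

variable (k) in
/-- `B̄ = B/k`. -/
abbrev Qbar (B : Type) [Ring B] [Algebra k B] : Type := B ⧸ unitSub k B

variable (k) in
/-- The canonical projection `B → B̄`. -/
abbrev qbar (B : Type) [Ring B] [Algebra k B] : B →ₗ[k] Qbar k B :=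
  (unitSub k B).mkQ

/-- A `B`-bimodule structure (with commuting `k`-linear left and right actions)
on a `k`-module `M`. -/
structure Bimod (k B M : Type) [CommRing k] [Ring B] [Algebra k B]
    [AddCommGroup M] [Module k M] : Type where
  l : B →ₗ[k] M →ₗ[k] M
  r : B →ₗ[k] M →ₗ[k] M
  l_one : l 1 = LinearMap.id
  r_one : r 1 = LinearMap.id
  l_mul : ∀ x y : B, l (x * y) = l x ∘ₗ l y
  r_mul : ∀ x y : B, r (x * y) = r y ∘ₗ r x
  lr_comm : ∀ x y : B, l x ∘ₗ r y = r y ∘ₗ l x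

/-- Replace the `r`-tuple `a` by the `(r-1)`-tuple obtained by multiplying the
`i`-th and `(i+1)`-st entries. -/
def mulAt {A : Type} [Mul A] {r : ℕ} (a : Fin (r + 1) → A) (i : Fin r) (j : Fin r) : A :=
  if (j : ℕ) < (i : ℕ) then a j.castSucc
  else if (j : ℕ) = (i : ℕ) then a j.castSucc * a j.succ else a j.succ

variable (k) in
/-- The degree-`n` part `M ⊗ B̄^{⊗n}` of the normalized Hochschild chain complex. -/
abbrev HCh (B M : Type) [Ring B] [Algebra k B] [AddCommGroup M] [Module k M]
    (n : ℕ) : Type :=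
  M ⊗[k] Tpow k (Qbar k B) n

variable (k) in
/-- `IsHochschildD l r bd` says that `bd` is the differential of the normalized
Hochschild chain complex of `B` with coefficients in the bimodule `M` (with left
action `l` and right action `r`):
`b(m ⊗ x₁ ⊗ ⋯ ⊗ xₙ) = m x₁ ⊗ x₂ ⊗ ⋯ + ∑ (-1)^i m ⊗ ⋯ ⊗ xᵢxᵢ₊₁ ⊗ ⋯ + (-1)^n xₙ m ⊗ x₁ ⊗ ⋯ ⊗ xₙ₋₁`. -/
def IsHochschildD {B M : Type} [Ring B] [Algebra k B] [AddCommGroup M] [Module k M]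
    (l r : B →ₗ[k] M →ₗ[k] M)
    (bd : ∀ n : ℕ, HCh k B M (n + 1) →ₗ[k] HCh k B M n) : Prop :=
  ∀ (n : ℕ) (m : M) (x : Fin (n + 1) → B),
    bd n (m ⊗ₜ[k] tp k (fun i => qbar k B (x i))) =
      r (x 0) m ⊗ₜ[k] tp k (fun i : Fin n => qbar k B (x i.succ))
      + (∑ i : Fin n, ((-1 : ℤ) ^ ((i : ℕ) + 1)) •
          (m ⊗ₜ[k] tp k (fun j => qbar k B (mulAt x i j))))
      + ((-1 : ℤ) ^ (n + 1)) •
          (l (x (Fin.last n)) m ⊗ₜ[k] tp k (fun i : Fin n => qbar k B (x i.castSucc)))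

variable (k) in
/-- The homology of a (not necessarily everywhere-defined) chain complex
`⋯ → C (n+1) → C n → ⋯ → C 0`; in degree `n+1` it is `ker (d n) / im (d (n+1))`, and in
degree `0` it is `C 0 / im (d 0)`. -/
def Hml {C : ℕ → Type} [∀ n, AddCommGroup (C n)] [∀ n, Module k (C n)]
    (d : ∀ n : ℕ, C (n + 1) →ₗ[k] C n) : ℕ → Type
  | 0 => C 0 ⧸ LinearMap.range (d 0)
  | n + 1 => LinearMap.ker (d n) ⧸
      (LinearMap.range (d (n + 1))).comap (LinearMap.ker (d n)).subtype

instance {C : ℕ → Type} [∀ n, AddCommGroup (C n)] [∀ n, Module k (C n)]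
    (d : ∀ n : ℕ, C (n + 1) →ₗ[k] C n) : ∀ n, AddCommGroup (Hml k d n)
  | 0 => inferInstanceAs (AddCommGroup (C 0 ⧸ LinearMap.range (d 0)))
  | n + 1 => inferInstanceAs (AddCommGroup (LinearMap.ker (d n) ⧸
      (LinearMap.range (d (n + 1))).comap (LinearMap.ker (d n)).subtype))

instance {C : ℕ → Type} [∀ n, AddCommGroup (C n)] [∀ n, Module k (C n)]
    (d : ∀ n : ℕ, C (n + 1) →ₗ[k] C n) : ∀ n, Module k (Hml k d n)
  | 0 => inferInstanceAs (Module k (C 0 ⧸ LinearMap.range (d 0)))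
  | n + 1 => inferInstanceAs (Module k (LinearMap.ker (d n) ⧸
      (LinearMap.range (d (n + 1))).comap (LinearMap.ker (d n)).subtype))

end Hochschild

section Conv

variable {A H : Type} [Ring A] [Algebra k A] [Ring H] [HopfAlgebra k H]

/-- `IsConvInverse f g` : `g` is the convolution inverse of `f` in the convolution
algebra `Hom_k(H ⊗ H, A)`, i.e. `f * g = g * f = ε ⊗ ε · 1_A`. -/
def IsConvInverse (f g : H →ₗ[k] H →ₗ[k] A) : Prop :=
  ∀ (h l : H) (N M' : ℕ) (u : Fin N → Fin 2 → H) (v : Fin M' → Fin 2 → H),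
    SRep k 1 h N u → SRep k 1 l M' v →
    (∑ i, ∑ j, f (u i 0) (v j 0) * g (u i 1) (v j 1)) =
        (Coalgebra.counit (R := k) h * Coalgebra.counit (R := k) l) • (1 : A) ∧
    (∑ i, ∑ j, g (u i 0) (v j 0) * f (u i 1) (v j 1)) =
        (Coalgebra.counit (R := k) h * Coalgebra.counit (R := k) l) • (1 : A)

variable {E : Type} [Ring E] [Algebra k E]

/-- The elementary term `f⁻¹(S(y), z) # S(x)` appearing in the formula for the
convolution inverse `(1 # h)⁻¹ = f⁻¹(S(h⁽²⁾), h⁽³⁾) # S(h⁽¹⁾)`. -/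
def ginv (S : CrossedProduct k A H E) (finv : H →ₗ[k] H →ₗ[k] A) (x y z : H) : E :=
  S.ι ((finv (HopfAlgebra.antipode (R := k) y) z) ⊗ₜ[k] HopfAlgebra.antipode (R := k) x)

end Conv

section Bar

variable {H : Type} [Ring H] [HopfAlgebra k H]

variable (k) in
/-- The degree-`s` part `H̄^{⊗s} ⊗ N` of the normalized bar complex computing
`H_*(H, N) = Tor_*^H(k, N)`, i.e. `(H̄^* ⊗ H, d_*) ⊗_H N`. -/
abbrev BarCh (N : Type) [AddCommGroup N] [Module k N] (s : ℕ) : Type :=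
  Tpow k (Qbar k H) s ⊗[k] N

variable (k) in
/-- `IsBarD act d` : `d` is the differential of the normalized bar complex computing the
homology `H_*(H, N)` of `H` with coefficients in the left `H`-module `N` (action `act`). -/
def IsBarD {N : Type} [AddCommGroup N] [Module k N] (act : H →ₗ[k] N →ₗ[k] N)
    (d : ∀ s : ℕ, BarCh k (H := H) N (s + 1) →ₗ[k] BarCh k (H := H) N s) : Prop :=
  ∀ (s : ℕ) (h : Fin (s + 1) → H) (n : N),
    d s (tp k (fun i => qbar k H (h i)) ⊗ₜ[k] n) =
      Coalgebra.counit (R := k) (h 0) •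
          (tp k (fun i : Fin s => qbar k H (h i.succ)) ⊗ₜ[k] n)
      + (∑ i : Fin s, ((-1 : ℤ) ^ ((i : ℕ) + 1)) •
          (tp k (fun j => qbar k H (mulAt h i j)) ⊗ₜ[k] n))
      + ((-1 : ℤ) ^ (s + 1)) •
          (tp k (fun i : Fin s => qbar k H (h i.castSucc)) ⊗ₜ[k] act (h (Fin.last s)) n)

end Bar

section Sep

variable {A : Type} [Ring A] [Algebra k A]

variable (k A) in
/-- `A` is a separable `k`-algebra: the multiplication map `A ⊗ A → A` admits an
`A`-bimodule splitting (equivalently, `A` is projective as an `A ⊗ Aᵒᵖ`-module). -/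
def IsSeparableAlg : Prop :=
  ∃ s : A →ₗ[k] A ⊗[k] A,
    (LinearMap.mul' k A) ∘ₗ s = LinearMap.id ∧
    ∀ (a b x : A), s (a * x * b) =
      TensorProduct.map (LinearMap.mulLeft k a) (LinearMap.mulRight k b) (s x)

end Sep


section Resolution

variable (k A H E : Type) [CommRing k] [Ring A] [Algebra k A] [Ring H] [HopfAlgebra k H]
  [Ring E] [Algebra k E]

/-- The `E`-bimodule `X_{rs} = E ⊗ H̄^{⊗s} ⊗ Ā^{⊗r} ⊗ E`. -/
abbrev Xc (r s : ℕ) : Type :=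
  E ⊗[k] (Tpow k (Qbar k H) s ⊗[k] (Tpow k (Qbar k A) r ⊗[k] E))

/-- The `E`-bimodule `Y_s = E ⊗ H̄^{⊗s} ⊗ H`. -/
abbrev Yc (s : ℕ) : Type := E ⊗[k] (Tpow k (Qbar k H) s ⊗[k] H)

variable {k A H E}

/-- The generator `e ⊗ h̄₁ ⊗ ⋯ ⊗ h̄ₛ ⊗ ā₁ ⊗ ⋯ ⊗ āᵣ ⊗ e'` of `X_{rs}`. -/
def xgen (e : E) {s r : ℕ} (hs : Fin s → H) (as : Fin r → A) (e' : E) : Xc k A H E r s :=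
  e ⊗ₜ[k] (tp k (fun i => qbar k H (hs i)) ⊗ₜ[k] (tp k (fun i => qbar k A (as i)) ⊗ₜ[k] e'))

/-- The generator `e ⊗ h̄₁ ⊗ ⋯ ⊗ h̄ₛ ⊗ h` of `Y_s`. -/
def ygen (e : E) {s : ℕ} (hs : Fin s → H) (h : H) : Yc k H E s :=
  e ⊗ₜ[k] (tp k (fun i => qbar k H (hs i)) ⊗ₜ[k] h)

/-- Left multiplication by `e ∈ E` on `X_{rs}`. -/
def lX (e : E) {r s : ℕ} : Xc k A H E r s →ₗ[k] Xc k A H E r s :=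
  TensorProduct.map (LinearMap.mulLeft k e) LinearMap.id

/-- Right multiplication by `e ∈ E` on `X_{rs}`. -/
def rX (e : E) {r s : ℕ} : Xc k A H E r s →ₗ[k] Xc k A H E r s :=
  TensorProduct.map LinearMap.id (TensorProduct.map LinearMap.id
    (TensorProduct.map LinearMap.id (LinearMap.mulRight k e)))

/-- Transport along equalities of indices. -/
def xcast {r r' s s' : ℕ} (hr : r = r') (hs : s = s') :
    Xc k A H E r s →ₗ[k] Xc k A H E r' s' := by
  subst hr; subst hs; exact LinearMap.id

end Resolution

section ResData

variable {k A H E : Type} [CommRing k] [Ring A] [Algebra k A] [Ring H] [HopfAlgebra k H]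
  [Ring E] [Algebra k E]

variable (k A H E) in
/-- The resolution `(X_*, d_*)` of the crossed product `E = A #_f H` of Section 1 of
the paper: the maps `μ_s`, `∂_s`, `σ⁰`, and the (higher) differentials `d^l_{rs}`
(`d⁰ = dl 0`), together with all of their defining equations.  Here
`dl l r s : X_{rs} → X_{r+l-1, s-l}`. -/
structure ResData (S : CrossedProduct k A H E) : Type where
  mu : ∀ s : ℕ, Xc k A H E 0 s →ₗ[k] Yc k H E s
  del : ∀ s : ℕ, Yc k H E (s + 1) →ₗ[k] Yc k H E s
  sig0 : ∀ s : ℕ, Yc k H E s →ₗ[k] Xc k A H E 0 s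
  sig : ∀ r s : ℕ, Xc k A H E r s →ₗ[k] Xc k A H E (r + 1) s
  dl : ∀ l r s : ℕ, Xc k A H E r s →ₗ[k] Xc k A H E (r + l - 1) (s - l)
  /-- `μ_s(a₀ ⊗ 𝐡_{0s} ⊗ a₁ ⊗ h_{s+1}) = a₀ a₁^{𝐡_{0s}⁽¹⁾} ⊗ 𝐡_{0s}⁽²⁾ ⊗ h_{s+1}`. -/
  mu_eq : ∀ (s : ℕ) (a₀ : A) (h₀ : H) (hs : Fin s → H) (b : A) (h' : H)
    (Nv : Fin (s + 1) → ℕ) (v : ∀ i, Fin (Nv i) → Fin 2 → H),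
    (∀ i, SRep k 1 ((Fin.cons h₀ hs : Fin (s + 1) → H) i) (Nv i) (v i)) →
    mu s (xgen (S.ι (a₀ ⊗ₜ[k] h₀)) hs (fun i : Fin 0 => i.elim0) (S.ι (b ⊗ₜ[k] h'))) =
      ∑ c : (∀ i, Fin (Nv i)),
        ygen (S.ι ((a₀ * iterAct k S.act (fun i => v i (c i) 0) b) ⊗ₜ[k] (v 0 (c 0) 1)))
          (fun i : Fin s => v i.succ (c i.succ) 1) h'
  /-- `d⁰_{rs}` is the Hochschild-type boundary in the `A`-direction. -/
  d0_eq : ∀ (r s : ℕ) (a₀ : A) (h₀ : H) (hs : Fin s → H) (as : Fin (r + 1) → A)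
    (b : A) (h' : H) (Nv : Fin (s + 1) → ℕ) (v : ∀ i, Fin (Nv i) → Fin 2 → H),
    (∀ i, SRep k 1 ((Fin.cons h₀ hs : Fin (s + 1) → H) i) (Nv i) (v i)) →
    dl 0 (r + 1) s (xgen (S.ι (a₀ ⊗ₜ[k] h₀)) hs as (S.ι (b ⊗ₜ[k] h'))) =
      (∑ c : (∀ i, Fin (Nv i)),
        xgen (S.ι ((a₀ * iterAct k S.act (fun i => v i (c i) 0) (as 0)) ⊗ₜ[k] (v 0 (c 0) 1)))
          (fun i : Fin s => v i.succ (c i.succ) 1)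
          (fun i : Fin r => as i.succ) (S.ι (b ⊗ₜ[k] h')))
      + (∑ i : Fin r, ((-1 : ℤ) ^ ((i : ℕ) + 1)) •
          xgen (S.ι (a₀ ⊗ₜ[k] h₀)) hs (mulAt as i) (S.ι (b ⊗ₜ[k] h')))
      + ((-1 : ℤ) ^ (r + 1)) •
          xgen (S.ι (a₀ ⊗ₜ[k] h₀)) hs (fun i : Fin r => as i.castSucc)
            (S.ι ((as (Fin.last r) * b) ⊗ₜ[k] h'))
  /-- `∂_s(a ⊗ 𝐡) = ∑ᵢ (-1)^{i+1} a f(hᵢ⁽¹⁾, hᵢ₊₁⁽¹⁾)^{𝐡_{0,i-1}⁽¹⁾} ⊗ 𝐡_{0,i-1}⁽²⁾ ⊗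
  hᵢ⁽²⁾hᵢ₊₁⁽²⁾ ⊗ 𝐡_{i+2,s+1}`. -/
  del_eq : ∀ (s : ℕ) (a : A) (h₀ : H) (hs : Fin (s + 1) → H) (h' : H)
    (Nv : Fin (s + 3) → ℕ) (v : ∀ i, Fin (Nv i) → Fin 2 → H),
    (∀ i, SRep k 1 ((Fin.cons h₀ (Fin.snoc hs h') : Fin (s + 3) → H) i) (Nv i) (v i)) →
    del s (ygen (S.ι (a ⊗ₜ[k] h₀)) hs h') =
      ∑ i : Fin (s + 2), ((-1 : ℤ) ^ ((i : ℕ) + 1)) •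
        (∑ c : (∀ j : Fin ((i : ℕ) + 2),
            Fin (Nv ⟨(j : ℕ), by have := j.isLt; have := i.isLt; omega⟩)),
          ygen
            (S.ι ((a * iterAct k S.act
                (fun j : Fin (i : ℕ) =>
                  v ⟨(j : ℕ), by have := j.isLt; have := i.isLt; omega⟩
                    (c ⟨(j : ℕ), by have := j.isLt; have := i.isLt; omega⟩) 0)
                (S.f (v ⟨(i : ℕ), by have := i.isLt; omega⟩
                        (c ⟨(i : ℕ), by omega⟩) 0)
                     (v ⟨(i : ℕ) + 1, by have := i.isLt; omega⟩
                        (c ⟨(i : ℕ) + 1, by omega⟩) 0))) ⊗ₜ[k]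
              (if (i : ℕ) = 0 then
                  (v ⟨0, by omega⟩ (c ⟨0, by omega⟩) 1) * (v ⟨1, by omega⟩ (c ⟨1, by omega⟩) 1)
                else v ⟨0, by omega⟩ (c ⟨0, by omega⟩) 1)))
            (fun p : Fin s =>
              if hp : (p : ℕ) + 1 < (i : ℕ) then
                v ⟨(p : ℕ) + 1, by have := p.isLt; have := i.isLt; omega⟩
                  (c ⟨(p : ℕ) + 1, by omega⟩) 1
              else if hp' : (p : ℕ) + 1 = (i : ℕ) then
                (v ⟨(p : ℕ) + 1, by have := p.isLt; omega⟩ (c ⟨(p : ℕ) + 1, by omega⟩) 1) *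
                  (v ⟨(p : ℕ) + 2, by have := p.isLt; have := i.isLt; omega⟩
                    (c ⟨(p : ℕ) + 2, by omega⟩) 1)
              else (Fin.cons h₀ (Fin.snoc hs h') : Fin (s + 3) → H) ⟨(p : ℕ) + 2, by have := p.isLt; omega⟩)
            (if hi : (i : ℕ) = s + 1 then
                (v ⟨s + 1, by omega⟩ (c ⟨s + 1, by omega⟩) 1) *
                  (v ⟨s + 2, by omega⟩ (c ⟨s + 2, by omega⟩) 1)
              else (Fin.cons h₀ (Fin.snoc hs h') : Fin (s + 3) → H) ⟨s + 2, by omega⟩))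
  /-- `σ⁰_{0,s}(a₀ ⊗ 𝐡 ⊗ h_{s+1}) = a₀ ⊗ 𝐡 ⊗ 1 # h_{s+1}`. -/
  sig0_eq : ∀ (s : ℕ) (e : E) (hs : Fin s → H) (h : H),
    sig0 s (ygen e hs h) = xgen e hs (fun i : Fin 0 => i.elim0) (S.hE h)
  /-- `σ⁰_{r+1,s}(a₀ ⊗ 𝐡 ⊗ 𝐚 ⊗ a # h) = (-1)^{r+1} a₀ ⊗ 𝐡 ⊗ 𝐚 ⊗ ā ⊗ 1 # h`. -/
  sig_eq : ∀ (r s : ℕ) (e : E) (hs : Fin s → H) (as : Fin r → A) (b : A) (h' : H),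
    sig r s (xgen e hs as (S.ι (b ⊗ₜ[k] h'))) =
      ((-1 : ℤ) ^ (r + 1)) • xgen e hs (Fin.snoc as b) (S.hE h')
  /-- `d¹_{0s} = -σ⁰ ∘ ∂ ∘ μ` on `k ⊗ H̄^s ⊗ k`. -/
  dl_one_zero : ∀ (s : ℕ) (hs : Fin (s + 1) → H),
    dl 1 0 (s + 1) (xgen (1 : E) hs (fun i : Fin 0 => i.elim0) (1 : E)) =
      - sig0 s (del s (mu (s + 1) (xgen (1 : E) hs (fun i : Fin 0 => i.elim0) (1 : E))))
  /-- `d^l_{0s} = -∑_{j=1}^{l-1} σ⁰ ∘ d^{l-j} ∘ d^j` on `k ⊗ H̄^s ⊗ k`, for `1 < l ≤ s`. -/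
  dl_zero : ∀ (l s : ℕ) (hl : 2 ≤ l) (hls : l ≤ s) (hs : Fin s → H),
    dl l 0 s (xgen (1 : E) hs (fun i : Fin 0 => i.elim0) (1 : E)) =
      - ∑ j : Fin (l - 1),
        xcast (show (l - 2) + 1 = 0 + l - 1 by omega) rfl
          (sig (l - 2) (s - l)
            (xcast
              (show (j : ℕ) + (l - ((j : ℕ) + 1)) - 1 = l - 2 by
                have := j.isLt; omega)
              (show (s - ((j : ℕ) + 1)) - (l - ((j : ℕ) + 1)) = s - l by
                have := j.isLt; omega)
              (dl (l - ((j : ℕ) + 1)) ((j : ℕ)) (s - ((j : ℕ) + 1))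
                (xcast (show 0 + ((j : ℕ) + 1) - 1 = (j : ℕ) by omega) rfl
                  (dl ((j : ℕ) + 1) 0 s
                    (xgen (1 : E) hs (fun i : Fin 0 => i.elim0) (1 : E)))))))
  /-- `d^l_{rs} = -∑_{j=0}^{l-1} σ⁰ ∘ d^{l-j} ∘ d^j` on `k ⊗ H̄^s ⊗ Ā^r ⊗ k`, for `r > 0`,
  `1 ≤ l ≤ s`. -/
  dl_succ : ∀ (l r s : ℕ) (hl : 1 ≤ l) (hls : l ≤ s) (hs : Fin s → H) (as : Fin (r + 1) → A),
    dl l (r + 1) s (xgen (1 : E) hs as (1 : E)) =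
      - ∑ j : Fin l,
        xcast (show (r + l - 1) + 1 = (r + 1) + l - 1 by omega) rfl
          (sig (r + l - 1) (s - l)
            (xcast
              (show (r + (j : ℕ)) + (l - (j : ℕ)) - 1 = r + l - 1 by
                have := j.isLt; omega)
              (show (s - (j : ℕ)) - (l - (j : ℕ)) = s - l by
                have := j.isLt; omega)
              (dl (l - (j : ℕ)) (r + (j : ℕ)) (s - (j : ℕ))
                (xcast (show (r + 1) + (j : ℕ) - 1 = r + (j : ℕ) by omega) rfl
                  (dl (j : ℕ) (r + 1) s (xgen (1 : E) hs as (1 : E)))))))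
  /-- Each `d^l_{rs}` is a map of `E`-bimodules. -/
  dl_lmul : ∀ (l r s : ℕ) (e : E), dl l r s ∘ₗ lX e = lX e ∘ₗ dl l r s
  dl_rmul : ∀ (l r s : ℕ) (e : E), dl l r s ∘ₗ rX e = rX e ∘ₗ dl l r s

end ResData

section Xtot

variable {k A H E : Type} [CommRing k] [Ring A] [Algebra k A] [Ring H] [HopfAlgebra k H]
  [Ring E] [Algebra k E]

variable (k A H E) in
/-- The total module `X_n = ⊕_{r+s=n} X_{rs}`. -/
abbrev XT (n : ℕ) : Type :=
  ⨁ (s : Fin (n + 1)), Xc k A H E (n - (s : ℕ)) (s : ℕ)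

/-- The total differential `d_n = ∑_{r+s=n, r+l>0} ∑_{l=0}^{s} d^l_{rs}`. -/
noncomputable def dT {S : CrossedProduct k A H E} (R : ResData k A H E S) (n : ℕ) :
    XT k A H E (n + 1) →ₗ[k] XT k A H E n :=
  DirectSum.toModule k (Fin (n + 2)) (XT k A H E n) (fun s =>
    ∑ l : Fin ((s : ℕ) + 1),
      if h : 0 < (n + 1 - (s : ℕ)) + (l : ℕ) then
        (DirectSum.lof k (Fin (n + 1)) (fun s' : Fin (n + 1) => Xc k A H E (n - (s' : ℕ)) (s' : ℕ))
            ⟨(s : ℕ) - (l : ℕ), by have := s.isLt; have := l.isLt; omega⟩) ∘ₗ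
          xcast
            (show (n + 1 - (s : ℕ)) + (l : ℕ) - 1 = n - ((s : ℕ) - (l : ℕ)) by
              have := s.isLt; have := l.isLt; omega)
            rfl ∘ₗ
          R.dl (l : ℕ) (n + 1 - (s : ℕ)) (s : ℕ)
      else 0)

/-- Left multiplication by `e ∈ E` on `X_n`. -/
noncomputable def lT (e : E) (n : ℕ) : XT k A H E n →ₗ[k] XT k A H E n :=
  DirectSum.toModule k (Fin (n + 1)) (XT k A H E n) (fun s =>
    (DirectSum.lof k (Fin (n + 1)) (fun s' : Fin (n + 1) => Xc k A H E (n - (s' : ℕ)) (s' : ℕ)) s)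
      ∘ₗ lX e)

/-- Right multiplication by `e ∈ E` on `X_n`. -/
noncomputable def rT (e : E) (n : ℕ) : XT k A H E n →ₗ[k] XT k A H E n :=
  DirectSum.toModule k (Fin (n + 1)) (XT k A H E n) (fun s =>
    (DirectSum.lof k (Fin (n + 1)) (fun s' : Fin (n + 1) => Xc k A H E (n - (s' : ℕ)) (s' : ℕ)) s)
      ∘ₗ rX e)

/-- The augmentation `X_0 → E` induced by a map `μ : X_{00} → E`. -/
noncomputable def multT (mult : Xc k A H E 0 0 →ₗ[k] E) : XT k A H E 0 →ₗ[k] E :=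
  DirectSum.toModule k (Fin 1) E (fun s =>
    mult ∘ₗ xcast (show 0 - (s : ℕ) = 0 by have := s.isLt; omega)
      (show (s : ℕ) = 0 by have := s.isLt; omega))

end Xtot

section BarE

variable {k A H E : Type} [CommRing k] [Ring A] [Algebra k A] [Ring H] [HopfAlgebra k H]
  [Ring E] [Algebra k E]

variable (k E) in
/-- The degree-`n` part `B_n(E) = E ⊗ Ē^{⊗n} ⊗ E` of the normalized Hochschild
resolution of `E`. -/
abbrev Bch (n : ℕ) : Type := E ⊗[k] (Tpow k (Qbar k E) n ⊗[k] E)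

/-- The generator `e ⊗ x̄₁ ⊗ ⋯ ⊗ x̄ₙ ⊗ e'` of `B_n(E)`. -/
def bgen (e : E) {n : ℕ} (xs : Fin n → E) (e' : E) : Bch k E n :=
  e ⊗ₜ[k] (tp k (fun i => qbar k E (xs i)) ⊗ₜ[k] e')

/-- Left multiplication by `e ∈ E` on `B_n(E)`. -/
noncomputable def lB (e : E) {n : ℕ} : Bch k E n →ₗ[k] Bch k E n :=
  TensorProduct.map (LinearMap.mulLeft k e) LinearMap.id

/-- Right multiplication by `e ∈ E` on `B_n(E)`. -/
noncomputable def rB (e : E) {n : ℕ} : Bch k E n →ₗ[k] Bch k E n :=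
  TensorProduct.map LinearMap.id (TensorProduct.map LinearMap.id (LinearMap.mulRight k e))

variable (k E) in
/-- `IsBp bp` : `bp` is the differential `b'` of the normalized Hochschild resolution. -/
def IsBp (bp : ∀ n : ℕ, Bch k E (n + 1) →ₗ[k] Bch k E n) : Prop :=
  ∀ (n : ℕ) (e : E) (xs : Fin (n + 1) → E) (e' : E),
    bp n (bgen e xs e') =
      bgen (e * xs 0) (fun i : Fin n => xs i.succ) e'
      + (∑ i : Fin n, ((-1 : ℤ) ^ ((i : ℕ) + 1)) • bgen e (mulAt xs i) e')
      + ((-1 : ℤ) ^ (n + 1)) • bgen e (fun i : Fin n => xs i.castSucc) (xs (Fin.last n) * e')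

variable (k E) in
/-- `IsXi xi` : `xi` is the left `E`-linear contracting homotopy
`ξ_{n+1}(𝐱) = (-1)^{n+1} 𝐱 ⊗ 1` of the normalized Hochschild resolution. -/
def IsXi (xi : ∀ n : ℕ, Bch k E n →ₗ[k] Bch k E (n + 1)) : Prop :=
  ∀ (n : ℕ) (e : E) (xs : Fin n → E) (e' : E),
    xi n (bgen e xs e') = ((-1 : ℤ) ^ (n + 1)) • bgen e (Fin.snoc xs e') (1 : E)

end BarE

section Statement2

variable {k A H E : Type} [CommRing k] [Ring A] [Algebra k A] [Ring H] [HopfAlgebra k H]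
  [Ring E] [Algebra k E]

/-- Left multiplication by `e ∈ E` on `Y_s`. -/
noncomputable def lY (e : E) {s : ℕ} : Yc k H E s →ₗ[k] Yc k H E s :=
  TensorProduct.map (LinearMap.mulLeft k e) LinearMap.id

/-- The map `μ'_n : X_n → Y_n` which is `μ_n` on `X_{0n}` and `0` on `X_{r,n-r}`, `r > 0`. -/
noncomputable def muT {S : CrossedProduct k A H E} (R : ResData k A H E S) (n : ℕ) :
    XT k A H E n →ₗ[k] Yc k H E n :=
  DirectSum.toModule k (Fin (n + 1)) (Yc k H E n) (fun s =>
    if h : (s : ℕ) = n then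
      R.mu n ∘ₗ xcast (show n - (s : ℕ) = 0 by omega) h
    else 0)

/-- `σ̄₀ = σ⁰₀₀ ∘ σ⁻¹₀`. -/
noncomputable def sbar0 {S : CrossedProduct k A H E} (R : ResData k A H E S)
    (σm : E →ₗ[k] Yc k H E 0) : E →ₗ[k] XT k A H E 0 :=
  (DirectSum.lof k (Fin 1) (fun s' : Fin 1 => Xc k A H E (0 - (s' : ℕ)) (s' : ℕ)) 0) ∘ₗ
    R.sig0 0 ∘ₗ σm

/-- `σ̄_{n+1} = -∑_{l=0}^{n+1} σ^l_{l,n-l+1} ∘ σ⁻¹_{n+1} ∘ μ_n + ∑_{r+s=n} ∑_{l=0}^s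
σ^l_{r+l+1,s-l}`. -/
noncomputable def sbar {S : CrossedProduct k A H E} (R : ResData k A H E S)
    (slY : ∀ l s : ℕ, Yc k H E s →ₗ[k] Xc k A H E l (s - l))
    (slX : ∀ l r s : ℕ, Xc k A H E r s →ₗ[k] Xc k A H E (r + l + 1) (s - l))
    (sY : ∀ s : ℕ, Yc k H E s →ₗ[k] Yc k H E (s + 1)) (n : ℕ) :
    XT k A H E n →ₗ[k] XT k A H E (n + 1) :=
  - ((∑ l : Fin (n + 2),
      (DirectSum.lof k (Fin (n + 2)) (fun s' : Fin (n + 2) => Xc k A H E (n + 1 - (s' : ℕ)) (s' : ℕ))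
          ⟨n + 1 - (l : ℕ), by omega⟩) ∘ₗ
        xcast (show (l : ℕ) = n + 1 - (n + 1 - (l : ℕ)) by have := l.isLt; omega) rfl ∘ₗ
        slY (l : ℕ) (n + 1)) ∘ₗ sY n ∘ₗ muT R n)
  + DirectSum.toModule k (Fin (n + 1)) (XT k A H E (n + 1)) (fun s =>
      ∑ l : Fin ((s : ℕ) + 1),
        (DirectSum.lof k (Fin (n + 2)) (fun s' : Fin (n + 2) => Xc k A H E (n + 1 - (s' : ℕ)) (s' : ℕ))
            ⟨(s : ℕ) - (l : ℕ), by have := s.isLt; have := l.isLt; omega⟩) ∘ₗ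
          xcast
            (show (n - (s : ℕ)) + (l : ℕ) + 1 = n + 1 - ((s : ℕ) - (l : ℕ)) by
              have := s.isLt; have := l.isLt; omega)
            rfl ∘ₗ
          slX (l : ℕ) (n - (s : ℕ)) (s : ℕ))


end Statement2

/-!
Each of the two complexes is generated, under the right action of `E`, by elements `g = 𝐱 ⊗ 1`
which its contracting homotopy kills, so that `h d g = g`. As `ξ` takes its values in the span of
such generators, the recursion for `ψ` applies to `φ g = ξ φ d g` and gives, by induction on the
degree, `ψ φ g = σ̄ ψ b' ξ φ d g = σ̄ ψ φ d g = σ̄ d g = g`. The equation for `ω` is the usual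
comparison argument: `φ ψ - id - ω b'` is a cycle on generators, hence is `b' ξ` of itself.

The real work is that `σ̄` contracts `X_*`. Put the rows `Y_s ← X_{0s} ← X_{1s} ← ⋯` together in
one module with differentials `D = ∑ d^l t^l` and homotopies `Σ = ∑ σ^l t^l`, formal power series
in `t` whose constant terms are the row differentials and the row homotopies; `D` includes `μ` and
the differential `∂` of `Y_*`. The recursive definition of `d^l` forces `D² = 0`, given the relation
between `μ d¹` and `∂ μ`, which comes from the bar construction of `E` over `A`. Then
`K = 1 + σ⁰ (D - d⁰)` is invertible and satisfies `K Σ = σ⁰` and `K D = d⁰ K`, whence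
`D Σ + Σ D = 1`. Setting `t = 1` is harmless because `D` and `Σ` are finite sums on each summand.
-/

/-! ### Comparison of contracted complexes -/

section Comparison

/-- A complex of `k`-modules `X₀ ← X₁ ← ⋯` on which the elements of `ι` act by chain maps, together
with a contracting homotopy `h` of its augmentation, which need not commute with the action. The
augmentation is encoded by the idempotent `proj` of `X₀` which it and its section define. Each
`X n` is spanned by the translates of `gen n`, and `h` kills `gen n` for `n > 0`. -/
structure ContractedComplex (k ι : Type*) [CommRing k] (X : ℕ → Type*)
    [∀ n, AddCommGroup (X n)] [∀ n, Module k (X n)] where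
  d : ∀ n, X (n + 1) →ₗ[k] X n
  h : ∀ n, X n →ₗ[k] X (n + 1)
  proj : X 0 →ₗ[k] X 0
  act : ι → ∀ n, X n →ₗ[k] X n
  gen : ∀ n, Set (X n)
  span_act_gen : ∀ n, Submodule.span k {x | ∃ i, ∃ g ∈ gen n, act i n g = x} = ⊤
  d_act : ∀ i n x, d n (act i (n + 1) x) = act i n (d n x)
  h_gen : ∀ n, ∀ g ∈ gen (n + 1), h (n + 1) g = 0
  d_h_zero : ∀ x, d 0 (h 0 x) = x - proj x
  d_h : ∀ n x, d (n + 1) (h (n + 1) x) + h n (d n x) = x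
  proj_d : ∀ x, proj (d 0 x) = 0

namespace ContractedComplex

variable {k ι : Type*} [CommRing k] {X Y : ℕ → Type*}
  [∀ n, AddCommGroup (X n)] [∀ n, Module k (X n)]
  [∀ n, AddCommGroup (Y n)] [∀ n, Module k (Y n)]

theorem ext_gen (C : ContractedComplex k ι X) {M : Type*} [AddCommGroup M] [Module k M] {n : ℕ}
    {f g : X n →ₗ[k] M} (hfg : ∀ i, ∀ x ∈ C.gen n, f (C.act i n x) = g (C.act i n x)) : f = g :=
  LinearMap.ext_on (C.span_act_gen n) fun _ ⟨i, x, hx, hxi⟩ => hxi ▸ hfg i x hx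

theorem h_d_gen (C : ContractedComplex k ι X) {n : ℕ} {x : X (n + 1)} (hx : x ∈ C.gen (n + 1)) :
    C.h n (C.d n x) = x := by
  simpa only [C.h_gen n x hx, map_zero, zero_add] using C.d_h n x

theorem d_d (C : ContractedComplex k ι X) (n : ℕ) (x : X (n + 2)) :
    C.d n (C.d (n + 1) x) = 0 := by
  suffices C.d n ∘ₗ C.d (n + 1) = 0 from LinearMap.congr_fun this x
  refine C.ext_gen fun i x hx => ?_
  have h_d_d : C.h n (C.d n (C.d (n + 1) x)) = 0 := by
    simpa only [C.h_d_gen hx, add_eq_left] using C.d_h n (C.d (n + 1) x)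
  have d_d_gen : C.d n (C.d (n + 1) x) = 0 := by
    cases n with
    | zero =>
      simpa only [h_d_d, map_zero, C.proj_d, sub_zero, eq_comm] using
        C.d_h_zero (C.d 0 (C.d 1 x))
    | succ n =>
      simpa only [h_d_d, map_zero, zero_add, C.d_d n, eq_comm] using
        C.d_h n (C.d (n + 1) (C.d (n + 2) x))
  simp only [LinearMap.comp_apply, C.d_act, d_d_gen, map_zero, LinearMap.zero_apply]

theorem d_h_of_d_eq_zero (C : ContractedComplex k ι X) {n : ℕ} {x : X (n + 1)}
    (hx : C.d n x = 0) : C.d (n + 1) (C.h (n + 1) x) = x := by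
  simpa only [hx, map_zero, add_zero] using C.d_h n x

/-- `φ` is the equivariant extension of `φ₀` built recursively from the contracting homotopy of
the target. -/
structure IsComparison (C : ContractedComplex k ι X) (D : ContractedComplex k ι Y)
    (φ : ∀ n, X n →ₗ[k] Y n) : Prop where
  map_act : ∀ i n x, φ n (C.act i n x) = D.act i n (φ n x)
  map_proj : ∀ x, φ 0 (C.proj x) = D.proj (φ 0 x)
  map_gen : ∀ n, ∀ g ∈ C.gen (n + 1), φ (n + 1) g = D.h n (φ n (C.d n g))

variable {C : ContractedComplex k ι X} {D : ContractedComplex k ι Y}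
  {φ : ∀ n, X n →ₗ[k] Y n} {ψ : ∀ n, Y n →ₗ[k] X n}

theorem IsComparison.d_map (hφ : C.IsComparison D φ) (n : ℕ) (x : X (n + 1)) :
    D.d n (φ (n + 1) x) = φ n (C.d n x) := by
  suffices D.d n ∘ₗ φ (n + 1) = φ n ∘ₗ C.d n from LinearMap.congr_fun this x
  refine C.ext_gen fun i x hx => ?_
  have d_map_gen : D.d n (φ (n + 1) x) = φ n (C.d n x) := by
    rw [hφ.map_gen n x hx]
    cases n with
    | zero => rw [D.d_h_zero, ← hφ.map_proj, C.proj_d, map_zero, sub_zero]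
    | succ n => exact D.d_h_of_d_eq_zero (by rw [hφ.d_map n, C.d_d, map_zero])
  simp only [LinearMap.comp_apply, hφ.map_act, D.d_act, C.d_act, d_map_gen]

theorem IsComparison.comp_eq_id (hφ : C.IsComparison D φ) (hψ : D.IsComparison C ψ)
    (h_mem : ∀ n y, D.h n y ∈ Submodule.span k (D.gen (n + 1)))
    (h_zero : ψ 0 ∘ₗ φ 0 = LinearMap.id) (n : ℕ) : ψ n ∘ₗ φ n = LinearMap.id := by
  induction n with
  | zero => exact h_zero
  | succ n ih =>
    refine C.ext_gen fun i x hx => ?_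
    have map_h (y : Y n) : ψ (n + 1) (D.h n y) = C.h n (ψ n (D.d n (D.h n y))) :=
      LinearMap.eqOn_span (f := ψ (n + 1)) (g := C.h n ∘ₗ ψ n ∘ₗ D.d n)
        (fun y hy => hψ.map_gen n y hy) (h_mem n y)
    have comp_gen : ψ (n + 1) (φ (n + 1) x) = x := calc
      ψ (n + 1) (φ (n + 1) x) = C.h n (ψ n (D.d n (φ (n + 1) x))) := by
        rw [hφ.map_gen n x hx, map_h]
      _ = C.h n (C.d n x) := by
        rw [hφ.d_map]; exact congrArg (C.h n) (LinearMap.congr_fun ih _)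
      _ = x := C.h_d_gen hx
    simp only [LinearMap.comp_apply, hφ.map_act, hψ.map_act, comp_gen, LinearMap.id_apply]

theorem homotopy_of_map_gen {χ : ∀ n, Y n →ₗ[k] Y n} {ω : ∀ n, Y n →ₗ[k] Y (n + 1)}
    (χ_act : ∀ i n y, χ n (D.act i n y) = D.act i n (χ n y))
    (d_χ : ∀ n y, D.d n (χ (n + 1) y) = χ n (D.d n y)) (χ_zero : χ 0 = LinearMap.id)
    (ω_act : ∀ i n y, ω n (D.act i n y) = D.act i (n + 1) (ω n y)) (ω_zero : ω 0 = 0)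
    (ω_gen : ∀ n, ∀ g ∈ D.gen (n + 1),
      ω (n + 1) g = D.h (n + 1) (χ (n + 1) g - g - ω n (D.d n g))) (n : ℕ) :
    D.d (n + 1) ∘ₗ ω (n + 1) + ω n ∘ₗ D.d n = χ (n + 1) - LinearMap.id := by
  have step {n : ℕ} (h : ∀ y, D.d n (χ (n + 1) y - y - ω n (D.d n y)) = 0) :
      D.d (n + 1) ∘ₗ ω (n + 1) + ω n ∘ₗ D.d n = χ (n + 1) - LinearMap.id := by
    refine D.ext_gen fun i y hy => ?_
    have homotopy_gen : D.d (n + 1) (ω (n + 1) y) + ω n (D.d n y) = χ (n + 1) y - y := by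
      rw [ω_gen n y hy, D.d_h_of_d_eq_zero (h y), sub_add_cancel]
    simp only [LinearMap.add_apply, LinearMap.comp_apply, LinearMap.sub_apply, LinearMap.id_apply,
      ω_act, D.d_act, χ_act, ← map_add, ← map_sub, homotopy_gen]
  induction n with
  | zero =>
    refine step fun y => ?_
    rw [ω_zero, LinearMap.zero_apply, sub_zero, map_sub, d_χ, χ_zero, LinearMap.id_apply, sub_self]
  | succ n ih =>
    refine step fun y => ?_
    have d_ω : D.d (n + 1) (ω (n + 1) (D.d (n + 1) y))
        = χ (n + 1) (D.d (n + 1) y) - D.d (n + 1) y := by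
      simpa only [LinearMap.add_apply, LinearMap.comp_apply, LinearMap.sub_apply,
        LinearMap.id_apply, D.d_d, map_zero, add_zero] using
        LinearMap.congr_fun ih (D.d (n + 1) y)
    rw [map_sub, map_sub, d_χ, d_ω, sub_self]

end ContractedComplex

end Comparison

/-! ### Perturbation of contracting homotopies -/

section PowerSeries

variable {Z : Type*}

theorem coeff_mul_of_coeff_right_eq_zero [Semiring Z] (f : PowerSeries Z) {g : PowerSeries Z}
    {n : ℕ} (hg : ∀ m < n, PowerSeries.coeff m g = 0) :
    PowerSeries.coeff n (f * g) = PowerSeries.coeff 0 f * PowerSeries.coeff n g := by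
  rw [PowerSeries.coeff_mul, Finset.Nat.sum_antidiagonal_eq_sum_range_succ_mk,
    Finset.sum_range_succ', Finset.sum_eq_zero fun i hi => ?_, zero_add, Nat.sub_zero]
  rw [hg _ (by have := Finset.mem_range.1 hi; omega), mul_zero]

theorem coeff_mul_of_coeff_left_eq_zero [Semiring Z] {f : PowerSeries Z} (g : PowerSeries Z)
    {n : ℕ} (hf : ∀ m < n, PowerSeries.coeff m f = 0) :
    PowerSeries.coeff n (f * g) = PowerSeries.coeff n f * PowerSeries.coeff 0 g := by
  rw [PowerSeries.coeff_mul, Finset.Nat.sum_antidiagonal_eq_sum_range_succ_mk,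
    Finset.sum_range_succ, Finset.sum_eq_zero fun i hi => ?_, zero_add, Nat.sub_self]
  rw [hf _ (Finset.mem_range.1 hi), zero_mul]

theorem coeff_mk_mul_mk [Semiring Z] (p q : ℕ → Z) (n : ℕ) :
    PowerSeries.coeff n (PowerSeries.mk p * PowerSeries.mk q)
      = ∑ i ∈ Finset.range (n + 1), p (n - i) * q i := by
  rw [PowerSeries.coeff_mul, ← Finset.Nat.sum_antidiagonal_swap,
    Finset.Nat.sum_antidiagonal_eq_sum_range_succ_mk]
  simp only [PowerSeries.coeff_mk, Prod.fst_swap, Prod.snd_swap]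

theorem eq_zero_of_mul_eq_zero_of_coeff_zero_eq_one [Semiring Z] {f g : PowerSeries Z}
    (hf : PowerSeries.coeff 0 f = 1) (hfg : f * g = 0) : g = 0 := by
  ext n
  rw [map_zero]
  induction n using Nat.strong_induction_on with
  | _ n ih => rw [← one_mul (PowerSeries.coeff n g), ← hf,
      ← coeff_mul_of_coeff_right_eq_zero f ih, hfg, map_zero]

end PowerSeries

section Perturbation

theorem one_add_mul_mk_of_recursion {Z : Type*} [Ring Z] {p s : ℕ → Z}
    (h_rec : ∀ l, 1 ≤ l → s l = -∑ i ∈ Finset.range l, s 0 * p (l - i) * s i) :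
    (1 + PowerSeries.C (s 0) * (PowerSeries.mk p - PowerSeries.C (p 0))) * PowerSeries.mk s
      = PowerSeries.C (s 0) := by
  ext n
  rw [add_mul, one_mul, map_add, mul_assoc, PowerSeries.coeff_C_mul, sub_mul, map_sub,
    PowerSeries.coeff_C_mul, coeff_mk_mul_mk, Finset.sum_range_succ, Nat.sub_self,
    PowerSeries.coeff_mk, add_sub_cancel_right, PowerSeries.coeff_C]
  rcases n.eq_zero_or_pos with rfl | hn
  · rw [Finset.range_zero, Finset.sum_empty, mul_zero, add_zero, if_pos rfl]
  · simp only [h_rec n hn, if_neg hn.ne', Finset.mul_sum, mul_assoc, neg_add_cancel]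

theorem mk_mul_mk_add_mk_mul_mk_eq_one {Z : Type*} [Ring Z] {p s : ℕ → Z}
    (h_one : p 0 * s 0 + s 0 * p 0 = 1)
    (h_sq : PowerSeries.mk p * PowerSeries.mk p = 0)
    (h_rec : ∀ l, 1 ≤ l → s l = -∑ i ∈ Finset.range l, s 0 * p (l - i) * s i) :
    PowerSeries.mk p * PowerSeries.mk s + PowerSeries.mk s * PowerSeries.mk p = 1 := by
  set P := PowerSeries.mk p with hP
  set Q := PowerSeries.mk s
  set a : PowerSeries Z := PowerSeries.C (p 0) with ha
  set b : PowerSeries Z := PowerSeries.C (s 0) with hb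
  set K : PowerSeries Z := 1 + b * (P - a) with hK
  have hab : a * b + b * a = 1 := by
    simpa only [ha, hb, map_add, map_mul, map_one] using congrArg (PowerSeries.C (R := Z)) h_one
  have haa : a * a = 0 := by
    have := congrArg (PowerSeries.coeff 0) h_sq
    rw [coeff_mk_mul_mk, Finset.sum_range_one, map_zero] at this
    rw [ha, ← map_mul, this, map_zero]
  have K_coeff_zero : PowerSeries.coeff 0 K = 1 := by
    rw [hK, map_add, hb, PowerSeries.coeff_C_mul, map_sub, hP, PowerSeries.coeff_mk, ha,
      PowerSeries.coeff_zero_C, sub_self, mul_zero, add_zero, PowerSeries.coeff_zero_one]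
  have K_mul_Q : K * Q = b := one_add_mul_mk_of_recursion h_rec
  have K_mul_P : K * P = a * K := by
    have hba : b * a = 1 - a * b := eq_sub_of_add_eq' hab
    have haba : a * b * a = a := by rw [mul_assoc, hba, mul_sub, ← mul_assoc, haa]; simp
    calc K * P = P + b * (P * P) - b * a * P := by rw [hK]; noncomm_ring
      _ = a * b * P := by rw [h_sq, hba]; noncomm_ring
      _ = a * K := by rw [hK, mul_add, mul_sub, mul_sub, ← mul_assoc, ← mul_assoc, haba]; simp
  refine sub_eq_zero.1 (eq_zero_of_mul_eq_zero_of_coeff_zero_eq_one K_coeff_zero ?_)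
  calc K * (P * Q + Q * P - 1) = K * P * Q + K * Q * P - K := by noncomm_ring
    _ = a * b + b * P - K := by rw [K_mul_P, mul_assoc a, K_mul_Q]
    _ = a * b + b * a - 1 := by rw [hK]; noncomm_ring
    _ = 0 := by rw [hab, sub_self]

variable {k M : Type*} [CommRing k] [AddCommGroup M] [Module k M]

theorem coeff_sq_mul_comm {p : ℕ → Module.End k M} {l : ℕ}
    (h_lt : ∀ m < l, PowerSeries.coeff m (PowerSeries.mk p * PowerSeries.mk p) = 0) :
    PowerSeries.coeff l (PowerSeries.mk p * PowerSeries.mk p) * p 0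
      = p 0 * PowerSeries.coeff l (PowerSeries.mk p * PowerSeries.mk p) := by
  have h_left := coeff_mul_of_coeff_left_eq_zero (PowerSeries.mk p) h_lt
  have h_right := coeff_mul_of_coeff_right_eq_zero (PowerSeries.mk p) h_lt
  rw [PowerSeries.coeff_mk] at h_left h_right
  rw [← h_left, ← h_right, mul_assoc]

theorem coeff_sq_apply_eq_zero {p : ℕ → Module.End k M} {s : Module.End k M}
    (h_one : p 0 * s + s * p 0 = 1) {l : ℕ} (hl : 1 ≤ l)
    (h_lt : ∀ m < l, PowerSeries.coeff m (PowerSeries.mk p * PowerSeries.mk p) = 0) {g : M}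
    (hg : p l g = -s (∑ j ∈ Finset.range l, p (l - j) (p j g)))
    (h_p_zero : PowerSeries.coeff l (PowerSeries.mk p * PowerSeries.mk p) (p 0 g) = 0) :
    PowerSeries.coeff l (PowerSeries.mk p * PowerSeries.mk p) g = 0 := by
  set w := ∑ j ∈ Finset.range l, p (l - j) (p j g)
  have coeff_apply : PowerSeries.coeff l (PowerSeries.mk p * PowerSeries.mk p) g
      = p 0 (p l g) + w := by
    rw [coeff_mk_mul_mk, LinearMap.sum_apply, Finset.sum_range_succ, Nat.sub_self, add_comm]
    rfl
  have p_zero_sq (x : M) : p 0 (p 0 x) = 0 := by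
    have := h_lt 0 hl
    rw [coeff_mk_mul_mk, Finset.sum_range_one] at this
    exact LinearMap.congr_fun this x
  have p_zero_w : p 0 w = 0 := by
    have := LinearMap.congr_fun (coeff_sq_mul_comm h_lt) g
    rw [Module.End.mul_apply, Module.End.mul_apply, h_p_zero, coeff_apply, map_add, p_zero_sq,
      zero_add] at this
    exact this.symm
  have p_zero_s_w : p 0 (s w) = w := by
    simpa only [LinearMap.add_apply, Module.End.mul_apply, Module.End.one_apply, p_zero_w,
      map_zero, add_zero] using LinearMap.congr_fun h_one w
  rw [coeff_apply, hg, map_neg, p_zero_s_w, neg_add_cancel]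

theorem sq_apply_eq_zero_of_contraction {d s : Module.End k M} (h_one : d * s + s * d = 1) {z : M}
    (hz : d (d z) = 0) : d (d (s z)) = 0 := by
  have d_s (y : M) : d (s y) = y - s (d y) :=
    eq_sub_of_add_eq (LinearMap.congr_fun h_one y)
  rw [d_s, map_sub, d_s, hz, map_zero, sub_zero, sub_self]

/-- The filtration is exhausted by translating the generators `G r` by operators `T i` commuting
with all `p l`, so that `p * p = 0` needs only be checked on generators, where `p l` is defined by
the usual recursion in terms of the contracting homotopy `s` of `p 0`. -/
theorem mk_mul_mk_eq_zero {I : Type*} {p : ℕ → Module.End k M} {s : Module.End k M}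
    {T : I → Module.End k M} {F : ℕ → Submodule k M} {G : ℕ → Set M}
    (h_one : p 0 * s + s * p 0 = 1) (T_comm : ∀ i l, T i * p l = p l * T i)
    (F_zero : ∀ x ∈ F 0, ∀ i j, p i (p j x) = 0)
    (F_succ : ∀ r, F (r + 1) ≤ F r ⊔ Submodule.span k {y | ∃ i, ∃ g ∈ G r, y = T i g})
    (F_exhaustive : ∀ x, ∃ r, x ∈ F r) (p_zero_mem : ∀ r, ∀ g ∈ G r, p 0 g ∈ F r)
    (G_image : ∀ r, ∀ g ∈ G r, ∃ z ∈ F r, g = s z)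
    (G_rec : ∀ r, ∀ g ∈ G r, ∀ l, 1 ≤ l →
      p l g = -s (∑ j ∈ Finset.range l, p (l - j) (p j g))) :
    PowerSeries.mk p * PowerSeries.mk p = 0 := by
  have comm_coeff (i l) : T i * PowerSeries.coeff l (PowerSeries.mk p * PowerSeries.mk p)
      = PowerSeries.coeff l (PowerSeries.mk p * PowerSeries.mk p) * T i := by
    rw [coeff_mk_mul_mk, Finset.mul_sum, Finset.sum_mul]
    exact Finset.sum_congr rfl fun j _ => by
      rw [← mul_assoc, T_comm, mul_assoc, T_comm, mul_assoc]
  ext1 l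
  rw [map_zero]
  induction l using Nat.strong_induction_on with
  | _ l h_lt =>
    suffices ∀ r, F r ≤ LinearMap.ker (PowerSeries.coeff l (PowerSeries.mk p * PowerSeries.mk p)) by
      ext x
      obtain ⟨r, hr⟩ := F_exhaustive x
      exact this r hr
    intro r
    induction r with
    | zero =>
      intro x hx
      rw [LinearMap.mem_ker, coeff_mk_mul_mk, LinearMap.sum_apply]
      exact Finset.sum_eq_zero fun _ _ => F_zero x hx _ _
    | succ r ih =>
      refine (F_succ r).trans (sup_le ih (Submodule.span_le.2 ?_))
      rintro _ ⟨i, g, hg, rfl⟩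
      have coeff_gen : PowerSeries.coeff l (PowerSeries.mk p * PowerSeries.mk p) g = 0 := by
        rcases l.eq_zero_or_pos with rfl | hl
        · obtain ⟨z, hz, rfl⟩ := G_image r g hg
          have := ih hz
          rw [LinearMap.mem_ker] at this
          rw [coeff_mk_mul_mk, Finset.sum_range_one] at this ⊢
          exact sq_apply_eq_zero_of_contraction h_one this
        · exact coeff_sq_apply_eq_zero h_one hl h_lt (G_rec r g hg l hl) (ih (p_zero_mem r g hg))
      rw [SetLike.mem_coe, LinearMap.mem_ker, ← Module.End.mul_apply, ← comm_coeff,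
        Module.End.mul_apply, coeff_gen, map_zero]

theorem sum_apply_sum_eq_sum_coeff {p q : ℕ → Module.End k M} {n : ℕ} {v : M}
    (hv : ∀ i j, n ≤ i + j → p i (q j v) = 0) :
    ∑ i ∈ Finset.range n, p i (∑ j ∈ Finset.range n, q j v) =
      ∑ m ∈ Finset.range n, PowerSeries.coeff m (PowerSeries.mk p * PowerSeries.mk q) v := by
  have truncate (i : ℕ) : p i (∑ j ∈ Finset.range n, q j v)
      = ∑ j ∈ Finset.range (n - i), p i (q j v) := by
    rw [map_sum]
    refine (Finset.sum_subset (by simp) fun j _ hj => hv i j ?_).symm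
    rw [Finset.mem_range] at hj
    omega
  simp only [truncate, ← Finset.sum_range_diag_flip, PowerSeries.coeff_mul, PowerSeries.coeff_mk,
    LinearMap.sum_apply, Module.End.mul_apply,
    Finset.Nat.sum_antidiagonal_eq_sum_range_succ fun i j => p i (q j v)]

end Perturbation

/-! ### Tensor powers and products in `E` -/

section TensorPowers

variable {k : Type} [CommRing k] {V W M : Type} [AddCommGroup V] [Module k V] [AddCommGroup W]
  [Module k W] [AddCommGroup M] [Module k M]

/-- The bilinear map `V × V^{⊗n} → V^{⊗(n+1)}` prepending a tensor factor. -/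
def tpowCons (n : ℕ) : V →ₗ[k] Tpow k V n →ₗ[k] Tpow k V (n + 1) :=
  TensorProduct.mk k V (Tpow k V n)

/-- The linear map out of `V^{⊗(n+1)} = V ⊗ V^{⊗n}` determined by a bilinear map. -/
def tpowLift {n : ℕ} (f : V →ₗ[k] Tpow k V n →ₗ[k] M) : Tpow k V (n + 1) →ₗ[k] M :=
  TensorProduct.lift f

theorem tpowLift_tpowCons {n : ℕ} (f : V →ₗ[k] Tpow k V n →ₗ[k] M) (v : V) (t : Tpow k V n) :
    tpowLift f (tpowCons n v t) = f v t :=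
  TensorProduct.lift.tmul _ _

theorem tp_succ {n : ℕ} (v : Fin (n + 1) → V) :
    tp k v = tpowCons n (v 0) (tp k fun i => v i.succ) := rfl

theorem tpow_succ_induction {n : ℕ} {p : Tpow k V (n + 1) → Prop} (t : Tpow k V (n + 1))
    (zero : p 0) (cons : ∀ v t, p (tpowCons n v t)) (add : ∀ x y, p x → p y → p (x + y)) : p t :=
  TensorProduct.induction_on (motive := p) t zero cons add

theorem exists_eq_sum_tp {n : ℕ} (t : Tpow k V (n + 1)) :
    ∃ (N : ℕ) (u : Fin N → Fin (n + 1) → V), t = ∑ i, tp k (u i) := by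
  induction n with
  | zero =>
    induction t using tpow_succ_induction with
    | zero => exact ⟨0, finZeroElim, rfl⟩
    | cons v c =>
      refine ⟨1, fun _ _ => (show k from c) • v, ?_⟩
      rw [Fin.sum_univ_one]
      change v ⊗ₜ[k] (show k from c) = ((show k from c) • v) ⊗ₜ[k] (1 : k)
      rw [TensorProduct.smul_tmul, smul_eq_mul, mul_one]
    | add x y hx hy =>
      obtain ⟨⟨N, u, rfl⟩, N', u', rfl⟩ := And.intro hx hy
      exact ⟨N + N', Fin.append u u', by simp [Fin.sum_univ_add]⟩
  | succ n ih =>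
    induction t using tpow_succ_induction with
    | zero => exact ⟨0, finZeroElim, rfl⟩
    | cons v t =>
      obtain ⟨N, u, rfl⟩ := ih t
      exact ⟨N, fun i => Fin.cons v (u i), map_sum (tpowCons (n + 1) v) _ _⟩
    | add x y hx hy =>
      obtain ⟨⟨N, u, rfl⟩, N', u', rfl⟩ := And.intro hx hy
      exact ⟨N + N', Fin.append u u', by simp [Fin.sum_univ_add]⟩

theorem tpow_ext_of_surjective {q : W →ₗ[k] V} (hq : Function.Surjective q) {n : ℕ}
    {f g : Tpow k V n →ₗ[k] M}
    (hfg : ∀ w : Fin n → W, f (tp k fun i => q (w i)) = g (tp k fun i => q (w i))) : f = g := by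
  induction n with
  | zero =>
    refine LinearMap.ext fun c => ?_
    have hc : c = (show k from c) • tp k fun i : Fin 0 => q (i.elim0) :=
      (mul_one (show k from c)).symm
    rw [hc, map_smul, map_smul]
    exact congrArg _ (hfg finZeroElim)
  | succ n ih =>
    refine LinearMap.ext fun t => ?_
    induction t using tpow_succ_induction with
    | zero => rw [map_zero, map_zero]
    | add x y hx hy => rw [map_add, map_add, hx, hy]
    | cons v t =>
      obtain ⟨w, rfl⟩ := hq v
      have : f ∘ₗ tpowCons n (q w) = g ∘ₗ tpowCons n (q w) :=
        ih fun w' => hfg (Fin.cons w w')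
      exact LinearMap.congr_fun this t

theorem tpow_ext {n : ℕ} {f g : Tpow k V n →ₗ[k] M}
    (hfg : ∀ v : Fin n → V, f (tp k v) = g (tp k v)) : f = g :=
  tpow_ext_of_surjective (q := LinearMap.id) Function.surjective_id hfg

end TensorPowers

section Sweedler

variable {k H M : Type} [CommRing k] [Ring H] [HopfAlgebra k H] [AddCommGroup M] [Module k M]

theorem sRep_one_iff {h : H} {N : ℕ} {u : Fin N → Fin 2 → H} :
    SRep k 1 h N u ↔ Coalgebra.comul (R := k) h = ∑ i, u i 0 ⊗ₜ[k] u i 1 := by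
  let r : (H ⊗[k] H) ≃ₗ[k] Tpow k H 2 :=
    TensorProduct.congr (LinearEquiv.refl k H) (TensorProduct.rid k H).symm
  have sum_tp : ∑ i, tp k (u i) = r (∑ i, u i 0 ⊗ₜ[k] u i 1) := by
    rw [map_sum]; rfl
  rw [SRep, sum_tp]
  exact r.injective.eq_iff

theorem exists_sRep (n : ℕ) (h : H) : ∃ N u, SRep k n h N u := exists_eq_sum_tp _

theorem exists_sRep_uniform (m : ℕ) (g : ℕ → H) :
    ∃ (N : ℕ) (v : ℕ → Fin N → Fin 2 → H), ∀ j < m, SRep k 1 (g j) N (v j) := by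
  choose N u hu using fun j => exists_sRep (k := k) 1 (g j)
  refine ⟨∑ i ∈ Finset.range m, N i, fun j i => if h : (i : ℕ) < N j then u j ⟨i, h⟩ else 0,
    fun j hj => ?_⟩
  obtain ⟨d, hd⟩ := Nat.exists_eq_add_of_le
    (Finset.single_le_sum (f := N) (fun _ _ => Nat.zero_le _) (Finset.mem_range.2 hj))
  rw [sRep_one_iff, sRep_one_iff.1 (hu j), hd, Fin.sum_univ_add]
  simp

theorem itComul_succ (n : ℕ) {h : H} {N : ℕ} {u : Fin N → Fin 2 → H} (hu : SRep k 1 h N u) :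
    itComul k (n + 1) h = ∑ i, tpowCons (n + 1) (u i 0) (itComul k n (u i 1)) := by
  have : itComul k (n + 1) h = TensorProduct.map LinearMap.id (itComul k n)
      (Coalgebra.comul (R := k) h) := rfl
  rw [this, sRep_one_iff.1 hu]
  exact map_sum (TensorProduct.map LinearMap.id (itComul k n)) _ _

theorem sum_counit_smul_of_sRep {h : H} {N : ℕ} {u : Fin N → Fin 2 → H} (hu : SRep k 1 h N u) :
    ∑ i, Coalgebra.counit (R := k) (u i 0) • u i 1 = h := by
  simpa [sRep_one_iff.1 hu] using
    congrArg (TensorProduct.lid k H) (Coalgebra.rTensor_counit_comul (R := k) h)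

theorem sum_lift_of_sRep_two (Φ : H →ₗ[k] H →ₗ[k] H →ₗ[k] M)
    {h : H} {N : ℕ} {u : Fin N → Fin 3 → H} (hu : SRep k 2 h N u)
    {N' : ℕ} {w : Fin N' → Fin 2 → H} (hw : SRep k 1 h N' w) :
    ∑ i, Φ (u i 0) (u i 1) (u i 2) =
      ∑ i, TensorProduct.lift (Φ (w i 0)) (Coalgebra.comul (R := k) (w i 1)) := by
  let r : Tpow k H 2 ≃ₗ[k] H ⊗[k] H :=
    TensorProduct.congr (LinearEquiv.refl k H) (TensorProduct.rid k H)
  have r_tp (t : Fin 2 → H) : r (tp k t) = t 0 ⊗ₜ t 1 :=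
    congrArg (t 0 ⊗ₜ[k] ·) (one_smul k (t 1))
  have r_itComul (x : H) : r (itComul k 1 x) = Coalgebra.comul (R := k) x :=
    r.apply_symm_apply _
  let Ψ : H →ₗ[k] Tpow k H 2 →ₗ[k] M :=
    LinearMap.lcomp k M r.toLinearMap ∘ₗ (TensorProduct.uncurry (.id k) H H M) ∘ₗ Φ
  have Ψ_apply (x : H) (t : Tpow k H 2) : Ψ x t = TensorProduct.lift (Φ x) (r t) := rfl
  calc ∑ i, Φ (u i 0) (u i 1) (u i 2) = ∑ i, tpowLift Ψ (tp k (u i)) :=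
        Finset.sum_congr rfl fun i _ => by
          rw [tp_succ, tpowLift_tpowCons, Ψ_apply, r_tp, TensorProduct.lift.tmul]; rfl
    _ = tpowLift Ψ (itComul k 2 h) := by rw [← map_sum]; exact congrArg _ hu.symm
    _ = _ := by simp only [itComul_succ 1 hw, map_sum, tpowLift_tpowCons, Ψ_apply, r_itComul]

theorem sum_counit_mid_smul {h : H} {N : ℕ} {u : Fin N → Fin 3 → H} (hu : SRep k 2 h N u)
    {N' : ℕ} {w : Fin N' → Fin 2 → H} (hw : SRep k 1 h N' w) (g : H →ₗ[k] H →ₗ[k] M) :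
    ∑ i, Coalgebra.counit (R := k) (u i 1) • g (u i 0) (u i 2) = ∑ i, g (w i 0) (w i 1) := by
  refine (sum_lift_of_sRep_two (LinearMap.smulRightₗ Coalgebra.counit ∘ₗ g) hu hw).trans ?_
  refine Finset.sum_congr rfl fun i _ => ?_
  obtain ⟨N'', v, hv⟩ := exists_sRep (k := k) 1 (w i 1)
  rw [sRep_one_iff.1 hv, map_sum]
  conv_rhs => rw [← sum_counit_smul_of_sRep hv, map_sum]
  exact Finset.sum_congr rfl fun j _ => (map_smul (g (w i 0)) _ _).symm

theorem sum_counit_left_smul {h : H} {N : ℕ} {u : Fin N → Fin 3 → H} (hu : SRep k 2 h N u)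
    {N' : ℕ} {w : Fin N' → Fin 2 → H} (hw : SRep k 1 h N' w) (g : H →ₗ[k] H →ₗ[k] M) :
    ∑ i, Coalgebra.counit (R := k) (u i 0) • g (u i 1) (u i 2) = ∑ i, g (w i 0) (w i 1) := by
  refine (sum_lift_of_sRep_two (LinearMap.smulRight Coalgebra.counit g) hu hw).trans ?_
  have lift_eq (x : H) : TensorProduct.lift (LinearMap.smulRight Coalgebra.counit g x)
      = Coalgebra.counit (R := k) x • TensorProduct.lift g :=
    map_smul (TensorProduct.uncurry (.id k) H H M) _ _
  simp only [lift_eq, LinearMap.smul_apply, ← map_smul]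
  rw [← map_sum, ← map_sum, sum_counit_smul_of_sRep hw, sRep_one_iff.1 hw, map_sum]
  rfl

theorem sRep_one_one : SRep k 1 (1 : H) 1 (fun _ _ => 1) := by
  rw [sRep_one_iff, Bialgebra.comul_one, Fin.sum_univ_one]
  rfl

theorem sRep_two_one : SRep k 2 (1 : H) 1 (fun _ _ => 1) := by
  rw [SRep, itComul_succ 1 sRep_one_one, Fin.sum_univ_one, Fin.sum_univ_one,
    (sRep_one_one : itComul k 1 (1 : H) = _), Fin.sum_univ_one]
  rfl

end Sweedler

section Crossed

variable {k A H E : Type} [CommRing k] [Ring A] [Algebra k A] [Ring H] [HopfAlgebra k H]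
  [Ring E] [Algebra k E]

namespace CrossedProduct

variable (S : CrossedProduct k A H E)

theorem aE_mul_ι (a b : A) (h : H) : S.aE a * S.ι (b ⊗ₜ h) = S.ι ((a * b) ⊗ₜ h) := by
  obtain ⟨N, v, hv⟩ := exists_sRep (k := k) 1 h
  calc S.aE a * S.ι (b ⊗ₜ h) = _ := S.ι_mul a b 1 h 1 N _ v sRep_two_one hv
    _ = ∑ j, S.ι ((a * b) ⊗ₜ (Coalgebra.counit (R := k) (v j 0) • v j 1)) := by
      simp only [Fin.sum_univ_one, S.one_act, (S.f_normal _).2, one_mul, mul_smul_comm, mul_one,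
        TensorProduct.smul_tmul]
    _ = S.ι ((a * b) ⊗ₜ h) := by
      rw [← map_sum, ← TensorProduct.tmul_sum, sum_counit_smul_of_sRep hv]

theorem ι_mul_aE (a b : A) {h : H} {N : ℕ} {u : Fin N → Fin 2 → H} (hu : SRep k 1 h N u) :
    S.ι (a ⊗ₜ h) * S.aE b = ∑ i, S.ι ((a * S.act (u i 0) b) ⊗ₜ (u i 1)) := by
  obtain ⟨M, v, hv⟩ := exists_sRep (k := k) 2 h
  calc S.ι (a ⊗ₜ h) * S.aE b = _ := S.ι_mul a b h 1 M 1 v _ hv sRep_one_one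
    _ = ∑ i, Coalgebra.counit (R := k) (v i 1) • S.ι ((a * S.act (v i 0) b) ⊗ₜ (v i 2)) := by
      simp only [Fin.sum_univ_one, (S.f_normal _).1, mul_one, mul_smul_comm,
        ← TensorProduct.smul_tmul', map_smul]
    _ = _ := sum_counit_mid_smul hv hu
      ((TensorProduct.mk k A H).compr₂ S.ι.toLinearMap ∘ₗ LinearMap.mulLeft k a ∘ₗ S.act.flip b)

theorem ι_mul_hE (a : A) {h l : H} {N M : ℕ} {u : Fin N → Fin 2 → H} (hu : SRep k 1 h N u)
    {v : Fin M → Fin 2 → H} (hv : SRep k 1 l M v) :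
    S.ι (a ⊗ₜ h) * S.hE l = ∑ i, ∑ j, S.ι ((a * S.f (u i 0) (v j 0)) ⊗ₜ (u i 1 * v j 1)) := by
  obtain ⟨M', u', hu'⟩ := exists_sRep (k := k) 2 h
  let g : H →ₗ[k] H →ₗ[k] E := ∑ j, ((TensorProduct.mk k A H).compr₂ S.ι.toLinearMap).compl₁₂
    (LinearMap.mulLeft k a ∘ₗ S.f.flip (v j 0)) (LinearMap.mulRight k (v j 1))
  have g_apply (x y : H) : g x y = ∑ j, S.ι ((a * S.f x (v j 0)) ⊗ₜ (y * v j 1)) := by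
    simp only [g, LinearMap.sum_apply]
    rfl
  calc S.ι (a ⊗ₜ h) * S.hE l = _ := S.ι_mul a 1 h l M' M u' _ hu' hv
    _ = ∑ i, Coalgebra.counit (R := k) (u' i 0) • g (u' i 1) (u' i 2) := by
      simp only [g_apply, S.act_one, mul_one, mul_smul_comm, smul_mul_assoc, Finset.smul_sum,
        ← TensorProduct.smul_tmul', map_smul]
    _ = _ := by rw [sum_counit_left_smul hu' hu g]; simp only [g_apply]

theorem ι_tmul (a : A) (h : H) : S.ι (a ⊗ₜ h) = S.aE a * S.hE h :=
  (S.aE_mul_ι a 1 h ▸ by rw [mul_one] : S.ι (a ⊗ₜ h) = S.aE a * S.ι (1 ⊗ₜ h))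

theorem aE_one : S.aE 1 = 1 := S.ι_one

theorem hE_one : S.hE 1 = 1 := S.ι_one

end CrossedProduct

end Crossed

/-! ### The bar construction of `E` over `A` -/

section Generators

variable {k A H E M : Type} [CommRing k] [Ring A] [Algebra k A] [Ring H] [HopfAlgebra k H]
  [Ring E] [Algebra k E] [AddCommGroup M] [Module k M]

theorem xgen_ext {r s : ℕ} {f g : Xc k A H E r s →ₗ[k] M}
    (hfg : ∀ e hs as e', f (xgen e hs as e') = g (xgen e hs as e')) : f = g := by
  refine TensorProduct.ext (LinearMap.ext fun e => TensorProduct.ext ?_)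
  refine tpow_ext_of_surjective (unitSub k H).mkQ_surjective fun hs => TensorProduct.ext ?_
  exact tpow_ext_of_surjective (unitSub k A).mkQ_surjective fun as => LinearMap.ext (hfg e hs as)

theorem ygen_ext {s : ℕ} {f g : Yc k H E s →ₗ[k] M}
    (hfg : ∀ e hs h, f (ygen e hs h) = g (ygen e hs h)) : f = g := by
  refine TensorProduct.ext (LinearMap.ext fun e => TensorProduct.ext ?_)
  exact tpow_ext_of_surjective (unitSub k H).mkQ_surjective fun hs => LinearMap.ext (hfg e hs)

theorem bgen_ext {n : ℕ} {f g : Bch k E n →ₗ[k] M}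
    (hfg : ∀ e xs e', f (bgen e xs e') = g (bgen e xs e')) : f = g := by
  refine TensorProduct.ext (LinearMap.ext fun e => TensorProduct.ext ?_)
  exact tpow_ext_of_surjective (unitSub k E).mkQ_surjective fun xs => LinearMap.ext (hfg e xs)

theorem CrossedProduct.ι_ext (S : CrossedProduct k A H E) {f g : E →ₗ[k] M}
    (hfg : ∀ a h, f (S.ι (a ⊗ₜ h)) = g (S.ι (a ⊗ₜ h))) : f = g :=
  LinearMap.cancel_right S.ι.surjective |>.1
    (TensorProduct.ext' hfg : f ∘ₗ S.ι.toLinearMap = g ∘ₗ S.ι.toLinearMap)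

/-- The generator `e ⊗ 𝐡 ⊗ 𝐚 ⊗ e'` of `X_{rs}` as a bilinear function of `e` and `e'`. -/
def xgenBilin {r s : ℕ} (hs : Fin s → H) (as : Fin r → A) : E →ₗ[k] E →ₗ[k] Xc k A H E r s :=
  (TensorProduct.mk k E _).compl₂
    (TensorProduct.mk k _ _ (tp k fun i => qbar k H (hs i)) ∘ₗ
      TensorProduct.mk k _ E (tp k fun i => qbar k A (as i)))

theorem xgen_ext_ι (S : CrossedProduct k A H E) {r s : ℕ} {f g : Xc k A H E r s →ₗ[k] M}
    (hfg : ∀ a h hs as b h', f (xgen (S.ι (a ⊗ₜ h)) hs as (S.ι (b ⊗ₜ h'))) =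
      g (xgen (S.ι (a ⊗ₜ h)) hs as (S.ι (b ⊗ₜ h')))) : f = g :=
  xgen_ext fun e hs as e' =>
    have : (xgenBilin hs as).compr₂ f = (xgenBilin hs as).compr₂ g :=
      S.ι_ext fun a h => S.ι_ext fun b h' => hfg a h hs as b h'
    LinearMap.congr_fun₂ this e e'

variable (k H E) in
/-- The left `E`-module `E ⊗ H^{⊗n}`, a model of the `n+1`-fold tensor power `E ⊗_A ⋯ ⊗_A E`:
the tensor `e ⊗ h₁ ⊗ ⋯ ⊗ hₙ` stands for `e ⊗_A (1 # h₁) ⊗_A ⋯ ⊗_A (1 # hₙ)`. -/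
abbrev RelBar (n : ℕ) : Type := E ⊗[k] Tpow k H n

theorem CrossedProduct.relBar_ext_ι (S : CrossedProduct k A H E) {n : ℕ}
    {f g : RelBar k H E n →ₗ[k] M}
    (hfg : ∀ a h hs, f (S.ι (a ⊗ₜ h) ⊗ₜ tp k hs) = g (S.ι (a ⊗ₜ h) ⊗ₜ tp k hs)) : f = g :=
  TensorProduct.ext (S.ι_ext fun a h => tpow_ext (hfg a h))

end Generators

section RelativeBar

variable {k A H E M : Type} [CommRing k] [Ring A] [Algebra k A] [Ring H] [HopfAlgebra k H]
  [Ring E] [Algebra k E] [AddCommGroup M] [Module k M] [Module E M] [IsScalarTower k E M]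

/-- The extension of a `k`-linear map on `H^{⊗n}` to an `E`-linear map on `E ⊗ H^{⊗n}`. -/
def extendE {n : ℕ} (g : Tpow k H n →ₗ[k] M) : RelBar k H E n →ₗ[E] M :=
  TensorProduct.AlgebraTensorModule.lift (LinearMap.toSpanSingleton E _ g)

theorem extendE_tmul {n : ℕ} (g : Tpow k H n →ₗ[k] M) (e : E) (t : Tpow k H n) :
    extendE g (e ⊗ₜ[k] t) = e • g t := rfl

namespace CrossedProduct

variable (S : CrossedProduct k A H E)

/-- The map `H^{⊗(n+1)} → E ⊗ H^{⊗n}` induced by the inclusion of the first factor `H` in `E`. -/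
def headE (n : ℕ) : Tpow k H (n + 1) →ₗ[k] RelBar k H E n :=
  LinearMap.rTensor (Tpow k H n) S.hE

theorem headE_tpowCons (n : ℕ) (h : H) (t : Tpow k H n) :
    S.headE n (tpowCons n h t) = S.hE h ⊗ₜ[k] t := rfl

/-- The map `m ↦ 1 ⊗_A m`, that is `(a # h) ⊗ t ↦ (a # 1) ⊗ h ⊗ t`. -/
def prependOne (n : ℕ) : RelBar k H E n →ₗ[k] RelBar k H E (n + 1) :=
  LinearMap.lTensor E (TensorProduct.lift (tpowCons n)) ∘ₗ
    (TensorProduct.assoc k E H (Tpow k H n)).toLinearMap ∘ₗ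
    LinearMap.rTensor (Tpow k H n) (LinearMap.rTensor H S.aE ∘ₗ S.ι.symm.toLinearMap)

theorem prependOne_ι_tmul (n : ℕ) (a : A) (h : H) (t : Tpow k H n) :
    S.prependOne n (S.ι (a ⊗ₜ h) ⊗ₜ t) = S.aE a ⊗ₜ tpowCons n h t := by
  rw [prependOne, LinearMap.comp_apply, LinearMap.comp_apply, LinearMap.rTensor_tmul,
    LinearMap.comp_apply, LinearEquiv.coe_coe, LinearEquiv.coe_coe, LinearEquiv.symm_apply_apply]
  rfl

theorem prependOne_hE_tmul (n : ℕ) (h : H) (t : Tpow k H n) :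
    S.prependOne n (S.hE h ⊗ₜ t) = 1 ⊗ₜ tpowCons n h t := by
  rw [← S.aE_one]
  exact S.prependOne_ι_tmul n 1 h t

theorem prependOne_headE (n : ℕ) (t : Tpow k H (n + 1)) :
    S.prependOne n (S.headE n t) = 1 ⊗ₜ t := by
  induction t using tpow_succ_induction with
  | zero => rw [map_zero, map_zero, TensorProduct.tmul_zero]
  | cons h t => exact S.prependOne_hE_tmul n h t
  | add x y hx hy => rw [map_add, map_add, hx, hy, TensorProduct.tmul_add]

theorem prependOne_aE_smul (n : ℕ) (a : A) (m : RelBar k H E n) :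
    S.prependOne n (S.aE a • m) = S.aE a • S.prependOne n m := by
  have : S.prependOne n ∘ₗ Algebra.lsmul k k _ (S.aE a) =
      Algebra.lsmul k k _ (S.aE a) ∘ₗ S.prependOne n :=
    S.relBar_ext_ι fun b h hs => by
      simp only [LinearMap.comp_apply, Algebra.lsmul_coe, TensorProduct.smul_tmul', smul_eq_mul,
        S.aE_mul_ι, prependOne_ι_tmul]
      exact congrArg (· ⊗ₜ[k] _) (S.aE_mul_ι a b 1).symm
  exact LinearMap.congr_fun this m

theorem relBar_hom_ext {n : ℕ} {f g : RelBar k H E (n + 1) →ₗ[E] M}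
    (hfg : ∀ m, f (S.prependOne n m) = g (S.prependOne n m)) : f = g := by
  refine TensorProduct.AlgebraTensorModule.ext fun e t => ?_
  have : e ⊗ₜ[k] t = e • S.prependOne n (S.headE n t) := by
    rw [prependOne_headE, TensorProduct.smul_tmul', smul_eq_mul, mul_one]
  rw [this, map_smul, map_smul, hfg]

/-- The `E`-linear map `e ⊗_A m ↦ e G(m)` determined by a map `G`, meant for `A`-linear `G`. -/
def inducedE {n : ℕ} (G : RelBar k H E n →ₗ[k] M) : RelBar k H E (n + 1) →ₗ[E] M :=
  extendE (G ∘ₗ S.headE n)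

theorem inducedE_prependOne {n : ℕ} {G : RelBar k H E n →ₗ[k] M}
    (hG : ∀ a m, G (S.aE a • m) = S.aE a • G m) (m : RelBar k H E n) :
    S.inducedE G (S.prependOne n m) = G m := by
  have : (S.inducedE G).restrictScalars k ∘ₗ S.prependOne n = G :=
    S.relBar_ext_ι fun a h hs => by
      change S.inducedE G (S.prependOne n _) = _
      rw [prependOne_ι_tmul, inducedE, extendE_tmul, LinearMap.comp_apply, headE_tpowCons, ← hG,
        TensorProduct.smul_tmul', smul_eq_mul, ← S.ι_tmul]
  exact LinearMap.congr_fun this m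

theorem inducedE_tmul_tp {n : ℕ} (G : RelBar k H E n →ₗ[k] M) (e : E) (hs : Fin (n + 1) → H) :
    S.inducedE G (e ⊗ₜ tp k hs) = e • G (S.hE (hs 0) ⊗ₜ tp k fun i => hs i.succ) := rfl

/-- The differential `b'` of the bar construction of `E` over `A`, normalized by
`b'(1 ⊗_A m) = m - 1 ⊗_A b'(m)`. -/
def relBarD : ∀ n : ℕ, RelBar k H E (n + 1) →ₗ[E] RelBar k H E n
  | 0 => S.inducedE LinearMap.id
  | n + 1 => S.inducedE (LinearMap.id - S.prependOne n ∘ₗ (relBarD n).restrictScalars k)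

theorem relBarD_zero_prependOne (m : RelBar k H E 0) : S.relBarD 0 (S.prependOne 0 m) = m :=
  S.inducedE_prependOne (fun _ _ => rfl) m

theorem relBarD_succ_prependOne (n : ℕ) (m : RelBar k H E (n + 1)) :
    S.relBarD (n + 1) (S.prependOne (n + 1) m) = m - S.prependOne n (S.relBarD n m) := by
  refine S.inducedE_prependOne (fun a m => ?_) m
  simp only [LinearMap.sub_apply, LinearMap.id_apply, LinearMap.comp_apply,
    LinearMap.restrictScalars_apply, map_smul, prependOne_aE_smul, smul_sub]

theorem relBarD_comp_relBarD (n : ℕ) : S.relBarD n ∘ₗ S.relBarD (n + 1) = 0 := by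
  induction n with
  | zero =>
    refine S.relBar_hom_ext fun m => ?_
    simp only [LinearMap.comp_apply, relBarD_succ_prependOne, map_sub, relBarD_zero_prependOne,
      sub_self, LinearMap.zero_apply]
  | succ n ih =>
    refine S.relBar_hom_ext fun m => ?_
    have := LinearMap.congr_fun ih m
    simp only [LinearMap.comp_apply, LinearMap.zero_apply] at this
    simp only [LinearMap.comp_apply, relBarD_succ_prependOne, map_sub, this, map_zero, sub_zero,
      sub_self, LinearMap.zero_apply]

/-- The map `m ↦ m ⊗_A x` appending `x : E` on the right. -/
def append (x : E) : ∀ n : ℕ, RelBar k H E n →ₗ[E] RelBar k H E (n + 1)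
  | 0 => extendE (S.prependOne 0 ∘ₗ TensorProduct.mk k E (Tpow k H 0) x)
  | n + 1 => S.inducedE (S.prependOne (n + 1) ∘ₗ (append x n).restrictScalars k)

/-- Right multiplication by `y : E` on `E ⊗_A ⋯ ⊗_A E`. -/
def mulRightE (y : E) : ∀ n : ℕ, RelBar k H E n →ₗ[E] RelBar k H E n
  | 0 => extendE (TensorProduct.mk k E (Tpow k H 0) y)
  | n + 1 => S.inducedE (S.prependOne n ∘ₗ (mulRightE y n).restrictScalars k)

theorem append_zero_tmul (x e : E) (t : Tpow k H 0) :
    S.append x 0 (e ⊗ₜ t) = e • S.prependOne 0 (x ⊗ₜ t) := rfl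

theorem mulRightE_zero_tmul (y e : E) (t : Tpow k H 0) :
    S.mulRightE y 0 (e ⊗ₜ t) = (e * y) ⊗ₜ t := rfl

theorem append_succ_tmul_tp (x : E) (n : ℕ) (e : E) (hs : Fin (n + 1) → H) :
    S.append x (n + 1) (e ⊗ₜ tp k hs) =
      e • S.prependOne (n + 1) (S.append x n (S.hE (hs 0) ⊗ₜ tp k fun i => hs i.succ)) := rfl

theorem append_prependOne (x : E) (n : ℕ) (m : RelBar k H E n) :
    S.append x (n + 1) (S.prependOne n m) = S.prependOne (n + 1) (S.append x n m) :=
  S.inducedE_prependOne (fun a m => by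
    simp only [LinearMap.comp_apply, LinearMap.restrictScalars_apply, map_smul,
      prependOne_aE_smul]) m

theorem mulRightE_prependOne (y : E) (n : ℕ) (m : RelBar k H E n) :
    S.mulRightE y (n + 1) (S.prependOne n m) = S.prependOne n (S.mulRightE y n m) :=
  S.inducedE_prependOne (fun a m => by
    simp only [LinearMap.comp_apply, LinearMap.restrictScalars_apply, map_smul,
      prependOne_aE_smul]) m

theorem append_add (x y : E) (n : ℕ) (m : RelBar k H E n) :
    S.append (x + y) n m = S.append x n m + S.append y n m := by
  suffices S.append (x + y) n = S.append x n + S.append y n from LinearMap.congr_fun this m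
  clear m
  induction n with
  | zero =>
    refine TensorProduct.AlgebraTensorModule.ext fun e t => ?_
    simp only [LinearMap.add_apply, append_zero_tmul, TensorProduct.add_tmul, map_add, smul_add]
  | succ n ih =>
    refine S.relBar_hom_ext fun m => ?_
    simp only [LinearMap.add_apply, append_prependOne, ih, map_add]

theorem append_smul (c : k) (x : E) (n : ℕ) (m : RelBar k H E n) :
    S.append (c • x) n m = c • S.append x n m := by
  suffices S.append (c • x) n = c • S.append x n from LinearMap.congr_fun this m
  clear m
  induction n with
  | zero =>
    refine TensorProduct.AlgebraTensorModule.ext fun e t => ?_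
    simp only [LinearMap.smul_apply, append_zero_tmul, ← TensorProduct.smul_tmul', map_smul]
    exact smul_comm e c _
  | succ n ih =>
    refine S.relBar_hom_ext fun m => ?_
    simp only [LinearMap.smul_apply, append_prependOne, ih, map_smul]

theorem mulRightE_append (x y : E) (n : ℕ) (m : RelBar k H E n) :
    S.mulRightE y (n + 1) (S.append x n m) = S.append (x * y) n m := by
  suffices S.mulRightE y (n + 1) ∘ₗ S.append x n = S.append (x * y) n from
    LinearMap.congr_fun this m
  clear m
  induction n with
  | zero =>
    refine TensorProduct.AlgebraTensorModule.ext fun e t => ?_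
    simp only [LinearMap.comp_apply, append_zero_tmul, map_smul, mulRightE_prependOne,
      mulRightE_zero_tmul]
  | succ n ih =>
    refine S.relBar_hom_ext fun m => ?_
    have := LinearMap.congr_fun ih m
    simp only [LinearMap.comp_apply] at this
    simp only [LinearMap.comp_apply, append_prependOne, mulRightE_prependOne, this]

theorem relBarD_mulRightE (y : E) (n : ℕ) (m : RelBar k H E (n + 1)) :
    S.relBarD n (S.mulRightE y (n + 1) m) = S.mulRightE y n (S.relBarD n m) := by
  suffices S.relBarD n ∘ₗ S.mulRightE y (n + 1) = S.mulRightE y n ∘ₗ S.relBarD n from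
    LinearMap.congr_fun this m
  clear m
  induction n with
  | zero =>
    refine S.relBar_hom_ext fun m => ?_
    simp only [LinearMap.comp_apply, relBarD_zero_prependOne, mulRightE_prependOne]
  | succ n ih =>
    refine S.relBar_hom_ext fun m => ?_
    have := LinearMap.congr_fun ih m
    simp only [LinearMap.comp_apply] at this
    simp only [LinearMap.comp_apply, relBarD_succ_prependOne, mulRightE_prependOne, this, map_sub]

theorem relBarD_append_one_zero (m : RelBar k H E 0) : S.relBarD 0 (S.append 1 0 m) = m := by
  suffices S.relBarD 0 ∘ₗ S.append 1 0 = LinearMap.id from LinearMap.congr_fun this m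
  refine TensorProduct.AlgebraTensorModule.ext fun e t => ?_
  simp only [LinearMap.comp_apply, append_zero_tmul, map_smul, relBarD_zero_prependOne,
    TensorProduct.smul_tmul', smul_eq_mul, mul_one, LinearMap.id_apply]

theorem relBarD_append_one_succ (n : ℕ) (m : RelBar k H E (n + 1)) :
    S.relBarD (n + 1) (S.append 1 (n + 1) m) =
      S.append 1 n (S.relBarD n m) + (-1 : ℤ) ^ (n + 1) • m := by
  suffices S.relBarD (n + 1) ∘ₗ S.append 1 (n + 1) =
      S.append 1 n ∘ₗ S.relBarD n + (-1 : ℤ) ^ (n + 1) • LinearMap.id from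
    LinearMap.congr_fun this m
  clear m
  induction n with
  | zero =>
    refine S.relBar_hom_ext fun m => ?_
    simp only [LinearMap.comp_apply, LinearMap.add_apply, LinearMap.neg_apply, LinearMap.id_apply,
      append_prependOne, relBarD_succ_prependOne, relBarD_zero_prependOne,
      relBarD_append_one_zero, zero_add, pow_one, neg_smul, one_smul, sub_eq_add_neg]
  | succ n ih =>
    refine S.relBar_hom_ext fun m => ?_
    have := LinearMap.congr_fun ih m
    simp only [LinearMap.comp_apply, LinearMap.add_apply, LinearMap.smul_apply,
      LinearMap.id_apply] at this
    simp only [LinearMap.comp_apply, LinearMap.add_apply, LinearMap.smul_apply, LinearMap.id_apply,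
      append_prependOne, relBarD_succ_prependOne, this, map_add, map_sub, map_zsmul]
    rw [pow_succ (-1 : ℤ) (n + 1), mul_neg_one, neg_smul]
    abel

end CrossedProduct

theorem fin_snoc_succ {V : Type*} {n : ℕ} (v : Fin (n + 1) → V) (x : V) :
    (fun i : Fin (n + 1) => (Fin.snoc v x : Fin (n + 2) → V) i.succ) =
      Fin.snoc (fun i : Fin n => v i.succ) x := by
  funext i
  cases i using Fin.lastCases with
  | last => rw [Fin.snoc_last, Fin.succ_last, Fin.snoc_last]
  | cast j => rw [Fin.snoc_castSucc, Fin.succ_castSucc, Fin.snoc_castSucc]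

theorem tp_snoc {V : Type} [AddCommGroup V] [Module k V] {n : ℕ} (v : Fin (n + 1) → V) (x : V) :
    tp k (Fin.snoc v x : Fin (n + 2) → V) =
      tpowCons (n + 1) (v 0) (tp k (Fin.snoc (fun i : Fin n => v i.succ) x : Fin (n + 1) → V)) := by
  rw [tp_succ, fin_snoc_succ]
  exact congrArg (tpowCons (n + 1) · _) (Fin.snoc_castSucc (α := fun _ => V) x v 0)

theorem CrossedProduct.append_hE (S : CrossedProduct k A H E) (h : H) (n : ℕ) (e : E)
    (hs : Fin n → H) :
    S.append (S.hE h) n (e ⊗ₜ tp k hs) = e ⊗ₜ tp k (Fin.snoc hs h : Fin (n + 1) → H) := by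
  induction n generalizing e with
  | zero =>
    rw [append_zero_tmul, prependOne_hE_tmul, TensorProduct.smul_tmul', smul_eq_mul, mul_one]
    rfl
  | succ n ih =>
    rw [append_succ_tmul_tp, ih, prependOne_hE_tmul, TensorProduct.smul_tmul', smul_eq_mul,
      mul_one, tp_snoc]

theorem lY_apply {s : ℕ} (e : E) (y : Yc k H E s) : lY e y = e • y := rfl

/-- The projection `H^{⊗(s+1)} → H̄^{⊗s} ⊗ H`. -/
def qbarInit : ∀ s : ℕ, Tpow k H (s + 1) →ₗ[k] Tpow k (Qbar k H) s ⊗[k] H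
  | 0 => tpowLift (TensorProduct.mk k (Tpow k (Qbar k H) 0) H).flip
  | s + 1 => tpowLift (((LinearMap.rTensorHom H ∘ₗ tpowCons s) ∘ₗ qbar k H).compl₂ (qbarInit s))

theorem qbarInit_tp (s : ℕ) (hs : Fin (s + 1) → H) :
    qbarInit s (tp k hs) =
      tp k (fun i : Fin s => qbar k H (hs i.castSucc)) ⊗ₜ[k] hs (Fin.last s) := by
  induction s with
  | zero => exact tpowLift_tpowCons _ _ _
  | succ s ih =>
    rw [tp_succ, qbarInit, tpowLift_tpowCons, LinearMap.compl₂_apply, ih]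
    rfl

/-- The projection `E ⊗ H^{⊗(s+1)} → Y_s`. -/
def toY (s : ℕ) : RelBar k H E (s + 1) →ₗ[E] Yc k H E s :=
  TensorProduct.AlgebraTensorModule.lTensor E E (qbarInit s)

theorem toY_tmul_tp (s : ℕ) (e : E) (hs : Fin (s + 1) → H) :
    toY s (e ⊗ₜ tp k hs) = ygen e (fun i : Fin s => hs i.castSucc) (hs (Fin.last s)) :=
  congrArg (e ⊗ₜ[k] ·) (qbarInit_tp s hs)

theorem toY_tmul_tp_snoc (s : ℕ) (e : E) (hs : Fin s → H) (h : H) :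
    toY s (e ⊗ₜ tp k (Fin.snoc hs h : Fin (s + 1) → H)) = ygen e hs h := by
  simp only [toY_tmul_tp, Fin.snoc_castSucc, Fin.snoc_last]

end RelativeBar

section Formulas

variable {k A H E M : Type} [CommRing k] [Ring A] [Algebra k A] [Ring H] [HopfAlgebra k H]
  [Ring E] [Algebra k E] [AddCommGroup M] [Module k M]

theorem ygen_hom_ext {s : ℕ} {f g : Yc k H E s →ₗ[k] M}
    (hfg : ∀ m, f (toY s m) = g (toY s m)) : f = g :=
  ygen_ext fun e hs h => by rw [← toY_tmul_tp_snoc, hfg]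

theorem sum_pi_fin_succ {m N : ℕ} (F : (Fin (m + 1) → Fin N) → M) :
    ∑ c, F c = ∑ c : Fin m → Fin N, ∑ i : Fin N, F (Fin.cons i c : Fin (m + 1) → Fin N) := by
  rw [Finset.sum_comm,
    ← Fintype.sum_prod_type' (f := fun i c => F (Fin.cons i c : Fin (m + 1) → Fin N))]
  exact (Equiv.sum_comp (Fin.consEquiv fun _ => Fin N) F).symm

theorem exists_seq_cons {V : Type*} {m : ℕ} (x : V) (w : Fin m → V) :
    ∃ g : ℕ → V, x = g 0 ∧ w = fun i : Fin m => g (i + 1) :=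
  ⟨fun n => n.casesOn x fun j => if hj : j < m then w ⟨j, hj⟩ else x, rfl,
    funext fun i => (dif_pos i.isLt : (if hj : (i : ℕ) < m then w ⟨i, hj⟩ else x) = w i).symm⟩

theorem fin_cons_seq {V : Type*} (g : ℕ → V) (s : ℕ) :
    (Fin.cons (g 0) (fun i : Fin s => g (i + 1)) : Fin (s + 1) → V) = fun i : Fin (s + 1) => g i :=
  funext fun i => Fin.cases rfl (fun _ => rfl) i

theorem fin_snoc_seq {V : Type*} (g : ℕ → V) (s : ℕ) :
    (Fin.snoc (fun i : Fin s => g i) (g s) : Fin (s + 1) → V) = fun i : Fin (s + 1) => g i :=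
  Fin.snoc_init_self (α := fun _ => V) fun i : Fin (s + 1) => g i

/-- The first entry of the tuple obtained from `u₀, …, u_{i+1}, g_{i+2}, …` by multiplying the
entries `i` and `i + 1`. -/
def mergeHead (i : ℕ) (u : Fin (i + 2) → H) : H :=
  if i = 0 then u ⟨0, by omega⟩ * u ⟨1, by omega⟩ else u ⟨0, by omega⟩

/-- The remaining entries of the tuple obtained from `u₀, …, u_{i+1}, g_{i+2}, …` by multiplying
the entries `i` and `i + 1`. -/
def mergeTail (i : ℕ) (u : Fin (i + 2) → H) (g : ℕ → H) (p : ℕ) : H :=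
  if hp : p + 1 < i then u ⟨p + 1, by omega⟩
  else if hp' : p + 1 = i then u ⟨p + 1, by omega⟩ * u ⟨p + 2, by omega⟩
  else g (p + 2)

theorem mergeTail_succ_zero (i : ℕ) (u : Fin (i + 3) → H) (g : ℕ → H) :
    mergeTail (i + 1) u g 0 = mergeHead i fun j => u j.succ := by
  cases i with
  | zero => rfl
  | succ i => exact dif_pos (by omega)

theorem mergeTail_succ_succ (i : ℕ) (u : Fin (i + 3) → H) (g : ℕ → H) (p : ℕ) :
    mergeTail (i + 1) u g (p + 1) = mergeTail i (fun j => u j.succ) (fun j => g (j + 1)) p := by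
  simp only [mergeTail, add_lt_add_iff_right, add_left_inj]
  rfl

namespace CrossedProduct

variable (S : CrossedProduct k A H E)

theorem append_ι_tmul {N : ℕ} (b : A) (h' : H) (s : ℕ) (a : A) {g : ℕ → H}
    {v : ℕ → Fin N → Fin 2 → H} (hv : ∀ j < s + 1, SRep k 1 (g j) N (v j)) :
    S.append (S.ι (b ⊗ₜ h')) s (S.ι (a ⊗ₜ g 0) ⊗ₜ tp k fun i : Fin s => g (i + 1)) =
      ∑ c : Fin (s + 1) → Fin N,
        S.ι ((a * iterAct k S.act (fun i : Fin (s + 1) => v i (c i) 0) b) ⊗ₜ v 0 (c 0) 1) ⊗ₜ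
          tp k (Fin.snoc (fun i : Fin s => v (i + 1) (c i.succ) 1) h' : Fin (s + 1) → H) := by
  induction s generalizing a g v with
  | zero =>
    rw [append_zero_tmul, prependOne_ι_tmul, TensorProduct.smul_tmul', smul_eq_mul,
      S.ι_mul_aE a b (hv 0 (by omega)), TensorProduct.sum_tmul, sum_pi_fin_succ]
    simp only [Finset.univ_unique, Finset.sum_singleton]
    rfl
  | succ s ih =>
    have ih := ih 1 (g := fun j => g (j + 1)) (v := fun j => v (j + 1))
      fun j hj => hv (j + 1) (by omega)
    rw [append_succ_tmul_tp, sum_pi_fin_succ]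
    refine (congrArg (fun z => S.ι (a ⊗ₜ[k] g 0) • S.prependOne (s + 1) z) ih).trans ?_
    rw [map_sum, Finset.smul_sum]
    refine Finset.sum_congr rfl fun c _ => ?_
    rw [prependOne_ι_tmul, one_mul, TensorProduct.smul_tmul', smul_eq_mul,
      S.ι_mul_aE _ _ (hv 0 (by omega)), TensorProduct.sum_tmul]
    refine Finset.sum_congr rfl fun i _ => ?_
    rw [tp_snoc]
    rfl

/-- The term of the bar differential of `(a # g₀) ⊗_A (1 # g₁) ⊗_A ⋯` in which the factors `i` and
`i + 1` are multiplied and the resulting element of `A` is moved to the left; `v j` represents the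
coproduct of `g j`. -/
def face {N : ℕ} (i n : ℕ) (a : A) (g : ℕ → H) (v : ℕ → Fin N → Fin 2 → H) : RelBar k H E n :=
  ∑ c : Fin (i + 2) → Fin N,
    S.ι ((a * iterAct k S.act (fun j : Fin i => v j (c ⟨j, by omega⟩) 0)
      (S.f (v i (c ⟨i, by omega⟩) 0) (v (i + 1) (c ⟨i + 1, by omega⟩) 0))) ⊗ₜ
        mergeHead i fun j => v j (c j) 1) ⊗ₜ
      tp k fun p : Fin n => mergeTail i (fun j => v j (c j) 1) g p

theorem face_zero {N : ℕ} (n : ℕ) (a : A) {g : ℕ → H} {v : ℕ → Fin N → Fin 2 → H}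
    (h0 : SRep k 1 (g 0) N (v 0)) (h1 : SRep k 1 (g 1) N (v 1)) :
    S.face 0 n a g v = (S.ι (a ⊗ₜ g 0) * S.hE (g 1)) ⊗ₜ tp k fun p : Fin n => g (p + 2) := by
  rw [face, S.ι_mul_hE a h0 h1, TensorProduct.sum_tmul, sum_pi_fin_succ, Finset.sum_comm]
  refine Finset.sum_congr rfl fun i _ => ?_
  rw [sum_pi_fin_succ, TensorProduct.sum_tmul]
  simp only [Finset.univ_unique, Finset.sum_singleton]
  rfl

theorem face_succ {N : ℕ} (i n : ℕ) (a : A) {g : ℕ → H} {v : ℕ → Fin N → Fin 2 → H}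
    (h0 : SRep k 1 (g 0) N (v 0)) :
    S.face (i + 1) (n + 1) a g v = S.ι (a ⊗ₜ g 0) •
      S.prependOne n (S.face i n 1 (fun j => g (j + 1)) fun j => v (j + 1)) := by
  rw [face, face, map_sum, Finset.smul_sum, sum_pi_fin_succ]
  refine Finset.sum_congr rfl fun c _ => ?_
  rw [prependOne_ι_tmul, one_mul, TensorProduct.smul_tmul', smul_eq_mul, S.ι_mul_aE _ _ h0,
    TensorProduct.sum_tmul]
  refine Finset.sum_congr rfl fun x _ => ?_
  simp only [tp_succ, Fin.val_succ, Fin.val_zero, mergeTail_succ_zero, mergeTail_succ_succ]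
  rfl

theorem relBarD_ι_tmul {N : ℕ} (n : ℕ) (a : A) {g : ℕ → H} {v : ℕ → Fin N → Fin 2 → H}
    (hv : ∀ j < n + 2, SRep k 1 (g j) N (v j)) :
    S.relBarD n (S.ι (a ⊗ₜ g 0) ⊗ₜ tp k fun i : Fin (n + 1) => g (i + 1)) =
      ∑ i : Fin (n + 1), (-1 : ℤ) ^ (i : ℕ) • S.face i n a g v := by
  induction n generalizing a g v with
  | zero =>
    rw [Fin.sum_univ_one, Fin.val_zero, pow_zero, one_smul,
      S.face_zero _ _ (hv 0 (by omega)) (hv 1 (by omega)), relBarD, inducedE_tmul_tp,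
      LinearMap.id_apply, TensorProduct.smul_tmul', smul_eq_mul]
    rfl
  | succ n ih =>
    have ih : S.relBarD n (S.hE (g 1) ⊗ₜ tp k fun i : Fin (n + 1) => g (i + 2)) =
        ∑ i : Fin (n + 1), (-1 : ℤ) ^ (i : ℕ) • S.face i n 1 (fun j => g (j + 1))
          fun j => v (j + 1) :=
      ih 1 (g := fun j => g (j + 1)) fun j hj => hv (j + 1) (by omega)
    have relBarD_eq : S.relBarD (n + 1) (S.ι (a ⊗ₜ g 0) ⊗ₜ tp k fun i : Fin (n + 2) => g (i + 1)) =
        S.ι (a ⊗ₜ g 0) • (S.hE (g 1) ⊗ₜ (tp k fun i : Fin (n + 1) => g (i + 2)) -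
          S.prependOne n (S.relBarD n (S.hE (g 1) ⊗ₜ tp k fun i : Fin (n + 1) => g (i + 2)))) := rfl
    rw [relBarD_eq, ih, Fin.sum_univ_succ (n := n + 1), Fin.val_zero, pow_zero, one_smul,
      S.face_zero _ _ (hv 0 (by omega)) (hv 1 (by omega)), smul_sub, TensorProduct.smul_tmul',
      smul_eq_mul, sub_eq_add_neg, map_sum, Finset.smul_sum, ← Finset.sum_neg_distrib]
    refine congrArg _ (Finset.sum_congr rfl fun i _ => ?_)
    rw [Fin.val_succ, S.face_succ _ _ _ (hv 0 (by omega)), map_zsmul, pow_succ, mul_neg_one,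
      neg_smul, smul_comm]

theorem toY_face {N : ℕ} (i s : ℕ) (a : A) (g : ℕ → H) (v : ℕ → Fin N → Fin 2 → H) :
    toY s (S.face i (s + 1) a g v) = ∑ c : Fin (i + 2) → Fin N,
      ygen (S.ι ((a * iterAct k S.act (fun j : Fin i => v j (c ⟨j, by omega⟩) 0)
        (S.f (v i (c ⟨i, by omega⟩) 0) (v (i + 1) (c ⟨i + 1, by omega⟩) 0))) ⊗ₜ
          mergeHead i fun j => v j (c j) 1))
        (fun p : Fin s => mergeTail i (fun j => v j (c j) 1) g p)
        (mergeTail i (fun j => v j (c j) 1) g s) := by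
  rw [face, map_sum]
  exact Finset.sum_congr rfl fun c _ => toY_tmul_tp _ _ _

end CrossedProduct

namespace ResData

variable {S : CrossedProduct k A H E} (R : ResData k A H E S)

theorem mu_xgen (s : ℕ) (e : E) (hs : Fin s → H) (as : Fin 0 → A) (x : E) :
    R.mu s (xgen e hs as x) = toY s (S.append x s (e ⊗ₜ tp k hs)) := by
  obtain rfl : as = fun i => i.elim0 := Subsingleton.elim _ _
  let appendBilin : E →ₗ[k] E →ₗ[k] Yc k H E s :=
    LinearMap.mk₂ k (fun e x => toY s (S.append x s (e ⊗ₜ tp k hs)))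
      (fun e e' x => by rw [TensorProduct.add_tmul, map_add, map_add])
      (fun c e x => by rw [← TensorProduct.smul_tmul', LinearMap.map_smul_of_tower,
        LinearMap.map_smul_of_tower])
      (fun e x y => by rw [S.append_add, map_add])
      (fun c e x => by rw [S.append_smul, LinearMap.map_smul_of_tower])
  suffices (xgenBilin hs fun i => i.elim0).compr₂ (R.mu s) = appendBilin from
    LinearMap.congr_fun₂ this e x
  refine S.ι_ext fun a h => S.ι_ext fun b h' => ?_
  obtain ⟨g, rfl, rfl⟩ := exists_seq_cons h hs
  obtain ⟨N, v, hv⟩ := exists_sRep_uniform (k := k) (s + 1) g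
  have mu_eq := R.mu_eq s a (g 0) (fun i => g (i + 1)) b h' (fun _ => N) (fun i => v i)
    fun i => by rw [fin_cons_seq]; exact hv i i.isLt
  have append_eq := congrArg (toY s) (S.append_ι_tmul b h' s a hv)
  refine mu_eq.trans (Eq.trans ?_ append_eq.symm)
  rw [map_sum]
  exact Finset.sum_congr rfl fun c _ => (toY_tmul_tp_snoc _ _ _ _).symm

theorem del_toY (s : ℕ) (y : RelBar k H E (s + 2)) :
    R.del s (toY (s + 1) y) = -toY s (S.relBarD (s + 1) y) := by
  suffices R.del s ∘ₗ (toY (s + 1)).restrictScalars k =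
      -((toY s).restrictScalars k ∘ₗ (S.relBarD (s + 1)).restrictScalars k) from
    LinearMap.congr_fun this y
  refine S.relBar_ext_ι fun a h hs => ?_
  obtain ⟨g, rfl, rfl⟩ := exists_seq_cons h hs
  obtain ⟨N, v, hv⟩ := exists_sRep_uniform (k := k) (s + 3) g
  have cons_snoc : (Fin.cons (g 0) (Fin.snoc (fun i : Fin (s + 1) => g (i + 1)) (g (s + 2))) :
      Fin (s + 3) → H) = fun i : Fin (s + 3) => g i := by
    rw [fin_snoc_seq (fun i => g (i + 1)) (s + 1), fin_cons_seq]
  have relBarD_eq := congrArg (fun z => -toY s z) (S.relBarD_ι_tmul (s + 1) a hv)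
  have del_eq := R.del_eq s a (g 0) (fun i => g (i + 1)) (g (s + 2)) (fun _ => N) (fun i => v i)
    fun i => (congrFun cons_snoc i).symm ▸ hv i i.isLt
  refine (congrArg (R.del s) (toY_tmul_tp _ _ _)).trans
    (del_eq.trans (Eq.trans ?_ relBarD_eq.symm))
  simp only [map_sum]
  rw [← Finset.sum_neg_distrib]
  refine Finset.sum_congr rfl fun i _ => ?_
  rw [map_zsmul, pow_succ, mul_neg_one, neg_smul, S.toY_face]
  refine congrArg (fun z => -((-1 : ℤ) ^ (i : ℕ) • z)) (Finset.sum_congr rfl fun c _ => ?_)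
  have := i.isLt
  simp only [cons_snoc, mergeTail, dif_neg (by omega : ¬s + 1 < (i : ℕ)), eq_comm (a := s + 1)]
  rfl

end ResData

end Formulas

/-! ### The augmented rows -/

section Rows

variable {k A H E : Type} [CommRing k] [Ring A] [Algebra k A] [Ring H] [HopfAlgebra k H]
  [Ring E] [Algebra k E]

theorem toY_surjective (s : ℕ) : Function.Surjective (toY (k := k) (H := H) (E := E) s) := by
  have mkQ_eq_zero :
      (LinearMap.range (toY (k := k) (H := H) (E := E) s)).mkQ.restrictScalars k = 0 :=
    ygen_hom_ext fun m => (Submodule.Quotient.mk_eq_zero _).2 ⟨m, rfl⟩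
  intro y
  exact (Submodule.Quotient.mk_eq_zero _).1 (LinearMap.congr_fun mkQ_eq_zero y)

theorem lX_xgen (x e : E) {s r : ℕ} (hs : Fin s → H) (as : Fin r → A) (e' : E) :
    lX x (xgen (k := k) e hs as e') = xgen (x * e) hs as e' := rfl

theorem rX_xgen (x e : E) {s r : ℕ} (hs : Fin s → H) (as : Fin r → A) (e' : E) :
    rX x (xgen (k := k) e hs as e') = xgen e hs as (e' * x) := rfl

theorem tp_eq_zero {V : Type} [AddCommGroup V] [Module k V] {n : ℕ} {v : Fin n → V} (i : Fin n)
    (hi : v i = 0) : tp k v = 0 := by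
  induction n with
  | zero => exact i.elim0
  | succ n ih =>
    cases i using Fin.cases with
    | zero => rw [tp_succ, hi, map_zero, LinearMap.zero_apply]
    | succ j => rw [tp_succ, ih j hi, map_zero]

theorem tp_qbar_snoc_one {B : Type} [Ring B] [Algebra k B] {n : ℕ} (v : Fin n → B) :
    tp k (fun i => qbar k B ((Fin.snoc v 1 : Fin (n + 1) → B) i)) = 0 := by
  refine tp_eq_zero (Fin.last n) ?_
  rw [Fin.snoc_last]
  exact (Submodule.Quotient.mk_eq_zero _).2 ⟨1, by simp⟩

/-- `sY` is the homotopy `e ⊗ 𝐡 ⊗ h ↦ (-1)^s e ⊗ 𝐡 ⊗ h ⊗ 1` of `(Y_*, ∂_*)`. -/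
def IsHomotopyY (sY : ∀ s : ℕ, Yc k H E s →ₗ[k] Yc k H E (s + 1)) : Prop :=
  ∀ (s : ℕ) (e : E) (hs : Fin s → H) (h : H),
    sY s (ygen e hs h) = (-1 : ℤ) ^ s • ygen e (Fin.snoc hs h) 1

namespace IsHomotopyY

variable {sY : ∀ s : ℕ, Yc k H E s →ₗ[k] Yc k H E (s + 1)}

theorem apply_toY (hsY : IsHomotopyY sY) (S : CrossedProduct k A H E) (s : ℕ)
    (m : RelBar k H E (s + 1)) :
    sY s (toY s m) = (-1 : ℤ) ^ s • toY (s + 1) (S.append 1 (s + 1) m) := by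
  suffices sY s ∘ₗ (toY s).restrictScalars k = (-1 : ℤ) ^ s •
      ((toY (s + 1)).restrictScalars k ∘ₗ (S.append 1 (s + 1)).restrictScalars k) from
    LinearMap.congr_fun this m
  refine TensorProduct.ext (LinearMap.ext fun x => tpow_ext fun hs => ?_)
  rw [← Fin.snoc_init_self hs]
  change sY s (toY s (x ⊗ₜ tp k _)) =
    (-1 : ℤ) ^ s • toY (s + 1) (S.append 1 (s + 1) (x ⊗ₜ tp k _))
  rw [toY_tmul_tp_snoc, hsY, ← S.hE_one, S.append_hE, toY_tmul_tp_snoc]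

theorem apply_ygen_one (hsY : IsHomotopyY sY) (s : ℕ) (e : E) (hs : Fin s → H) :
    sY s (ygen e hs 1) = 0 := by
  rw [hsY, ygen, tp_qbar_snoc_one, TensorProduct.zero_tmul, TensorProduct.tmul_zero, smul_zero]

end IsHomotopyY

namespace ResData

variable {S : CrossedProduct k A H E} (R : ResData k A H E S)

theorem mu_sig0 (s : ℕ) (y : Yc k H E s) : R.mu s (R.sig0 s y) = y := by
  suffices R.mu s ∘ₗ R.sig0 s = LinearMap.id from LinearMap.congr_fun this y
  refine ygen_ext fun e hs h => ?_
  rw [LinearMap.comp_apply, R.sig0_eq, mu_xgen, S.append_hE, toY_tmul_tp_snoc, LinearMap.id_apply]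

theorem mu_xgen_one (s : ℕ) (e : E) (hs : Fin s → H) (as : Fin 0 → A) :
    R.mu s (xgen e hs as 1) = ygen e hs 1 := by
  rw [mu_xgen, ← S.hE_one, S.append_hE, toY_tmul_tp_snoc]

/-- Right multiplication by `e : E` on `Y_s`, transported from `X_{0s}` along `μ_s`. -/
def rY (e : E) (s : ℕ) : Yc k H E s →ₗ[k] Yc k H E s := R.mu s ∘ₗ rX e ∘ₗ R.sig0 s

theorem rY_toY (e : E) (s : ℕ) (m : RelBar k H E (s + 1)) :
    R.rY e s (toY s m) = toY s (S.mulRightE e (s + 1) m) := by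
  suffices R.rY e s ∘ₗ (toY s).restrictScalars k =
      (toY s).restrictScalars k ∘ₗ (S.mulRightE e (s + 1)).restrictScalars k from
    LinearMap.congr_fun this m
  refine TensorProduct.ext (LinearMap.ext fun x => tpow_ext fun hs => ?_)
  rw [← Fin.snoc_init_self hs]
  change R.rY e s (toY s (x ⊗ₜ tp k _)) = toY s (S.mulRightE e (s + 1) (x ⊗ₜ tp k _))
  rw [toY_tmul_tp_snoc, ← S.append_hE, S.mulRightE_append, ← R.mu_xgen _ _ _ fun i => i.elim0,
    ← rX_xgen, ← R.sig0_eq]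
  rfl

theorem mu_rX (e : E) (s : ℕ) (x : Xc k A H E 0 s) : R.mu s (rX e x) = R.rY e s (R.mu s x) := by
  suffices R.mu s ∘ₗ rX e = R.rY e s ∘ₗ R.mu s from LinearMap.congr_fun this x
  refine xgen_ext fun x hs as y => ?_
  simp only [LinearMap.comp_apply, rX_xgen, mu_xgen, rY_toY, S.mulRightE_append]

theorem del_rY (e : E) (s : ℕ) (y : Yc k H E (s + 1)) :
    R.del s (R.rY e (s + 1) y) = R.rY e s (R.del s y) := by
  obtain ⟨m, rfl⟩ := toY_surjective _ y
  rw [rY_toY, del_toY, del_toY, S.relBarD_mulRightE, map_neg, rY_toY]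

theorem del_del (s : ℕ) (y : Yc k H E (s + 2)) : R.del s (R.del (s + 1) y) = 0 := by
  obtain ⟨m, rfl⟩ := toY_surjective _ y
  have relBarD_relBarD : S.relBarD (s + 1) (S.relBarD (s + 2) m) = 0 :=
    LinearMap.congr_fun (S.relBarD_comp_relBarD (s + 1)) m
  rw [del_toY, map_neg, del_toY, relBarD_relBarD, map_zero, neg_zero, neg_zero]

variable (S) in
/-- The augmentation `Y_0 = E ⊗ H → E`, `e ⊗ h ↦ e (1 # h)`. -/
def augY : Yc k H E 0 →ₗ[E] RelBar k H E 0 :=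
  S.relBarD 0 ∘ₗ TensorProduct.AlgebraTensorModule.lTensor E E (TensorProduct.lift
    ((tpowCons (k := k) (V := H) 0).flip : Tpow k (Qbar k H) 0 →ₗ[k] H →ₗ[k] Tpow k H 1))

theorem augY_toY (m : RelBar k H E 1) : augY S (toY 0 m) = S.relBarD 0 m := by
  suffices (augY S).restrictScalars k ∘ₗ (toY 0).restrictScalars k =
      (S.relBarD 0).restrictScalars k from LinearMap.congr_fun this m
  refine TensorProduct.ext (LinearMap.ext fun e => tpow_ext fun hs => ?_)
  exact congrArg (augY S) (toY_tmul_tp 0 e hs)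

theorem augY_del (y : Yc k H E 1) : augY S (R.del 0 y) = 0 := by
  obtain ⟨m, rfl⟩ := toY_surjective _ y
  rw [del_toY, map_neg, augY_toY, ← LinearMap.comp_apply, S.relBarD_comp_relBarD,
    LinearMap.zero_apply, neg_zero]

/-- The map `e ⊗ e' ↦ e e' ⊗ 1` of `X_{00}`, the augmentation followed by its section. -/
def augX : Xc k A H E 0 0 →ₗ[k] Xc k A H E 0 0 :=
  R.sig0 0 ∘ₗ ((toY 0).restrictScalars k ∘ₗ (S.append 1 0).restrictScalars k ∘ₗ
    (augY S).restrictScalars k) ∘ₗ R.mu 0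

theorem augX_apply (x : Xc k A H E 0 0) :
    R.augX x = R.sig0 0 (toY 0 (S.append 1 0 (augY S (R.mu 0 x)))) := rfl

theorem augX_xgen (e : E) (hs : Fin 0 → H) (as : Fin 0 → A) (x : E) :
    R.augX (xgen e hs as x) = xgen (e * x) hs as 1 := by
  obtain rfl : as = fun i => i.elim0 := Subsingleton.elim _ _
  rw [augX_apply, mu_xgen, augY_toY, S.append_zero_tmul, map_smul, S.relBarD_zero_prependOne,
    TensorProduct.smul_tmul', smul_eq_mul, ← S.hE_one, S.append_hE, toY_tmul_tp_snoc, R.sig0_eq]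

theorem augX_eq_zero {x : Xc k A H E 0 0} {y : Yc k H E 1} (h : R.mu 0 x = R.del 0 y) :
    R.augX x = 0 := by
  rw [augX_apply, h, augY_del, map_zero, map_zero, map_zero]

theorem del_sY_succ {sY : ∀ s : ℕ, Yc k H E s →ₗ[k] Yc k H E (s + 1)}
    (hsY : IsHomotopyY sY) (s : ℕ) (y : Yc k H E (s + 1)) :
    R.del (s + 1) (sY (s + 1) y) + sY s (R.del s y) = y := by
  obtain ⟨m, rfl⟩ := toY_surjective _ y
  rw [hsY.apply_toY S, map_zsmul, del_toY, S.relBarD_append_one_succ, del_toY, map_neg,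
    hsY.apply_toY S, map_add, map_zsmul]
  have sign_mul : (-1 : ℤ) ^ (s + 1) * (-1) ^ (s + 2) = -1 := by
    rw [← pow_add]
    exact Odd.neg_one_pow ⟨s + 1, by ring⟩
  rw [smul_neg, smul_add, smul_smul, sign_mul, pow_succ (-1 : ℤ) s, mul_neg_one, neg_smul,
    neg_smul, one_smul]
  abel

theorem sig0_del_sY_zero {sY : ∀ s : ℕ, Yc k H E s →ₗ[k] Yc k H E (s + 1)}
    (hsY : IsHomotopyY sY) (x : Xc k A H E 0 0) :
    R.sig0 0 (R.del 0 (sY 0 (R.mu 0 x))) = R.sig0 0 (R.mu 0 x) - R.augX x := by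
  rw [augX_apply]
  obtain ⟨m, hm⟩ := toY_surjective _ (R.mu 0 x)
  have relBarD_append : S.relBarD 1 (S.append 1 1 m) = S.append 1 0 (S.relBarD 0 m) - m := by
    simpa [sub_eq_add_neg] using S.relBarD_append_one_succ 0 m
  rw [← hm, ← map_sub, hsY.apply_toY S, pow_zero, one_smul, del_toY, relBarD_append, augY_toY,
    map_sub, neg_sub]

theorem sig_xgen_one (r s : ℕ) (e : E) (hs : Fin s → H) (as : Fin r → A) :
    R.sig r s (xgen e hs as 1) = 0 := by
  rw [← S.ι_one, R.sig_eq, xgen, tp_qbar_snoc_one, TensorProduct.zero_tmul, TensorProduct.tmul_zero,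
    TensorProduct.tmul_zero, smul_zero]

theorem xgen_succ_eq_sig (r s : ℕ) (e : E) (hs : Fin s → H) (as : Fin (r + 1) → A) :
    xgen e hs as 1 = R.sig r s ((-1 : ℤ) ^ (r + 1) •
      xgen e hs (fun i => as i.castSucc) (S.ι (as (Fin.last r) ⊗ₜ 1))) := by
  have snoc_eq : (Fin.snoc (fun i : Fin r => as i.castSucc) (as (Fin.last r)) :
      Fin (r + 1) → A) = as := Fin.snoc_init_self as
  rw [map_zsmul, R.sig_eq, smul_smul, ← mul_pow, S.hE_one, snoc_eq, neg_one_mul, neg_neg, one_pow,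
    one_smul]

/-- The differential `d⁰` of the row `X_{*s}`. -/
def d0 (r s : ℕ) : Xc k A H E (r + 1) s →ₗ[k] Xc k A H E r s := R.dl 0 (r + 1) s

end ResData

theorem mulAt_snoc_castSucc {B : Type} [Ring B] {r : ℕ} (as : Fin (r + 1) → B) (b : B)
    (i : Fin r) :
    mulAt (Fin.snoc as b : Fin (r + 2) → B) i.castSucc = Fin.snoc (mulAt as i) b := by
  funext j
  cases j using Fin.lastCases with
  | last =>
    have not_lt : ¬(Fin.last r : ℕ) < i.castSucc := by simp
    have ne : ¬(Fin.last r : ℕ) = i.castSucc := by simp; omega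
    rw [mulAt, if_neg not_lt, if_neg ne, Fin.succ_last, Fin.snoc_last, Fin.snoc_last]
  | cast j =>
    rw [Fin.snoc_castSucc]
    simp only [mulAt, Fin.snoc_castSucc, Fin.succ_castSucc, Fin.val_castSucc]

theorem mulAt_snoc_last {B : Type} [Ring B] {r : ℕ} (as : Fin (r + 1) → B) (b : B) :
    mulAt (Fin.snoc as b : Fin (r + 2) → B) (Fin.last r) =
      Fin.snoc (fun i : Fin r => as i.castSucc) (as (Fin.last r) * b) := by
  funext j
  cases j using Fin.lastCases with
  | last => simp [mulAt]
  | cast j =>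
    have lt_last : ((j.castSucc : Fin (r + 1)) : ℕ) < Fin.last r := by simp
    rw [mulAt, if_pos lt_last, Fin.snoc_castSucc, Fin.snoc_castSucc]

theorem row_sign_cancel {M ι : Type} [AddCommGroup M] [Fintype ι] (r : ℕ) (u : ι → M)
    (v : Fin r → M) (w x : M) :
    (-1 : ℤ) ^ (r + 1 + 1) • (∑ c, u c + (∑ i : Fin r, (-1 : ℤ) ^ ((i : ℕ) + 1) • v i +
        (-1 : ℤ) ^ (r + 1) • w) + (-1 : ℤ) ^ (r + 1 + 1) • x) +
      (∑ c, (-1 : ℤ) ^ (r + 1) • u c +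
        ∑ i : Fin r, (-1 : ℤ) ^ ((i : ℕ) + 1) • (-1 : ℤ) ^ (r + 1) • v i +
        (-1 : ℤ) ^ (r + 1) • (-1 : ℤ) ^ (r + 1) • w) = x := by
  have comm (i : Fin r) : (-1 : ℤ) ^ ((i : ℕ) + 1) • (-1 : ℤ) ^ (r + 1) • v i =
      (-1 : ℤ) ^ (r + 1) • (-1 : ℤ) ^ ((i : ℕ) + 1) • v i := smul_comm _ _ _
  simp only [comm, ← Finset.smul_sum]
  rw [pow_succ (-1 : ℤ) (r + 1)]
  rcases neg_one_pow_eq_or ℤ (r + 1) with sign | sign <;> rw [sign] <;> module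

namespace ResData

variable {S : CrossedProduct k A H E} (R : ResData k A H E S)

theorem d0_sig_add_sig_d0 (r s : ℕ) (x : Xc k A H E (r + 1) s) :
    R.d0 (r + 1) s (R.sig (r + 1) s x) + R.sig r s (R.d0 r s x) = x := by
  suffices R.d0 (r + 1) s ∘ₗ R.sig (r + 1) s + R.sig r s ∘ₗ R.d0 r s = LinearMap.id from
    LinearMap.congr_fun this x
  refine xgen_ext_ι S fun a h hs as b h' => ?_
  obtain ⟨g, rfl, rfl⟩ := exists_seq_cons h hs
  obtain ⟨N, v, hv⟩ := exists_sRep_uniform (k := k) (s + 1) g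
  have hv' (i : Fin (s + 1)) : SRep k 1 ((Fin.cons (g 0) (fun i : Fin s => g (i + 1)) :
      Fin (s + 1) → H) i) N (v i) := by
    rw [fin_cons_seq]; exact hv i i.isLt
  have d0_succ : R.d0 (r + 1) s _ = _ := R.d0_eq (r + 1) s a (g 0) (fun i => g (i + 1))
    (Fin.snoc as b) 1 h' (fun _ => N) (fun i => v i) hv'
  have d0_gen : R.d0 r s _ = _ := R.d0_eq r s a (g 0) (fun i => g (i + 1)) as b h' (fun _ => N)
    (fun i => v i) hv'
  have hE_eq : S.ι (1 ⊗ₜ h') = S.hE h' := rfl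
  have snoc_zero : (Fin.snoc as b : Fin (r + 2) → A) 0 = as 0 :=
    Fin.snoc_castSucc (α := fun _ => A) b as 0
  rw [hE_eq] at d0_succ
  rw [LinearMap.add_apply, LinearMap.comp_apply, LinearMap.comp_apply, d0_gen, R.sig_eq, map_zsmul,
    d0_succ]
  simp only [map_add, map_sum, map_zsmul, R.sig_eq, fin_snoc_succ, snoc_zero, Fin.snoc_castSucc,
    Fin.snoc_last, Fin.sum_univ_castSucc (n := r), mulAt_snoc_castSucc, mulAt_snoc_last, mul_one,
    Fin.val_castSucc, Fin.val_last, LinearMap.id_apply]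
  exact row_sign_cancel r _ _ _ _

theorem d0_sig_add_sig0_mu (s : ℕ) (x : Xc k A H E 0 s) :
    R.d0 0 s (R.sig 0 s x) + R.sig0 s (R.mu s x) = x := by
  suffices R.d0 0 s ∘ₗ R.sig 0 s + R.sig0 s ∘ₗ R.mu s = LinearMap.id from
    LinearMap.congr_fun this x
  refine xgen_ext_ι S fun a h hs as b h' => ?_
  obtain rfl : as = fun i => i.elim0 := Subsingleton.elim _ _
  obtain ⟨g, rfl, rfl⟩ := exists_seq_cons h hs
  obtain ⟨N, v, hv⟩ := exists_sRep_uniform (k := k) (s + 1) g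
  have hv' (i : Fin (s + 1)) : SRep k 1 ((Fin.cons (g 0) (fun i : Fin s => g (i + 1)) :
      Fin (s + 1) → H) i) N (v i) := by
    rw [fin_cons_seq]; exact hv i i.isLt
  have mu_gen := R.mu_eq s a (g 0) (fun i => g (i + 1)) b h' (fun _ => N) (fun i => v i) hv'
  have d0_gen : R.d0 0 s _ = _ := R.d0_eq 0 s a (g 0) (fun i => g (i + 1))
    (Fin.snoc (fun i => i.elim0) b) 1 h' (fun _ => N) (fun i => v i) hv'
  have hE_eq : S.ι (1 ⊗ₜ h') = S.hE h' := rfl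
  have eq_elim (w : Fin 0 → A) : w = fun i => i.elim0 := Subsingleton.elim _ _
  have snoc_last : (Fin.snoc (fun i : Fin 0 => i.elim0) b : Fin 1 → A) (Fin.last 0) = b :=
    Fin.snoc_last (α := fun _ => A) _ _
  have snoc_zero : (Fin.snoc (fun i : Fin 0 => i.elim0) b : Fin 1 → A) 0 = b := snoc_last
  rw [hE_eq] at d0_gen
  rw [LinearMap.add_apply, LinearMap.comp_apply, LinearMap.comp_apply, mu_gen, R.sig_eq, map_zsmul,
    d0_gen, map_sum, Fin.sum_univ_zero, mul_one]
  simp only [R.sig0_eq, snoc_last, snoc_zero, LinearMap.id_apply, pow_one, zero_add, neg_smul,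
    one_smul]
  simp only [eq_elim]
  abel

end ResData

end Rows

/-! ### The total module of the augmented rows -/

section Total

variable {k A H E : Type} [CommRing k] [Ring A] [Algebra k A] [Ring H] [HopfAlgebra k H]
  [Ring E] [Algebra k E]

variable (k A H E) in
/-- The total module of the family of augmented rows `Y_s ← X_{0s} ← X_{1s} ← ⋯`. -/
def Total : Type := (⨁ p : ℕ × ℕ, Xc k A H E p.1 p.2) × ⨁ s : ℕ, Yc k H E s

namespace Total

instance : AddCommGroup (Total k A H E) :=
  inferInstanceAs (AddCommGroup ((⨁ p : ℕ × ℕ, Xc k A H E p.1 p.2) × ⨁ s : ℕ, Yc k H E s))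

instance : Module k (Total k A H E) :=
  inferInstanceAs (Module k ((⨁ p : ℕ × ℕ, Xc k A H E p.1 p.2) × ⨁ s : ℕ, Yc k H E s))

/-- The inclusion of the summand `X_{rs}`. -/
def ofX (r s : ℕ) : Xc k A H E r s →ₗ[k] Total k A H E :=
  LinearMap.inl k (⨁ p : ℕ × ℕ, Xc k A H E p.1 p.2) (⨁ s : ℕ, Yc k H E s) ∘ₗ
    DirectSum.lof k (ℕ × ℕ) (fun p => Xc k A H E p.1 p.2) (r, s)

/-- The inclusion of the summand `Y_s`. -/
def ofY (s : ℕ) : Yc k H E s →ₗ[k] Total k A H E :=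
  LinearMap.inr k (⨁ p : ℕ × ℕ, Xc k A H E p.1 p.2) (⨁ s : ℕ, Yc k H E s) ∘ₗ
    DirectSum.lof k ℕ (fun s => Yc k H E s) s

section Desc

variable {N : Type} [AddCommGroup N] [Module k N]

/-- The linear map out of the total module with given restrictions to the summands. -/
def desc (f : ∀ r s, Xc k A H E r s →ₗ[k] N) (g : ∀ s, Yc k H E s →ₗ[k] N) :
    Total k A H E →ₗ[k] N :=
  LinearMap.coprod (DirectSum.toModule k (ℕ × ℕ) N fun p => f p.1 p.2)
    (DirectSum.toModule k ℕ N g)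

theorem desc_ofX (f : ∀ r s, Xc k A H E r s →ₗ[k] N) (g : ∀ s, Yc k H E s →ₗ[k] N) (r s : ℕ)
    (x : Xc k A H E r s) : desc f g (ofX r s x) = f r s x := by
  change DirectSum.toModule k (ℕ × ℕ) N (fun p => f p.1 p.2) (DirectSum.lof k _ _ (r, s) x) +
    DirectSum.toModule k ℕ N g 0 = f r s x
  rw [map_zero, add_zero]
  exact DirectSum.toModule_lof k (φ := fun p : ℕ × ℕ => f p.1 p.2) (r, s) x

theorem desc_ofY (f : ∀ r s, Xc k A H E r s →ₗ[k] N) (g : ∀ s, Yc k H E s →ₗ[k] N) (s : ℕ)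
    (y : Yc k H E s) : desc f g (ofY s y) = g s y := by
  change DirectSum.toModule k (ℕ × ℕ) N (fun p => f p.1 p.2) 0 +
    DirectSum.toModule k ℕ N g (DirectSum.lof k _ _ s y) = g s y
  rw [map_zero, zero_add]
  exact DirectSum.toModule_lof k (φ := g) s y

theorem hom_ext {f g : Total k A H E →ₗ[k] N} (hX : ∀ r s x, f (ofX r s x) = g (ofX r s x))
    (hY : ∀ s y, f (ofY s y) = g (ofY s y)) : f = g :=
  LinearMap.prod_ext (M := ⨁ p : ℕ × ℕ, Xc k A H E p.1 p.2) (M₂ := ⨁ s : ℕ, Yc k H E s)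
    (DirectSum.linearMap_ext k fun p => LinearMap.ext fun x => hX p.1 p.2 x)
    (DirectSum.linearMap_ext k fun s => LinearMap.ext fun y => hY s y)

end Desc

theorem ofX_xcast {r r' s s' : ℕ} (hr : r = r') (hs : s = s') (x : Xc k A H E r s) :
    ofX r' s' (xcast hr hs x) = ofX r s x := by
  subst hr hs
  rfl

variable (k A H E) in
/-- The sum of the `X_{rs}` with `(r, s) ∈ I` and the `Y_s` with `s ∈ J`. -/
def partialSum (I : Set (ℕ × ℕ)) (J : Set ℕ) : Submodule k (Total k A H E) :=
  (⨆ p ∈ I, LinearMap.range (ofX p.1 p.2)) ⊔ ⨆ s ∈ J, LinearMap.range (ofY s)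

section PartialSum

variable {I : Set (ℕ × ℕ)} {J : Set ℕ}

theorem ofX_mem {r s : ℕ} (h : (r, s) ∈ I) (x : Xc k A H E r s) :
    ofX r s x ∈ partialSum k A H E I J :=
  Submodule.mem_sup_left <| Submodule.mem_iSup_of_mem (r, s) <|
    Submodule.mem_iSup_of_mem h ⟨x, rfl⟩

theorem ofY_mem {s : ℕ} (h : s ∈ J) (y : Yc k H E s) : ofY s y ∈ partialSum k A H E I J :=
  Submodule.mem_sup_right <| Submodule.mem_iSup_of_mem s <| Submodule.mem_iSup_of_mem h ⟨y, rfl⟩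

theorem partialSum_le {P : Submodule k (Total k A H E)}
    (hX : ∀ r s, (r, s) ∈ I → ∀ x, ofX r s x ∈ P) (hY : ∀ s ∈ J, ∀ y, ofY s y ∈ P) :
    partialSum k A H E I J ≤ P := by
  refine sup_le (iSup₂_le fun p hp => ?_) (iSup₂_le fun s hs => ?_)
  · rintro _ ⟨x, rfl⟩
    exact hX p.1 p.2 hp x
  · rintro _ ⟨y, rfl⟩
    exact hY s hs y

theorem partialSum_mono {I' : Set (ℕ × ℕ)} (h : I ⊆ I') :
    partialSum k A H E I J ≤ partialSum k A H E I' J :=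
  partialSum_le (fun _ _ hp => ofX_mem (h hp)) fun _ hs => ofY_mem hs

end PartialSum

variable (k A H E) in
/-- The filtration of the total module by the row index `s`. -/
def rowLT (n : ℕ) : Submodule k (Total k A H E) :=
  partialSum k A H E {p | p.2 < n} {s | s < n}

theorem ofX_mem_rowLT {r s n : ℕ} (hs : s < n) (x : Xc k A H E r s) :
    ofX r s x ∈ rowLT k A H E n :=
  ofX_mem (I := {p | p.2 < n}) hs x

theorem ofY_mem_rowLT {s n : ℕ} (hs : s < n) (y : Yc k H E s) : ofY s y ∈ rowLT k A H E n :=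
  ofY_mem (J := {s | s < n}) hs y

theorem eq_zero_of_mem_rowLT_zero {x : Total k A H E} (hx : x ∈ rowLT k A H E 0) : x = 0 := by
  have rowLT_zero_le : rowLT k A H E 0 ≤ ⊥ :=
    partialSum_le (fun _ s hs => absurd hs s.not_lt_zero) fun s hs => absurd hs s.not_lt_zero
  exact rowLT_zero_le hx

theorem exists_mem_partialSum_fst_lt (x : Total k A H E) :
    ∃ r, x ∈ partialSum k A H E {p | p.1 < r} Set.univ := by
  set F := fun r : ℕ => partialSum k A H E {p | p.1 < r} Set.univ
  have F_mono : Monotone F := fun a b hab => partialSum_mono fun p (hp : p.1 < a) => hp.trans_le hab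
  have iSup_mkQ : (⨆ r, F r).mkQ = 0 := hom_ext
    (fun r s x => (Submodule.Quotient.mk_eq_zero _).2 <|
      Submodule.mem_iSup_of_mem (r + 1) (ofX_mem r.lt_succ_self x))
    (fun s y => (Submodule.Quotient.mk_eq_zero _).2 <|
      Submodule.mem_iSup_of_mem 0 (ofY_mem (Set.mem_univ s) y))
  rw [← Submodule.mem_iSup_of_directed F F_mono.directed_le]
  exact (Submodule.Quotient.mk_eq_zero _).1 (LinearMap.congr_fun iSup_mkQ x)

end Total

namespace ResData

open Total

variable {S : CrossedProduct k A H E} (R : ResData k A H E S)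

theorem mu_lX (e : E) (s : ℕ) (x : Xc k A H E 0 s) : R.mu s (lX e x) = lY e (R.mu s x) := by
  suffices R.mu s ∘ₗ lX e = lY e ∘ₗ R.mu s from LinearMap.congr_fun this x
  refine xgen_ext fun x hs as y => ?_
  rw [LinearMap.comp_apply, LinearMap.comp_apply, lX_xgen, mu_xgen, mu_xgen, lY_apply, ← map_smul,
    ← map_smul, TensorProduct.smul_tmul', smul_eq_mul]

theorem del_lY (e : E) (s : ℕ) (y : Yc k H E (s + 1)) :
    R.del s (lY e y) = lY e (R.del s y) := by
  obtain ⟨m, rfl⟩ := toY_surjective _ y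
  rw [lY_apply, ← map_smul, del_toY, map_smul, map_smul, del_toY, lY_apply, smul_neg]

/-- The component of degree `l` of the differential of the total module: `d^l` on the `X_{rs}`,
together with `μ` for `l = 0` and `∂` for `l = 1`. -/
def totalD (l : ℕ) : Module.End k (Total k A H E) :=
  desc
    (fun r s => match l, r with
      | 0, 0 => ofY s ∘ₗ R.mu s
      | 0, r + 1 => ofX r s ∘ₗ R.dl 0 (r + 1) s
      | l + 1, r => if l + 1 ≤ s then ofX (r + l) (s - (l + 1)) ∘ₗ R.dl (l + 1) r s else 0)
    (fun s => match l, s with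
      | 1, s + 1 => ofY s ∘ₗ R.del s
      | _, _ => 0)

theorem totalD_ofX {l r s : ℕ} (hls : l ≤ s) (hrl : 0 < r + l) (x : Xc k A H E r s) :
    R.totalD l (ofX r s x) = ofX (r + l - 1) (s - l) (R.dl l r s x) := by
  rw [totalD, desc_ofX]
  match l, r with
  | 0, r + 1 => rfl
  | l + 1, r => exact congrFun (congrArg _ (if_pos hls)) x

theorem totalD_ofX_of_lt {l r s : ℕ} (hsl : s < l) (x : Xc k A H E r s) :
    R.totalD l (ofX r s x) = 0 := by
  rw [totalD, desc_ofX]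
  match l with
  | l + 1 => exact congrFun (congrArg _ (if_neg hsl.not_ge)) x

theorem totalD_zero_ofX_zero (s : ℕ) (x : Xc k A H E 0 s) :
    R.totalD 0 (ofX 0 s x) = ofY s (R.mu s x) := by
  rw [totalD, desc_ofX]
  rfl

theorem totalD_one_ofY_succ (s : ℕ) (y : Yc k H E (s + 1)) :
    R.totalD 1 (ofY (s + 1) y) = ofY s (R.del s y) := by
  rw [totalD, desc_ofY]
  rfl

theorem totalD_ofY_of_ne_one {l : ℕ} (hl : l ≠ 1) (s : ℕ) (y : Yc k H E s) :
    R.totalD l (ofY s y) = 0 := by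
  rw [totalD, desc_ofY]
  match l with
  | 0 => rfl
  | l + 2 => rfl

theorem totalD_ofY_zero (l : ℕ) (y : Yc k H E 0) : R.totalD l (ofY 0 y) = 0 := by
  rw [totalD, desc_ofY]
  match l with
  | 0 => rfl
  | 1 => rfl
  | l + 2 => rfl

/-- The contracting homotopy `σ⁰` of the augmented rows. -/
def rowH : Module.End k (Total k A H E) :=
  desc (fun r s => ofX (r + 1) s ∘ₗ R.sig r s) fun s => ofX 0 s ∘ₗ R.sig0 s

theorem rowH_ofX (r s : ℕ) (x : Xc k A H E r s) :
    R.rowH (ofX r s x) = ofX (r + 1) s (R.sig r s x) := by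
  rw [rowH, desc_ofX, LinearMap.comp_apply]

theorem rowH_ofY (s : ℕ) (y : Yc k H E s) : R.rowH (ofY s y) = ofX 0 s (R.sig0 s y) := by
  rw [rowH, desc_ofY, LinearMap.comp_apply]

/-- The operator `x ↦ e x e'` for `p = (e, e')`. -/
def totalAct (p : E × E) : Module.End k (Total k A H E) :=
  desc (fun r s => ofX r s ∘ₗ lX p.1 ∘ₗ rX p.2) fun s => ofY s ∘ₗ lY p.1 ∘ₗ R.rY p.2 s

theorem totalAct_ofX (p : E × E) (r s : ℕ) (x : Xc k A H E r s) :
    R.totalAct p (ofX r s x) = ofX r s (lX p.1 (rX p.2 x)) := by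
  rw [totalAct, desc_ofX]
  rfl

theorem totalAct_ofY (p : E × E) (s : ℕ) (y : Yc k H E s) :
    R.totalAct p (ofY s y) = ofY s (lY p.1 (R.rY p.2 s y)) := by
  rw [totalAct, desc_ofY]
  rfl

theorem totalD_zero_ofX_succ (r s : ℕ) (x : Xc k A H E (r + 1) s) :
    R.totalD 0 (ofX (r + 1) s x) = ofX r s (R.d0 r s x) :=
  R.totalD_ofX s.zero_le (by omega) x

theorem totalD_zero_mul_rowH : R.totalD 0 * R.rowH + R.rowH * R.totalD 0 = 1 := by
  refine hom_ext (fun r s x => ?_) fun s y => ?_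
  · rw [LinearMap.add_apply, Module.End.mul_apply, Module.End.mul_apply, Module.End.one_apply,
      rowH_ofX, totalD_zero_ofX_succ]
    cases r with
    | zero => rw [totalD_zero_ofX_zero, rowH_ofY, ← map_add, d0_sig_add_sig0_mu]
    | succ r => rw [totalD_zero_ofX_succ, rowH_ofX, ← map_add, d0_sig_add_sig_d0]
  · rw [LinearMap.add_apply, Module.End.mul_apply, Module.End.mul_apply, Module.End.one_apply,
      rowH_ofY, totalD_zero_ofX_zero, mu_sig0, R.totalD_ofY_of_ne_one zero_ne_one, map_zero,
      add_zero]

theorem totalAct_mul_totalD (p : E × E) (l : ℕ) :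
    R.totalAct p * R.totalD l = R.totalD l * R.totalAct p := by
  refine hom_ext (fun r s x => ?_) fun s y => ?_ <;>
    rw [Module.End.mul_apply, Module.End.mul_apply]
  · rw [totalAct_ofX]
    rcases Nat.lt_or_ge s l with hsl | hls
    · rw [R.totalD_ofX_of_lt hsl, R.totalD_ofX_of_lt hsl, map_zero]
    rcases Nat.eq_zero_or_pos (r + l) with hrl | hrl
    · obtain ⟨rfl, rfl⟩ := Nat.add_eq_zero_iff.1 hrl
      rw [totalD_zero_ofX_zero, totalD_zero_ofX_zero, totalAct_ofY, mu_lX, mu_rX]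
    · have dl_lX := LinearMap.congr_fun (R.dl_lmul l r s p.1) (rX p.2 x)
      have dl_rX := LinearMap.congr_fun (R.dl_rmul l r s p.2) x
      rw [LinearMap.comp_apply, LinearMap.comp_apply] at dl_lX dl_rX
      rw [R.totalD_ofX hls hrl, R.totalD_ofX hls hrl, totalAct_ofX, dl_lX, dl_rX]
  · rw [totalAct_ofY]
    rcases eq_or_ne l 1 with rfl | hl
    · cases s with
      | zero => rw [totalD_ofY_zero, totalD_ofY_zero, map_zero]
      | succ s => rw [totalD_one_ofY_succ, totalD_one_ofY_succ, totalAct_ofY, del_lY, del_rY]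
    · rw [R.totalD_ofY_of_ne_one hl, R.totalD_ofY_of_ne_one hl, map_zero]

theorem totalD_totalD_ofY (i j s : ℕ) (y : Yc k H E s) :
    R.totalD i (R.totalD j (ofY s y)) = 0 := by
  rcases eq_or_ne j 1 with rfl | hj
  · match s with
    | 0 => rw [totalD_ofY_zero, map_zero]
    | 1 => rw [totalD_one_ofY_succ, totalD_ofY_zero]
    | s + 2 =>
      rw [totalD_one_ofY_succ]
      rcases eq_or_ne i 1 with rfl | hi
      · rw [totalD_one_ofY_succ, del_del, map_zero]
      · rw [R.totalD_ofY_of_ne_one hi]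
  · rw [R.totalD_ofY_of_ne_one hj, map_zero]

theorem totalD_mem_rowLT (l n : ℕ) {x : Total k A H E} (hx : x ∈ rowLT k A H E n) :
    R.totalD l x ∈ rowLT k A H E (n - l) := by
  suffices rowLT k A H E n ≤ (rowLT k A H E (n - l)).comap (R.totalD l) from this hx
  refine partialSum_le (fun r s (hs : s < n) x => ?_) fun s (hs : s < n) y => ?_ <;>
    rw [Submodule.mem_comap]
  · rcases Nat.lt_or_ge s l with hsl | hls
    · rw [R.totalD_ofX_of_lt hsl]
      exact zero_mem _
    rcases Nat.eq_zero_or_pos (r + l) with hrl | hrl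
    · obtain ⟨rfl, rfl⟩ := Nat.add_eq_zero_iff.1 hrl
      rw [totalD_zero_ofX_zero]
      exact ofY_mem_rowLT hs _
    · rw [R.totalD_ofX hls hrl]
      exact ofX_mem_rowLT (by omega) _
  · rcases eq_or_ne l 1 with rfl | hl
    · cases s with
      | zero => exact R.totalD_ofY_zero 1 y ▸ zero_mem _
      | succ s => exact R.totalD_one_ofY_succ s y ▸ ofY_mem_rowLT (by omega) _
    · exact R.totalD_ofY_of_ne_one hl s y ▸ zero_mem _

theorem totalD_totalD_of_mem_rowLT {i j n : ℕ} (hn : n ≤ i + j) {x : Total k A H E}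
    (hx : x ∈ rowLT k A H E n) : R.totalD i (R.totalD j x) = 0 := by
  have := R.totalD_mem_rowLT i _ (R.totalD_mem_rowLT j n hx)
  rw [show n - j - i = 0 by omega] at this
  exact eq_zero_of_mem_rowLT_zero this

theorem ofX_sig_xcast_dl {l r r' s s' : ℕ} (hls : l ≤ s) (hrl : 0 < r + l) (hr : r + l - 1 = r')
    (hs : s - l = s') (x : Xc k A H E r s) :
    ofX (r' + 1) s' (R.sig r' s' (xcast hr hs (R.dl l r s x))) =
      R.rowH (R.totalD l (ofX r s x)) := by
  rw [R.totalD_ofX hls hrl, ← ofX_xcast hr hs, rowH_ofX]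

theorem totalD_xgen_zero {l s : ℕ} (hl : 1 ≤ l) (hls : l ≤ s) (hs : Fin s → H)
    (as : Fin 0 → A) :
    R.totalD l (ofX 0 s (xgen 1 hs as 1)) =
      -R.rowH (∑ j ∈ Finset.range l, R.totalD (l - j) (R.totalD j (ofX 0 s (xgen 1 hs as 1)))) := by
  obtain rfl : as = fun i => i.elim0 := Subsingleton.elim _ _
  rw [R.totalD_ofX hls (by omega)]
  rcases hl.eq_or_lt with rfl | hl
  · obtain ⟨s, rfl⟩ := Nat.exists_eq_add_of_le' hls
    rw [Finset.sum_range_one, Nat.sub_zero, totalD_zero_ofX_zero, totalD_one_ofY_succ, rowH_ofY,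
      R.dl_one_zero, map_neg]
    rfl
  · obtain ⟨l, rfl⟩ := Nat.exists_eq_add_of_le' hl
    rw [R.dl_zero (l + 2) s hl hls, map_neg, map_sum, map_sum, Finset.sum_range_succ',
      totalD_zero_ofX_zero, R.totalD_ofY_of_ne_one (by omega), map_zero, add_zero,
      Finset.sum_range]
    refine congrArg _ (Finset.sum_congr rfl fun j _ => ?_)
    have hj : (j : ℕ) < l + 1 := j.isLt
    rw [ofX_xcast, R.ofX_sig_xcast_dl (by omega) (by omega), ofX_xcast,
      ← R.totalD_ofX (by omega) (by omega)]

theorem totalD_xgen_succ {l s : ℕ} (hl : 1 ≤ l) (hls : l ≤ s) (r : ℕ) (hs : Fin s → H)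
    (as : Fin (r + 1) → A) :
    R.totalD l (ofX (r + 1) s (xgen 1 hs as 1)) =
      -R.rowH (∑ j ∈ Finset.range l,
        R.totalD (l - j) (R.totalD j (ofX (r + 1) s (xgen 1 hs as 1)))) := by
  rw [R.totalD_ofX hls (by omega), R.dl_succ l r s hl hls, map_neg, map_sum, map_sum,
    Finset.sum_range]
  refine congrArg _ (Finset.sum_congr rfl fun j _ => ?_)
  rw [ofX_xcast, R.ofX_sig_xcast_dl (by omega) (by omega), ofX_xcast,
    ← R.totalD_ofX (by omega) (by omega)]

theorem totalD_xgen {l : ℕ} (hl : 1 ≤ l) (r s : ℕ) (hs : Fin s → H) (as : Fin r → A) :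
    R.totalD l (ofX r s (xgen 1 hs as 1)) =
      -R.rowH (∑ j ∈ Finset.range l, R.totalD (l - j) (R.totalD j (ofX r s (xgen 1 hs as 1)))) := by
  rcases Nat.lt_or_ge s l with hsl | hls
  · rw [R.totalD_ofX_of_lt hsl, Finset.sum_eq_zero, map_zero, neg_zero]
    intro j hj
    have := Finset.mem_range.1 hj
    exact R.totalD_totalD_of_mem_rowLT (by omega) (ofX_mem_rowLT hsl _)
  cases r with
  | zero => exact R.totalD_xgen_zero hl hls hs as
  | succ r => exact R.totalD_xgen_succ hl hls r hs as

variable (k A H E) in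
/-- The images in the total module of the generators of `X_{*r}` as a family of `E`-bimodules. -/
def totalGen (r : ℕ) : Set (Total k A H E) :=
  {y | ∃ (s : ℕ) (hs : Fin s → H) (as : Fin r → A), y = ofX r s (xgen 1 hs as 1)}

theorem partialSum_succ_le (r : ℕ) :
    partialSum k A H E {p | p.1 < r + 1} Set.univ ≤ partialSum k A H E {p | p.1 < r} Set.univ ⊔
      Submodule.span k {y | ∃ p, ∃ g ∈ totalGen k A H E r, y = R.totalAct p g} := by
  set P := partialSum k A H E {p | p.1 < r} Set.univ ⊔
    Submodule.span k {y | ∃ p, ∃ g ∈ totalGen k A H E r, y = R.totalAct p g} with hP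
  refine partialSum_le (fun r' s hr' x => ?_) fun s hs y => Submodule.mem_sup_left (ofY_mem hs y)
  rcases (Nat.lt_succ_iff.1 hr').lt_or_eq with hr' | rfl
  · exact Submodule.mem_sup_left (ofX_mem hr' x)
  suffices P.mkQ ∘ₗ ofX r' s = 0 from
    (Submodule.Quotient.mk_eq_zero P).1 (LinearMap.congr_fun this x)
  refine xgen_ext fun e hs as e' => (Submodule.Quotient.mk_eq_zero P).2 <|
    Submodule.mem_sup_right (Submodule.subset_span ⟨(e, e'), _, ⟨s, hs, as, rfl⟩, ?_⟩)
  rw [totalAct_ofX, rX_xgen, lX_xgen, mul_one, one_mul]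

theorem totalD_zero_mem {r : ℕ} {g : Total k A H E} (hg : g ∈ totalGen k A H E r) :
    R.totalD 0 g ∈ partialSum k A H E {p | p.1 < r} Set.univ := by
  obtain ⟨s, hs, as, rfl⟩ := hg
  cases r with
  | zero =>
    rw [totalD_zero_ofX_zero]
    exact ofY_mem (Set.mem_univ s) _
  | succ r =>
    rw [totalD_zero_ofX_succ]
    exact ofX_mem r.lt_succ_self _

theorem exists_eq_rowH {r : ℕ} {g : Total k A H E} (hg : g ∈ totalGen k A H E r) :
    ∃ z ∈ partialSum k A H E {p | p.1 < r} Set.univ, g = R.rowH z := by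
  obtain ⟨s, hs, as, rfl⟩ := hg
  cases r with
  | zero =>
    obtain rfl : as = fun i => i.elim0 := Subsingleton.elim _ _
    refine ⟨ofY s (ygen 1 hs 1), ofY_mem (Set.mem_univ s) _, ?_⟩
    rw [rowH_ofY, R.sig0_eq, S.hE_one]
  | succ r => exact ⟨_, ofX_mem r.lt_succ_self _, by rw [rowH_ofX, ← R.xgen_succ_eq_sig r s]⟩

theorem mk_totalD_mul_mk_totalD :
    PowerSeries.mk R.totalD * PowerSeries.mk R.totalD = 0 := by
  refine mk_mul_mk_eq_zero (F := fun r => partialSum k A H E {p | p.1 < r} Set.univ)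
    R.totalD_zero_mul_rowH R.totalAct_mul_totalD (fun x hx i j => ?_) R.partialSum_succ_le
    exists_mem_partialSum_fst_lt (fun _ _ hg => R.totalD_zero_mem hg)
    (fun _ _ hg => R.exists_eq_rowH hg) ?_
  · have le_ker : partialSum k A H E {p | p.1 < 0} Set.univ ≤
        LinearMap.ker (R.totalD i * R.totalD j) :=
      partialSum_le (fun r _ hr => absurd hr r.not_lt_zero) fun s _ => R.totalD_totalD_ofY i j s
    exact le_ker hx
  · rintro r _ ⟨s, hs, as, rfl⟩ l hl
    exact R.totalD_xgen hl r s hs as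

end ResData

end Total

section TotalHomotopy

variable {k A H E : Type} [CommRing k] [Ring A] [Algebra k A] [Ring H] [HopfAlgebra k H]
  [Ring E] [Algebra k E]

namespace Total

variable (slY : ∀ l s : ℕ, Yc k H E s →ₗ[k] Xc k A H E l (s - l))
    (slX : ∀ l r s : ℕ, Xc k A H E r s →ₗ[k] Xc k A H E (r + l + 1) (s - l))

/-- The component of degree `l` of the homotopy of the total module: the maps `σ^l` defined on the
summands `X_{rs}` and `Y_s` with `l ≤ s`. -/
def homotopy (l : ℕ) : Module.End k (Total k A H E) :=
  desc (fun r s => if l ≤ s then ofX (r + l + 1) (s - l) ∘ₗ slX l r s else 0)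
    fun s => if l ≤ s then ofX l (s - l) ∘ₗ slY l s else 0

variable {l r s : ℕ}

theorem homotopy_ofX (hls : l ≤ s) (x : Xc k A H E r s) :
    homotopy slY slX l (ofX r s x) = ofX (r + l + 1) (s - l) (slX l r s x) := by
  rw [homotopy, desc_ofX, if_pos hls, LinearMap.comp_apply]

theorem homotopy_ofX_of_lt (hsl : s < l) (x : Xc k A H E r s) :
    homotopy slY slX l (ofX r s x) = 0 := by
  rw [homotopy, desc_ofX, if_neg hsl.not_ge, LinearMap.zero_apply]

theorem homotopy_ofY (hls : l ≤ s) (y : Yc k H E s) :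
    homotopy slY slX l (ofY s y) = ofX l (s - l) (slY l s y) := by
  rw [homotopy, desc_ofY, if_pos hls, LinearMap.comp_apply]

theorem homotopy_ofY_of_lt (hsl : s < l) (y : Yc k H E s) :
    homotopy slY slX l (ofY s y) = 0 := by
  rw [homotopy, desc_ofY, if_neg hsl.not_ge, LinearMap.zero_apply]

theorem homotopy_mem_rowLT (l n : ℕ) {x : Total k A H E} (hx : x ∈ rowLT k A H E n) :
    homotopy slY slX l x ∈ rowLT k A H E (n - l) := by
  suffices rowLT k A H E n ≤ (rowLT k A H E (n - l)).comap (homotopy slY slX l) from this hx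
  refine partialSum_le (fun r s (hs : s < n) x => ?_) fun s (hs : s < n) y => ?_ <;>
    rw [Submodule.mem_comap] <;> rcases Nat.lt_or_ge s l with hsl | hls
  · rw [homotopy_ofX_of_lt _ _ hsl]
    exact zero_mem _
  · rw [homotopy_ofX _ _ hls]
    exact ofX_mem_rowLT (by omega) _
  · rw [homotopy_ofY_of_lt _ _ hsl]
    exact zero_mem _
  · rw [homotopy_ofY _ _ hls]
    exact ofX_mem_rowLT (by omega) _

end Total

namespace ResData

open Total

variable {S : CrossedProduct k A H E} (R : ResData k A H E S)

section

variable (slY : ∀ l s : ℕ, Yc k H E s →ₗ[k] Xc k A H E l (s - l))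
  (slX : ∀ l r s : ℕ, Xc k A H E r s →ₗ[k] Xc k A H E (r + l + 1) (s - l)) {i j n : ℕ}
  {x : Total k A H E}

theorem totalD_homotopy_of_mem_rowLT (hn : n ≤ i + j) (hx : x ∈ rowLT k A H E n) :
    R.totalD i (homotopy slY slX j x) = 0 := by
  have := R.totalD_mem_rowLT i _ (homotopy_mem_rowLT slY slX j n hx)
  rw [show n - j - i = 0 by omega] at this
  exact eq_zero_of_mem_rowLT_zero this

theorem homotopy_totalD_of_mem_rowLT (hn : n ≤ i + j) (hx : x ∈ rowLT k A H E n) :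
    homotopy slY slX i (R.totalD j x) = 0 := by
  have := homotopy_mem_rowLT slY slX i _ (R.totalD_mem_rowLT j n hx)
  rw [show n - j - i = 0 by omega] at this
  exact eq_zero_of_mem_rowLT_zero this

end

theorem sub_one_add_one_of_one_le {l : ℕ} (hl : 1 ≤ l) : l - 1 + 1 = l := Nat.sub_add_cancel hl

theorem val_add_sub_val_sub_one {l : ℕ} (i : Fin l) : (i : ℕ) + (l - i) - 1 = l - 1 := by omega

theorem sub_val_sub_sub_val {l : ℕ} (s : ℕ) (i : Fin l) : s - (i : ℕ) - (l - i) = s - l := by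
  omega

theorem add_val_add_one_add_sub_val_sub_one {l : ℕ} (r : ℕ) (i : Fin l) :
    r + (i : ℕ) + 1 + (l - i) - 1 = r + l := by
  omega

/-- The recursive definition of the maps `σ^l` on `Y_s` and on `X_{rs}` in terms of `σ⁰` and
of the `d^l`. -/
structure IsHomotopy (slY : ∀ l s : ℕ, Yc k H E s →ₗ[k] Xc k A H E l (s - l))
    (slX : ∀ l r s : ℕ, Xc k A H E r s →ₗ[k] Xc k A H E (r + l + 1) (s - l)) : Prop where
  slY_zero : ∀ s, slY 0 s = R.sig0 s
  slX_zero : ∀ r s, slX 0 r s = R.sig r s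
  slY_eq : ∀ (l s : ℕ) (hl : 1 ≤ l), l ≤ s →
    slY l s = -∑ i : Fin l,
      xcast (sub_one_add_one_of_one_le hl) rfl ∘ₗ R.sig (l - 1) (s - l) ∘ₗ
        xcast (val_add_sub_val_sub_one i) (sub_val_sub_sub_val s i) ∘ₗ
        R.dl (l - (i : ℕ)) (i : ℕ) (s - (i : ℕ)) ∘ₗ slY (i : ℕ) s
  slX_eq : ∀ l r s : ℕ, 1 ≤ l → l ≤ s →
    slX l r s = -∑ i : Fin l,
      R.sig (r + l) (s - l) ∘ₗ
        xcast (add_val_add_one_add_sub_val_sub_one r i) (sub_val_sub_sub_val s i) ∘ₗ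
        R.dl (l - (i : ℕ)) (r + (i : ℕ) + 1) (s - (i : ℕ)) ∘ₗ slX (i : ℕ) r s

variable {R} {slY : ∀ l s : ℕ, Yc k H E s →ₗ[k] Xc k A H E l (s - l)}
  {slX : ∀ l r s : ℕ, Xc k A H E r s →ₗ[k] Xc k A H E (r + l + 1) (s - l)}

namespace IsHomotopy

theorem homotopy_zero (hsl : R.IsHomotopy slY slX) : homotopy slY slX 0 = R.rowH := by
  refine hom_ext (fun r s x => ?_) fun s y => ?_
  · rw [homotopy_ofX _ _ s.zero_le, rowH_ofX, hsl.slX_zero]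
    rfl
  · rw [homotopy_ofY _ _ s.zero_le, rowH_ofY, hsl.slY_zero]
    rfl

theorem homotopy_ofX_rec (hsl : R.IsHomotopy slY slX) {l r s : ℕ} (hl : 1 ≤ l) (hls : l ≤ s)
    (x : Xc k A H E r s) :
    homotopy slY slX l (ofX r s x) = -∑ i ∈ Finset.range l,
      R.rowH (R.totalD (l - i) (homotopy slY slX i (ofX r s x))) := by
  rw [homotopy_ofX _ _ hls, hsl.slX_eq l r s hl hls, LinearMap.neg_apply, LinearMap.sum_apply,
    map_neg, map_sum, Finset.sum_range]
  refine congrArg _ (Finset.sum_congr rfl fun i _ => ?_)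
  rw [homotopy_ofX _ _ (by omega)]
  exact R.ofX_sig_xcast_dl (by omega) (by omega) _ _ _

theorem homotopy_ofY_rec (hsl : R.IsHomotopy slY slX) {l s : ℕ} (hl : 1 ≤ l) (hls : l ≤ s)
    (y : Yc k H E s) :
    homotopy slY slX l (ofY s y) = -∑ i ∈ Finset.range l,
      R.rowH (R.totalD (l - i) (homotopy slY slX i (ofY s y))) := by
  rw [homotopy_ofY _ _ hls, hsl.slY_eq l s hl hls, LinearMap.neg_apply, LinearMap.sum_apply,
    map_neg, map_sum, Finset.sum_range]
  refine congrArg _ (Finset.sum_congr rfl fun i _ => ?_)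
  rw [homotopy_ofY _ _ (by omega), LinearMap.comp_apply, ofX_xcast]
  exact R.ofX_sig_xcast_dl (by omega) (by omega) _ _ _

theorem homotopy_rec (hsl : R.IsHomotopy slY slX) (l : ℕ) (hl : 1 ≤ l) :
    homotopy slY slX l =
      -∑ i ∈ Finset.range l, homotopy slY slX 0 * R.totalD (l - i) * homotopy slY slX i := by
  rw [hsl.homotopy_zero]
  have eq_zero {s : ℕ} (hs : s < l) {x : Total k A H E} (hx : x ∈ rowLT k A H E (s + 1)) :
      ∑ i ∈ Finset.range l, R.rowH (R.totalD (l - i) (homotopy slY slX i x)) = 0 :=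
    Finset.sum_eq_zero fun i hi => by
      have := Finset.mem_range.1 hi
      rw [R.totalD_homotopy_of_mem_rowLT slY slX (by omega) hx, map_zero]
  refine hom_ext (fun r s x => ?_) fun s y => ?_ <;>
    simp only [LinearMap.neg_apply, LinearMap.sum_apply, Module.End.mul_apply] <;>
    rcases Nat.lt_or_ge s l with hsl' | hls
  · rw [homotopy_ofX_of_lt _ _ hsl', eq_zero hsl' (ofX_mem_rowLT s.lt_succ_self x), neg_zero]
  · exact hsl.homotopy_ofX_rec hl hls x
  · rw [homotopy_ofY_of_lt _ _ hsl', eq_zero hsl' (ofY_mem_rowLT s.lt_succ_self y), neg_zero]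
  · exact hsl.homotopy_ofY_rec hl hls y

theorem mk_totalD_mul_mk_homotopy (hsl : R.IsHomotopy slY slX) :
    PowerSeries.mk R.totalD * PowerSeries.mk (homotopy slY slX) +
      PowerSeries.mk (homotopy slY slX) * PowerSeries.mk R.totalD = 1 :=
  mk_mul_mk_add_mk_mul_mk_eq_one (by rw [hsl.homotopy_zero, R.totalD_zero_mul_rowH])
    R.mk_totalD_mul_mk_totalD hsl.homotopy_rec

end IsHomotopy

variable (R) in
theorem sum_totalD_sum_totalD {n : ℕ} {x : Total k A H E} (hx : x ∈ rowLT k A H E n) :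
    ∑ i ∈ Finset.range n, R.totalD i (∑ j ∈ Finset.range n, R.totalD j x) = 0 := by
  rw [sum_apply_sum_eq_sum_coeff fun i j hn => R.totalD_totalD_of_mem_rowLT hn hx]
  simp only [R.mk_totalD_mul_mk_totalD, map_zero, LinearMap.zero_apply, Finset.sum_const_zero]

theorem IsHomotopy.sum_totalD_sum_homotopy (hsl : R.IsHomotopy slY slX) {n : ℕ} (hn : 0 < n)
    {x : Total k A H E} (hx : x ∈ rowLT k A H E n) :
    ∑ i ∈ Finset.range n, R.totalD i (∑ j ∈ Finset.range n, homotopy slY slX j x) +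
      ∑ i ∈ Finset.range n, homotopy slY slX i (∑ j ∈ Finset.range n, R.totalD j x) = x := by
  rw [sum_apply_sum_eq_sum_coeff fun i j hn => R.totalD_homotopy_of_mem_rowLT slY slX hn hx,
    sum_apply_sum_eq_sum_coeff fun i j hn => R.homotopy_totalD_of_mem_rowLT slY slX hn hx]
  simp only [← Finset.sum_add_distrib, ← LinearMap.add_apply, ← map_add,
    hsl.mk_totalD_mul_mk_homotopy, PowerSeries.coeff_one]
  rw [← LinearMap.sum_apply, Finset.sum_ite_eq', if_pos (Finset.mem_range.2 hn),
    Module.End.one_apply]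

end ResData

end TotalHomotopy

/-! ### The complex `X_*` -/

section TotalDegree

variable {k A H E : Type} [CommRing k] [Ring A] [Algebra k A] [Ring H] [HopfAlgebra k H]
  [Ring E] [Algebra k E]

namespace XT

variable (k A H E) in
/-- The inclusion of the summand `X_{n-s,s}` of `X_n`. -/
def of (n : ℕ) (s : Fin (n + 1)) : Xc k A H E (n - (s : ℕ)) (s : ℕ) →ₗ[k] XT k A H E n :=
  DirectSum.lof k (Fin (n + 1)) (fun s : Fin (n + 1) => Xc k A H E (n - (s : ℕ)) (s : ℕ)) s

variable {N : Type} [AddCommGroup N] [Module k N] {n : ℕ}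

theorem toModule_of (f : ∀ s : Fin (n + 1), Xc k A H E (n - (s : ℕ)) (s : ℕ) →ₗ[k] N)
    (s : Fin (n + 1)) (x : Xc k A H E (n - (s : ℕ)) (s : ℕ)) :
    DirectSum.toModule k (Fin (n + 1)) N f (of k A H E n s x) = f s x :=
  DirectSum.toModule_lof k (φ := f) s x

theorem hom_ext {f g : XT k A H E n →ₗ[k] N}
    (h : ∀ s x, f (of k A H E n s x) = g (of k A H E n s x)) : f = g :=
  DirectSum.linearMap_ext k fun s => LinearMap.ext fun x => h s x

end XT

namespace Total

variable (k A H E) in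
/-- The inclusion of `X_n` into the total module. -/
def ofXT (n : ℕ) : XT k A H E n →ₗ[k] Total k A H E :=
  DirectSum.toModule k (Fin (n + 1)) (Total k A H E) fun s => ofX (n - (s : ℕ)) s

theorem ofXT_of (n : ℕ) (s : Fin (n + 1)) (x : Xc k A H E (n - (s : ℕ)) (s : ℕ)) :
    ofXT k A H E n (XT.of k A H E n s x) = ofX (n - (s : ℕ)) s x :=
  XT.toModule_of _ s x

theorem ofXT_mem_rowLT {n N : ℕ} (hn : n < N) (x : XT k A H E n) :
    ofXT k A H E n x ∈ rowLT k A H E N := by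
  have mkQ_ofXT : (rowLT k A H E N).mkQ ∘ₗ ofXT k A H E n = 0 := XT.hom_ext fun s x => by
    refine (Submodule.Quotient.mk_eq_zero _).2 ?_
    rw [ofXT_of]
    exact ofX_mem_rowLT (by omega) x
  exact (Submodule.Quotient.mk_eq_zero _).1 (LinearMap.congr_fun mkQ_ofXT x)

variable (k A H E) in
/-- The projection of the total module onto `X_n`. -/
def projX (n : ℕ) : Total k A H E →ₗ[k] XT k A H E n :=
  desc (fun r s => if h : r + s = n then
      XT.of k A H E n ⟨s, by omega⟩ ∘ₗ xcast (by dsimp only; omega) rfl else 0)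
    fun _ => 0

theorem projX_ofXT {n : ℕ} (x : XT k A H E n) : projX k A H E n (ofXT k A H E n x) = x := by
  suffices projX k A H E n ∘ₗ ofXT k A H E n = LinearMap.id from LinearMap.congr_fun this x
  refine XT.hom_ext fun s x => ?_
  rw [LinearMap.comp_apply, ofXT_of, projX, desc_ofX, dif_pos (by omega)]
  rfl

theorem projX_ofY (n s : ℕ) (y : Yc k H E s) : projX k A H E n (ofY s y) = 0 := by
  rw [projX, desc_ofY, LinearMap.zero_apply]

variable (k A H E) in
/-- The projection of the total module onto `Y_n`. -/
def projY (n : ℕ) : Total k A H E →ₗ[k] Yc k H E n :=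
  desc (fun _ _ => 0) fun s =>
    DirectSum.component k ℕ (fun s => Yc k H E s) n ∘ₗ DirectSum.lof k ℕ (fun s => Yc k H E s) s

theorem projY_ofY {n : ℕ} (y : Yc k H E n) : projY k A H E n (ofY n y) = y := by
  rw [projY, desc_ofY, LinearMap.comp_apply]
  exact DirectSum.component.lof_self k n y

theorem projY_ofXT (m n : ℕ) (x : XT k A H E n) : projY k A H E m (ofXT k A H E n x) = 0 := by
  suffices projY k A H E m ∘ₗ ofXT k A H E n = 0 from LinearMap.congr_fun this x
  refine XT.hom_ext fun s x => ?_
  rw [LinearMap.comp_apply, ofXT_of, projY, desc_ofX, LinearMap.zero_apply, LinearMap.zero_apply]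

end Total

theorem sum_range_eq_sum_fin {M : Type*} [AddCommMonoid M] {f : ℕ → M} {s N : ℕ} (hN : s < N)
    (hf : ∀ l, s < l → f l = 0) :
    ∑ l ∈ Finset.range N, f l = ∑ l : Fin (s + 1), f l := by
  rw [← Finset.sum_range]
  exact (Finset.sum_subset (Finset.range_mono hN) fun l _ hl =>
    hf l (by rw [Finset.mem_range] at hl; omega)).symm

/-- The part `∑ σ^l : X_n → X_{n+1}` of the contracting homotopy of `X_*`. -/
def homX (slX : ∀ l r s : ℕ, Xc k A H E r s →ₗ[k] Xc k A H E (r + l + 1) (s - l)) (n : ℕ) :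
    XT k A H E n →ₗ[k] XT k A H E (n + 1) :=
  DirectSum.toModule k (Fin (n + 1)) (XT k A H E (n + 1)) fun s =>
    ∑ l : Fin ((s : ℕ) + 1),
      XT.of k A H E (n + 1) ⟨(s : ℕ) - (l : ℕ), by have := s.isLt; have := l.isLt; omega⟩ ∘ₗ
        xcast
          (show (n - (s : ℕ)) + (l : ℕ) + 1 = n + 1 - ((s : ℕ) - (l : ℕ)) by
            have := s.isLt; have := l.isLt; omega)
          rfl ∘ₗ
        slX (l : ℕ) (n - (s : ℕ)) (s : ℕ)

/-- The map `∑ σ^l : Y_n → X_n`. -/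
def homY (slY : ∀ l s : ℕ, Yc k H E s →ₗ[k] Xc k A H E l (s - l)) (n : ℕ) :
    Yc k H E n →ₗ[k] XT k A H E n :=
  ∑ l : Fin (n + 1),
    XT.of k A H E n ⟨n - (l : ℕ), by omega⟩ ∘ₗ
      xcast (show (l : ℕ) = n - (n - (l : ℕ)) by have := l.isLt; omega) rfl ∘ₗ slY (l : ℕ) n

section Homotopy

variable (slY : ∀ l s : ℕ, Yc k H E s →ₗ[k] Xc k A H E l (s - l))
  (slX : ∀ l r s : ℕ, Xc k A H E r s →ₗ[k] Xc k A H E (r + l + 1) (s - l))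

open Total

theorem sum_homotopy_ofXT {n N : ℕ} (hN : n < N) (x : XT k A H E n) :
    ∑ l ∈ Finset.range N, homotopy slY slX l (ofXT k A H E n x) =
      ofXT k A H E (n + 1) (homX slX n x) := by
  suffices (∑ l ∈ Finset.range N, homotopy slY slX l) ∘ₗ ofXT k A H E n =
      ofXT k A H E (n + 1) ∘ₗ homX slX n by
    simpa only [LinearMap.comp_apply, LinearMap.sum_apply] using LinearMap.congr_fun this x
  refine XT.hom_ext fun s x => ?_
  rw [LinearMap.comp_apply, LinearMap.comp_apply, ofXT_of, LinearMap.sum_apply,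
    sum_range_eq_sum_fin (by omega) fun l hl => homotopy_ofX_of_lt slY slX hl x, homX,
    XT.toModule_of, LinearMap.sum_apply, map_sum]
  refine Finset.sum_congr rfl fun l _ => ?_
  rw [LinearMap.comp_apply, LinearMap.comp_apply, ofXT_of, ofX_xcast,
    homotopy_ofX _ _ (by omega)]

theorem sum_homotopy_ofY {n N : ℕ} (hN : n < N) (y : Yc k H E n) :
    ∑ l ∈ Finset.range N, homotopy slY slX l (ofY n y) = ofXT k A H E n (homY slY n y) := by
  rw [sum_range_eq_sum_fin hN fun l hl => homotopy_ofY_of_lt slY slX hl y, homY,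
    LinearMap.sum_apply, map_sum]
  refine Finset.sum_congr rfl fun l _ => ?_
  rw [LinearMap.comp_apply, LinearMap.comp_apply, ofXT_of, homotopy_ofY _ _ (by omega)]
  exact (ofX_xcast _ _ _).symm

end Homotopy

namespace ResData

open Total

variable {S : CrossedProduct k A H E} (R : ResData k A H E S)

theorem muT_of_self {n : ℕ} {s : Fin (n + 1)} (hs : (s : ℕ) = n)
    (x : Xc k A H E (n - (s : ℕ)) (s : ℕ)) :
    muT R n (XT.of k A H E n s x) = R.mu n (xcast (by omega) hs x) := by
  rw [muT, XT.toModule_of, dif_pos hs, LinearMap.comp_apply]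

theorem muT_of_ne {n : ℕ} {s : Fin (n + 1)} (hs : (s : ℕ) ≠ n)
    (x : Xc k A H E (n - (s : ℕ)) (s : ℕ)) : muT R n (XT.of k A H E n s x) = 0 := by
  rw [muT, XT.toModule_of, dif_neg hs, LinearMap.zero_apply]

theorem totalD_zero_ofX_eq_ofY {r s n : ℕ} (hr : r = 0) (hs : s = n) (x : Xc k A H E r s) :
    R.totalD 0 (ofX r s x) = ofY n (R.mu n (xcast hr hs x)) := by
  subst hr hs
  exact R.totalD_zero_ofX_zero s x

theorem sum_totalD_ofXT_zero {N : ℕ} (hN : 0 < N) (x : XT k A H E 0) :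
    ∑ l ∈ Finset.range N, R.totalD l (ofXT k A H E 0 x) = ofY 0 (muT R 0 x) := by
  suffices (∑ l ∈ Finset.range N, R.totalD l) ∘ₗ ofXT k A H E 0 = ofY 0 ∘ₗ muT R 0 by
    simpa only [LinearMap.comp_apply, LinearMap.sum_apply] using LinearMap.congr_fun this x
  refine XT.hom_ext fun s x => ?_
  have hs : (s : ℕ) = 0 := by omega
  rw [LinearMap.comp_apply, LinearMap.comp_apply, ofXT_of, LinearMap.sum_apply,
    Finset.sum_eq_single_of_mem 0 (Finset.mem_range.2 hN) fun l _ hl =>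
      R.totalD_ofX_of_lt (by omega) x,
    R.muT_of_self hs, R.totalD_zero_ofX_eq_ofY (by omega) hs]

theorem totalD_ofXT_of {n : ℕ} (s : Fin (n + 2)) (l : Fin ((s : ℕ) + 1))
    (x : Xc k A H E (n + 1 - (s : ℕ)) (s : ℕ)) :
    R.totalD l (ofX (n + 1 - (s : ℕ)) s x) =
      ofXT k A H E n ((if h : 0 < (n + 1 - (s : ℕ)) + (l : ℕ) then
        XT.of k A H E n ⟨(s : ℕ) - (l : ℕ), by have := s.isLt; have := l.isLt; omega⟩ ∘ₗ
          xcast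
            (show (n + 1 - (s : ℕ)) + (l : ℕ) - 1 = n - ((s : ℕ) - (l : ℕ)) by
              have := s.isLt; have := l.isLt; omega)
            rfl ∘ₗ R.dl (l : ℕ) (n + 1 - (s : ℕ)) (s : ℕ)
      else 0) x) +
        if l = 0 then ofY (n + 1) (muT R (n + 1) (XT.of k A H E (n + 1) s x)) else 0 := by
  by_cases h : 0 < (n + 1 - (s : ℕ)) + (l : ℕ)
  · have muT_eq_zero : (if l = 0 then ofY (n + 1) (muT R (n + 1) (XT.of k A H E (n + 1) s x))
        else 0) = (0 : Total k A H E) := by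
      split_ifs with hl
      · subst hl
        rw [R.muT_of_ne (by rw [Fin.val_zero] at h; omega), map_zero]
      · rfl
    rw [muT_eq_zero, add_zero, dif_pos h, R.totalD_ofX (by omega) h, LinearMap.comp_apply,
      LinearMap.comp_apply, ofXT_of, ofX_xcast]
  · have hl : (l : ℕ) = 0 := by omega
    have hs : (s : ℕ) = n + 1 := by omega
    rw [dif_neg h, LinearMap.zero_apply, map_zero, zero_add, if_pos (Fin.ext hl),
      R.muT_of_self hs, hl, R.totalD_zero_ofX_eq_ofY (by omega) hs]

theorem sum_totalD_ofXT_succ {n N : ℕ} (hN : n + 1 < N) (x : XT k A H E (n + 1)) :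
    ∑ l ∈ Finset.range N, R.totalD l (ofXT k A H E (n + 1) x) =
      ofXT k A H E n (dT R n x) + ofY (n + 1) (muT R (n + 1) x) := by
  suffices (∑ l ∈ Finset.range N, R.totalD l) ∘ₗ ofXT k A H E (n + 1) =
      ofXT k A H E n ∘ₗ dT R n + ofY (n + 1) ∘ₗ muT R (n + 1) by
    simpa only [LinearMap.comp_apply, LinearMap.sum_apply, LinearMap.add_apply] using
      LinearMap.congr_fun this x
  refine XT.hom_ext fun s x => ?_
  rw [LinearMap.add_apply, LinearMap.comp_apply, LinearMap.comp_apply, LinearMap.comp_apply,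
    ofXT_of, LinearMap.sum_apply,
    sum_range_eq_sum_fin (by omega) fun l hl => R.totalD_ofX_of_lt hl x,
    Finset.sum_congr rfl fun l _ => R.totalD_ofXT_of s l x, Finset.sum_add_distrib,
    Finset.sum_ite_eq' Finset.univ, if_pos (Finset.mem_univ _), ← map_sum,
    ← LinearMap.sum_apply, dT, XT.toModule_of]
  rfl

theorem sum_totalD_ofY_succ {s N : ℕ} (hN : 1 < N) (y : Yc k H E (s + 1)) :
    ∑ l ∈ Finset.range N, R.totalD l (ofY (s + 1) y) = ofY s (R.del s y) := by
  rw [Finset.sum_eq_single_of_mem 1 (Finset.mem_range.2 hN) fun l _ hl =>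
    R.totalD_ofY_of_ne_one hl _ y, totalD_one_ofY_succ]

theorem muT_dT_add_del_muT (n : ℕ) (x : XT k A H E (n + 1)) :
    muT R n (dT R n x) + R.del n (muT R (n + 1) x) = 0 := by
  have total := R.sum_totalD_sum_totalD (ofXT_mem_rowLT (Nat.lt_add_one (n + 1)) x)
  simp only [R.sum_totalD_ofXT_succ (Nat.lt_add_one _), map_add, Finset.sum_add_distrib,
    R.sum_totalD_ofY_succ (Nat.lt_add_of_pos_left n.succ_pos)] at total
  cases n with
  | zero =>
    rw [R.sum_totalD_ofXT_zero (by omega)] at total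
    simpa only [map_add, projY_ofY, map_zero] using congrArg (projY k A H E 0) total
  | succ n =>
    rw [R.sum_totalD_ofXT_succ (by omega)] at total
    simpa only [map_add, projY_ofY, projY_ofXT, zero_add, map_zero] using
      congrArg (projY k A H E (n + 1)) total

namespace IsHomotopy

variable {R} {slY : ∀ l s : ℕ, Yc k H E s →ₗ[k] Xc k A H E l (s - l)}
  {slX : ∀ l r s : ℕ, Xc k A H E r s →ₗ[k] Xc k A H E (r + l + 1) (s - l)}

theorem dT_homX_zero (hsl : R.IsHomotopy slY slX) (x : XT k A H E 0) :
    dT R 0 (homX slX 0 x) + homY slY 0 (muT R 0 x) = x := by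
  have total := hsl.sum_totalD_sum_homotopy Nat.two_pos (ofXT_mem_rowLT Nat.two_pos x)
  rw [sum_homotopy_ofXT _ _ Nat.two_pos, R.sum_totalD_ofXT_succ Nat.one_lt_two,
    R.sum_totalD_ofXT_zero Nat.two_pos, sum_homotopy_ofY _ _ Nat.two_pos] at total
  simpa only [map_add, projX_ofXT, projX_ofY, add_zero] using congrArg (projX k A H E 0) total

theorem dT_homX_succ (hsl : R.IsHomotopy slY slX) (n : ℕ) (x : XT k A H E (n + 1)) :
    dT R (n + 1) (homX slX (n + 1) x) + homX slX n (dT R n x) + homY slY (n + 1) (muT R (n + 1) x)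
      = x := by
  have total := hsl.sum_totalD_sum_homotopy (n := n + 3) (by omega) (ofXT_mem_rowLT (by omega) x)
  simp only [sum_homotopy_ofXT slY slX (show n + 1 < n + 3 by omega),
    R.sum_totalD_ofXT_succ (show n + 2 < n + 3 by omega),
    R.sum_totalD_ofXT_succ (show n + 1 < n + 3 by omega), map_add, Finset.sum_add_distrib,
    sum_homotopy_ofXT slY slX (show n < n + 3 by omega),
    sum_homotopy_ofY slY slX (show n + 1 < n + 3 by omega)] at total
  rw [add_assoc]
  simpa only [map_add, projX_ofXT, projX_ofY, add_zero] using
    congrArg (projX k A H E (n + 1)) total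

theorem dT_homY_add_homY_del (hsl : R.IsHomotopy slY slX) (n : ℕ) (y : Yc k H E (n + 1)) :
    dT R n (homY slY (n + 1) y) + homY slY n (R.del n y) = 0 := by
  have total := hsl.sum_totalD_sum_homotopy (n := n + 2) (by omega)
    (ofY_mem_rowLT (Nat.lt_add_one (n + 1)) y)
  rw [sum_homotopy_ofY _ _ (by omega), R.sum_totalD_ofXT_succ (by omega),
    R.sum_totalD_ofY_succ (by omega), sum_homotopy_ofY _ _ (by omega)] at total
  simpa only [map_add, projX_ofXT, projX_ofY, add_zero] using congrArg (projX k A H E n) total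

end IsHomotopy

end ResData

end TotalDegree

section Resolution

variable {k A H E : Type} [CommRing k] [Ring A] [Algebra k A] [Ring H] [HopfAlgebra k H]
  [Ring E] [Algebra k E]

theorem xcast_rX {r r' s s' : ℕ} (hr : r = r') (hs : s = s') (e : E) (x : Xc k A H E r s) :
    xcast hr hs (rX e x) = rX e (xcast hr hs x) := by
  subst hr hs
  rfl

theorem xcast_xgen {r r' s s' : ℕ} (hr : r = r') (hs : s = s') (e : E) (v : Fin s → H)
    (w : Fin r → A) (e' : E) :
    xcast hr hs (xgen (k := k) e v w e') =
      xgen e (fun i => v (i.cast hs.symm)) (fun i => w (i.cast hr.symm)) e' := by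
  subst hr hs
  rfl

namespace XT

theorem rT_of (e : E) (n : ℕ) (s : Fin (n + 1)) (x : Xc k A H E (n - (s : ℕ)) (s : ℕ)) :
    rT e n (of k A H E n s x) = of k A H E n s (rX e x) :=
  toModule_of _ s x

variable (k A H E) in
/-- The generators `e ⊗ 𝐡 ⊗ 𝐚 ⊗ 1` of `X_n` as a right `E`-module. -/
def gen (n : ℕ) : Set (XT k A H E n) :=
  {x | ∃ (s : Fin (n + 1)) (e : E) (hs : Fin (s : ℕ) → H) (as : Fin (n - (s : ℕ)) → A),
    x = of k A H E n s (xgen e hs as 1)}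

theorem span_rT_gen (n : ℕ) :
    Submodule.span k {x | ∃ e : E, ∃ g ∈ gen k A H E n, rT e n g = x} = ⊤ := by
  rw [← Submodule.ker_mkQ (Submodule.span k _), LinearMap.ker_eq_top]
  refine hom_ext fun s => LinearMap.congr_fun (g := 0) (f := Submodule.mkQ _ ∘ₗ of k A H E n s) ?_
  refine xgen_ext fun e hs as e' => (Submodule.Quotient.mk_eq_zero _).2 (Submodule.subset_span ?_)
  exact ⟨e', _, ⟨s, e, hs, as, rfl⟩, by rw [rT_of, rX_xgen, one_mul]⟩

variable (k A H E) in
/-- The identification of `X_0` with its only summand `X_{00}`. -/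
def toX00 : XT k A H E 0 →ₗ[k] Xc k A H E 0 0 :=
  DirectSum.toModule k (Fin 1) (Xc k A H E 0 0) fun s => xcast (by omega) (by omega)

theorem toX00_of (x : Xc k A H E 0 0) : toX00 k A H E (of k A H E 0 0 x) = x :=
  toModule_of _ 0 x

theorem of_toX00 (x : XT k A H E 0) : of k A H E 0 0 (toX00 k A H E x) = x := by
  suffices of k A H E 0 0 ∘ₗ toX00 k A H E = LinearMap.id from LinearMap.congr_fun this x
  refine hom_ext fun s x => ?_
  obtain rfl : s = 0 := Subsingleton.elim (α := Fin 1) _ _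
  rw [LinearMap.comp_apply, toX00_of, LinearMap.id_apply]

theorem hom_ext_zero {N : Type} [AddCommGroup N] [Module k N] {f g : XT k A H E 0 →ₗ[k] N}
    (h : ∀ e e', f (of k A H E 0 0 (xgen e (fun i => i.elim0) (fun i => i.elim0) e')) =
      g (of k A H E 0 0 (xgen e (fun i => i.elim0) (fun i => i.elim0) e'))) : f = g := by
  have comp_of : f ∘ₗ of k A H E 0 0 = g ∘ₗ of k A H E 0 0 := xgen_ext fun e hs as e' => by
    obtain rfl : hs = fun i => i.elim0 := Subsingleton.elim (α := Fin 0 → H) _ _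
    obtain rfl : as = fun i => i.elim0 := Subsingleton.elim (α := Fin 0 → A) _ _
    exact h e e'
  refine LinearMap.ext fun x => ?_
  rw [← of_toX00 x]
  exact LinearMap.congr_fun comp_of _

end XT

namespace ResData

variable {S : CrossedProduct k A H E} (R : ResData k A H E S)

theorem dT_rT (e : E) (n : ℕ) (x : XT k A H E (n + 1)) :
    dT R n (rT e (n + 1) x) = rT e n (dT R n x) := by
  suffices dT R n ∘ₗ rT e (n + 1) = rT e n ∘ₗ dT R n from LinearMap.congr_fun this x
  refine XT.hom_ext fun s x => ?_
  rw [LinearMap.comp_apply, LinearMap.comp_apply, XT.rT_of, dT, XT.toModule_of, XT.toModule_of,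
    LinearMap.sum_apply, LinearMap.sum_apply, map_sum]
  refine Finset.sum_congr rfl fun l _ => ?_
  split_ifs with h
  · have dl_rX := LinearMap.congr_fun (R.dl_rmul l _ _ e) x
    simp only [LinearMap.comp_apply] at dl_rX ⊢
    rw [dl_rX, xcast_rX]
    exact (XT.rT_of e n _ _).symm
  · rw [LinearMap.zero_apply, LinearMap.zero_apply, map_zero]

/-- The idempotent of `X_0` given by the augmentation `X_0 → E` and its section `e ↦ e ⊗ 1`. -/
def augXT : XT k A H E 0 →ₗ[k] XT k A H E 0 :=
  XT.of k A H E 0 0 ∘ₗ R.augX ∘ₗ XT.toX00 k A H E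

theorem augXT_of_xgen (e : E) (hs : Fin 0 → H) (as : Fin 0 → A) (e' : E) :
    R.augXT (XT.of k A H E 0 0 (xgen e hs as e')) =
      XT.of k A H E 0 0 (xgen (e * e') hs as 1) := by
  rw [augXT, LinearMap.comp_apply, LinearMap.comp_apply, XT.toX00_of, augX_xgen]

theorem muT_zero (x : XT k A H E 0) : muT R 0 x = R.mu 0 (XT.toX00 k A H E x) := by
  suffices muT R 0 = R.mu 0 ∘ₗ XT.toX00 k A H E from LinearMap.congr_fun this x
  refine XT.hom_ext fun s x => ?_
  obtain rfl : s = 0 := Subsingleton.elim (α := Fin 1) _ _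
  rw [LinearMap.comp_apply, XT.toX00_of, R.muT_of_self rfl]
  rfl

theorem augXT_dT (x : XT k A H E 1) : R.augXT (dT R 0 x) = 0 := by
  have mu_dT : R.mu 0 (XT.toX00 k A H E (dT R 0 x)) = R.del 0 (-muT R 1 x) := by
    rw [← R.muT_zero, map_neg]
    exact eq_neg_of_add_eq_zero_left (R.muT_dT_add_del_muT 0 x)
  rw [augXT, LinearMap.comp_apply, LinearMap.comp_apply, R.augX_eq_zero mu_dT, map_zero]

theorem muT_gen {sY : ∀ s : ℕ, Yc k H E s →ₗ[k] Yc k H E (s + 1)} (hsY : IsHomotopyY sY) {n : ℕ}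
    {x : XT k A H E n} (hx : x ∈ XT.gen k A H E n) : sY n (muT R n x) = 0 := by
  obtain ⟨s, e, hs, as, rfl⟩ := hx
  by_cases hsn : (s : ℕ) = n
  · rw [R.muT_of_self hsn, xcast_xgen, R.mu_xgen_one, hsY.apply_ygen_one]
  · rw [R.muT_of_ne hsn, map_zero]

namespace IsHomotopy

variable {R} {sY : ∀ s : ℕ, Yc k H E s →ₗ[k] Yc k H E (s + 1)}
  {slY : ∀ l s : ℕ, Yc k H E s →ₗ[k] Xc k A H E l (s - l)}
  {slX : ∀ l r s : ℕ, Xc k A H E r s →ₗ[k] Xc k A H E (r + l + 1) (s - l)}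

theorem homY_zero (hsl : R.IsHomotopy slY slX) (y : Yc k H E 0) :
    homY slY 0 y = XT.of k A H E 0 0 (R.sig0 0 y) := by
  rw [homY, LinearMap.sum_apply, Fin.sum_univ_one, ← hsl.slY_zero]
  rfl

theorem dT_sbar_zero (hsl : R.IsHomotopy slY slX) (hsY : IsHomotopyY sY) (x : XT k A H E 0) :
    dT R 0 (sbar R slY slX sY 0 x) = x - R.augXT x := by
  have dT_homY (y : Yc k H E 1) :
      dT R 0 (homY slY 1 y) = -XT.of k A H E 0 0 (R.sig0 0 (R.del 0 y)) := by
    rw [← hsl.homY_zero]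
    exact eq_neg_of_add_eq_zero_left (hsl.dT_homY_add_homY_del 0 y)
  have dT_homX := eq_sub_of_add_eq (hsl.dT_homX_zero x)
  rw [hsl.homY_zero] at dT_homX
  change dT R 0 (-homY slY 1 (sY 0 (muT R 0 x)) + homX slX 0 x) = _
  rw [map_add, map_neg, dT_homY, dT_homX, R.muT_zero, R.sig0_del_sY_zero hsY, map_sub, augXT,
    LinearMap.comp_apply, LinearMap.comp_apply]
  abel

theorem dT_sbar_succ (hsl : R.IsHomotopy slY slX) (hsY : IsHomotopyY sY) (n : ℕ)
    (x : XT k A H E (n + 1)) :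
    dT R (n + 1) (sbar R slY slX sY (n + 1) x) + sbar R slY slX sY n (dT R n x) = x := by
  have sbar_apply (m : ℕ) (z : XT k A H E m) :
      sbar R slY slX sY m z = -homY slY (m + 1) (sY m (muT R m z)) + homX slX m z := rfl
  have dT_homY := eq_neg_of_add_eq_zero_left
    (hsl.dT_homY_add_homY_del (n + 1) (sY (n + 1) (muT R (n + 1) x)))
  have muT_dT := eq_neg_of_add_eq_zero_left (R.muT_dT_add_del_muT n x)
  have del_sY := eq_sub_of_add_eq (R.del_sY_succ hsY n (muT R (n + 1) x))
  calc dT R (n + 1) (sbar R slY slX sY (n + 1) x) + sbar R slY slX sY n (dT R n x)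
      = dT R (n + 1) (homX slX (n + 1) x) + homX slX n (dT R n x) +
          homY slY (n + 1) (muT R (n + 1) x) := by
        rw [sbar_apply, sbar_apply, map_add, map_neg, dT_homY, muT_dT, del_sY]
        simp only [map_sub, map_neg]
        abel
    _ = x := hsl.dT_homX_succ n x

theorem slX_eq_zero (hsl : R.IsHomotopy slY slX) {l r s : ℕ} (hl : l ≤ s) {x : Xc k A H E r s}
    (hx : R.sig r s x = 0) : slX l r s x = 0 := by
  induction l using Nat.strong_induction_on with
  | _ l ih =>
    rcases Nat.eq_zero_or_pos l with rfl | hpos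
    · rw [hsl.slX_zero]
      exact hx
    · rw [hsl.slX_eq l r s hpos hl, LinearMap.neg_apply, LinearMap.sum_apply,
        Finset.sum_eq_zero, neg_zero]
      intro i _
      simp only [LinearMap.comp_apply, ih i i.isLt (i.isLt.le.trans hl), map_zero]

theorem homX_gen (hsl : R.IsHomotopy slY slX) {n : ℕ} {x : XT k A H E n}
    (hx : x ∈ XT.gen k A H E n) : homX slX n x = 0 := by
  obtain ⟨s, e, hs, as, rfl⟩ := hx
  rw [homX, XT.toModule_of, LinearMap.sum_apply]
  refine Finset.sum_eq_zero fun l _ => ?_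
  rw [LinearMap.comp_apply, LinearMap.comp_apply,
    hsl.slX_eq_zero (by omega) (R.sig_xgen_one _ _ e hs as), map_zero, map_zero]

theorem sbar_gen (hsl : R.IsHomotopy slY slX) (hsY : IsHomotopyY sY) {n : ℕ} {x : XT k A H E n}
    (hx : x ∈ XT.gen k A H E n) : sbar R slY slX sY n x = 0 := by
  change -homY slY (n + 1) (sY n (muT R n x)) + homX slX n x = 0
  rw [R.muT_gen hsY hx, hsl.homX_gen hx, map_zero, neg_zero, add_zero]

/-- The resolution `(X_*, d_*)` with the right action of `E` and the contracting homotopy `σ̄`. -/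
def contractedComplex (hsl : R.IsHomotopy slY slX) (hsY : IsHomotopyY sY) :
    ContractedComplex k E fun n => XT k A H E n where
  d := dT R
  h := sbar R slY slX sY
  proj := R.augXT
  act := rT
  gen := XT.gen k A H E
  span_act_gen := XT.span_rT_gen
  d_act := R.dT_rT
  h_gen _ _ := hsl.sbar_gen hsY
  d_h_zero := hsl.dT_sbar_zero hsY
  d_h := hsl.dT_sbar_succ hsY
  proj_d := R.augXT_dT

end IsHomotopy

end ResData

end Resolution

/-! ### The normalized Hochschild resolution -/

section HochschildResolution

variable {k E : Type} [CommRing k] [Ring E] [Algebra k E]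

theorem rB_bgen (x e : E) {n : ℕ} (xs : Fin n → E) (e' : E) :
    rB x (bgen (k := k) e xs e') = bgen e xs (e' * x) := rfl

variable (k E) in
/-- The generators `e ⊗ 𝐱 ⊗ 1` of `B_n(E)` as a right `E`-module. -/
def barGen (n : ℕ) : Set (Bch k E n) :=
  {x | ∃ (e : E) (xs : Fin n → E), x = bgen e xs 1}

theorem span_rB_barGen (n : ℕ) :
    Submodule.span k {x | ∃ e : E, ∃ g ∈ barGen k E n, rB e g = x} = ⊤ := by
  rw [← Submodule.ker_mkQ (Submodule.span k _), LinearMap.ker_eq_top]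
  refine bgen_ext fun e xs e' => (Submodule.Quotient.mk_eq_zero _).2 (Submodule.subset_span ?_)
  exact ⟨e', _, ⟨e, xs, rfl⟩, by rw [rB_bgen, one_mul]⟩

theorem Bch_hom_ext_zero {N : Type} [AddCommGroup N] [Module k N] {f g : Bch k E 0 →ₗ[k] N}
    (h : ∀ e e', f (bgen e (fun i => i.elim0) e') = g (bgen e (fun i => i.elim0) e')) : f = g :=
  bgen_ext fun e xs e' => by
    obtain rfl : xs = fun i => i.elim0 := Subsingleton.elim _ _
    exact h e e'

variable (k E) in
/-- The idempotent of `B_0(E) = E ⊗ E` given by the multiplication `E ⊗ E → E` and its section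
`e ↦ e ⊗ 1`. -/
def barAug : Bch k E 0 →ₗ[k] Bch k E 0 :=
  (TensorProduct.mk k E (k ⊗[k] E)).flip (1 ⊗ₜ 1) ∘ₗ LinearMap.mul' k E ∘ₗ
    LinearMap.lTensor E (TensorProduct.lid k E).toLinearMap

theorem barAug_bgen (e : E) (xs : Fin 0 → E) (e' : E) :
    barAug k E (bgen e xs e') = bgen (e * e') xs 1 := by
  change (e * (1 : k) • e') ⊗ₜ[k] ((1 : k) ⊗ₜ[k] (1 : E)) = _
  rw [one_smul]
  rfl

namespace IsBp

variable {bp : ∀ n : ℕ, Bch k E (n + 1) →ₗ[k] Bch k E n}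

theorem apply_rB (hbp : IsBp k E bp) (e : E) (n : ℕ) (x : Bch k E (n + 1)) :
    bp n (rB e x) = rB e (bp n x) := by
  suffices bp n ∘ₗ rB e = rB e ∘ₗ bp n from LinearMap.congr_fun this x
  refine bgen_ext fun e₀ xs e' => ?_
  rw [LinearMap.comp_apply, LinearMap.comp_apply, rB_bgen, hbp, hbp]
  simp only [map_add, map_sum, map_zsmul, rB_bgen, mul_assoc]

theorem apply_zero (hbp : IsBp k E bp) (e : E) (xs : Fin 1 → E) (e' : E) :
    bp 0 (bgen e xs e') =
      bgen (e * xs 0) (fun i => i.elim0) e' - bgen e (fun i => i.elim0) (xs 0 * e') := by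
  have neg_one_pow : (-1 : ℤ) ^ (0 + 1) = -1 := pow_one _
  rw [hbp, Finset.univ_eq_empty, Finset.sum_empty, add_zero, neg_one_pow, neg_smul, one_smul,
    ← sub_eq_add_neg]
  congr 2 <;> exact Subsingleton.elim (α := Fin 0 → E) _ _

theorem barAug_apply (hbp : IsBp k E bp) (x : Bch k E 1) : barAug k E (bp 0 x) = 0 := by
  suffices barAug k E ∘ₗ bp 0 = 0 from LinearMap.congr_fun this x
  refine bgen_ext fun e xs e' => ?_
  rw [LinearMap.comp_apply, hbp.apply_zero, map_sub, barAug_bgen, barAug_bgen, mul_assoc, sub_self,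
    LinearMap.zero_apply]

variable {xi : ∀ n : ℕ, Bch k E n →ₗ[k] Bch k E (n + 1)}

theorem apply_xi_succ (hbp : IsBp k E bp) (hxi : IsXi k E xi) (n : ℕ) (x : Bch k E (n + 1)) :
    bp (n + 1) (xi (n + 1) x) + xi n (bp n x) = x := by
  suffices bp (n + 1) ∘ₗ xi (n + 1) + xi n ∘ₗ bp n = LinearMap.id from LinearMap.congr_fun this x
  refine bgen_ext fun e xs e' => ?_
  have snoc_zero : (Fin.snoc xs e' : Fin (n + 2) → E) 0 = xs 0 :=
    Fin.snoc_castSucc (α := fun _ => E) e' xs 0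
  have cancel := row_sign_cancel n
    (fun _ : Unit =>
      bgen (k := k) (e * xs 0) (Fin.snoc (fun i : Fin n => xs i.succ) e' : Fin (n + 1) → E) 1)
    (fun i => bgen e (Fin.snoc (mulAt xs i) e' : Fin (n + 1) → E) 1)
    (bgen e (Fin.snoc (fun i : Fin n => xs i.castSucc) (xs (Fin.last n) * e') : Fin (n + 1) → E) 1)
    (bgen e xs e')
  simp only [Finset.univ_unique, Finset.sum_singleton] at cancel
  simp only [LinearMap.comp_apply, LinearMap.add_apply, LinearMap.id_apply, hxi _, map_zsmul,
    hbp _, map_add, map_sum, fin_snoc_succ, snoc_zero, Fin.snoc_castSucc, Fin.snoc_last,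
    Fin.sum_univ_castSucc (n := n), mulAt_snoc_castSucc, mulAt_snoc_last, mul_one,
    Fin.val_castSucc, Fin.val_last]
  exact cancel

theorem apply_xi_zero (hbp : IsBp k E bp) (hxi : IsXi k E xi) (x : Bch k E 0) :
    bp 0 (xi 0 x) = x - barAug k E x := by
  suffices bp 0 ∘ₗ xi 0 = LinearMap.id - barAug k E from LinearMap.congr_fun this x
  refine bgen_ext fun e xs e' => ?_
  obtain rfl : xs = fun i => i.elim0 := Subsingleton.elim _ _
  have neg_one_pow : (-1 : ℤ) ^ (0 + 1) = -1 := pow_one _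
  rw [LinearMap.comp_apply, hxi, map_zsmul, hbp.apply_zero, mul_one, neg_one_pow, neg_smul,
    one_smul, neg_sub, LinearMap.sub_apply, LinearMap.id_apply, barAug_bgen]
  rfl

end IsBp

namespace IsXi

variable {xi : ∀ n : ℕ, Bch k E n →ₗ[k] Bch k E (n + 1)}

theorem apply_barGen (hxi : IsXi k E xi) {n : ℕ} {x : Bch k E n} (hx : x ∈ barGen k E n) :
    xi n x = 0 := by
  obtain ⟨e, xs, rfl⟩ := hx
  rw [hxi, bgen, tp_qbar_snoc_one, TensorProduct.zero_tmul, TensorProduct.tmul_zero, smul_zero]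

theorem apply_mem_span (hxi : IsXi k E xi) (n : ℕ) (x : Bch k E n) :
    xi n x ∈ Submodule.span k (barGen k E (n + 1)) := by
  have mkQ_xi : (Submodule.span k (barGen k E (n + 1))).mkQ ∘ₗ xi n = 0 :=
    bgen_ext fun e xs e' => (Submodule.Quotient.mk_eq_zero _).2 <| by
      rw [hxi]
      exact zsmul_mem (Submodule.subset_span (s := barGen k E (n + 1)) ⟨e, _, rfl⟩) _
  exact (Submodule.Quotient.mk_eq_zero _).1 (LinearMap.congr_fun mkQ_xi x)

end IsXi

/-- The normalized Hochschild resolution of `E` with the right action of `E` and the contracting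
homotopy `ξ`. -/
def IsBp.contractedComplex {bp : ∀ n : ℕ, Bch k E (n + 1) →ₗ[k] Bch k E n}
    {xi : ∀ n : ℕ, Bch k E n →ₗ[k] Bch k E (n + 1)} (hbp : IsBp k E bp) (hxi : IsXi k E xi) :
    ContractedComplex k E (Bch k E) where
  d := bp
  h := xi
  proj := barAug k E
  act e _ := rB e
  gen := barGen k E
  span_act_gen := span_rB_barGen
  d_act := hbp.apply_rB
  h_gen _ _ := hxi.apply_barGen
  d_h_zero := hbp.apply_xi_zero hxi
  d_h := hbp.apply_xi_succ hxi
  proj_d := hbp.barAug_apply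

end HochschildResolution

section ComparisonMaps

variable {k A H E : Type} [CommRing k] [Ring A] [Algebra k A] [Ring H] [HopfAlgebra k H]
  [Ring E] [Algebra k E] {S : CrossedProduct k A H E} {R : ResData k A H E S}
  {bp : ∀ n : ℕ, Bch k E (n + 1) →ₗ[k] Bch k E n}
  {xi : ∀ n : ℕ, Bch k E n →ₗ[k] Bch k E (n + 1)}
  {sY : ∀ s : ℕ, Yc k H E s →ₗ[k] Yc k H E (s + 1)}
  {slY : ∀ l s : ℕ, Yc k H E s →ₗ[k] Xc k A H E l (s - l)}
  {slX : ∀ l r s : ℕ, Xc k A H E r s →ₗ[k] Xc k A H E (r + l + 1) (s - l)}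
  {phi : ∀ n : ℕ, XT k A H E n →ₗ[k] Bch k E n} {psi : ∀ n : ℕ, Bch k E n →ₗ[k] XT k A H E n}

theorem isComparison_to_hochschild (hbp : IsBp k E bp) (hxi : IsXi k E xi)
    (hsl : R.IsHomotopy slY slX) (hsY : IsHomotopyY sY)
    (map_of_zero : ∀ e e' : E,
      phi 0 (XT.of k A H E 0 0 (xgen e (fun i => i.elim0) (fun i => i.elim0) e')) =
        bgen e (fun i => i.elim0) e')
    (map_rT : ∀ (n : ℕ) (e : E), phi n ∘ₗ rT e n = rB e ∘ₗ phi n)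
    (map_gen : ∀ n, ∀ x ∈ XT.gen k A H E (n + 1), phi (n + 1) x = xi n (phi n (dT R n x))) :
    (hsl.contractedComplex hsY).IsComparison (hbp.contractedComplex hxi) phi where
  map_act e n x := LinearMap.congr_fun (map_rT n e) x
  map_proj x := by
    suffices phi 0 ∘ₗ R.augXT = barAug k E ∘ₗ phi 0 from LinearMap.congr_fun this x
    refine XT.hom_ext_zero fun e e' => ?_
    rw [LinearMap.comp_apply, LinearMap.comp_apply, R.augXT_of_xgen, map_of_zero, map_of_zero,
      barAug_bgen]
  map_gen := map_gen

theorem isComparison_from_hochschild (hbp : IsBp k E bp) (hxi : IsXi k E xi)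
    (hsl : R.IsHomotopy slY slX) (hsY : IsHomotopyY sY)
    (map_bgen_zero : ∀ e e' : E, psi 0 (bgen e (fun i => i.elim0) e') =
      XT.of k A H E 0 0 (xgen e (fun i => i.elim0) (fun i => i.elim0) e'))
    (map_rB : ∀ (n : ℕ) (e : E), psi n ∘ₗ rB e = rT e n ∘ₗ psi n)
    (map_gen : ∀ n, ∀ x ∈ barGen k E (n + 1),
      psi (n + 1) x = sbar R slY slX sY n (psi n (bp n x))) :
    (hbp.contractedComplex hxi).IsComparison (hsl.contractedComplex hsY) psi where
  map_act e n x := LinearMap.congr_fun (map_rB n e) x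
  map_proj x := by
    suffices psi 0 ∘ₗ barAug k E = R.augXT ∘ₗ psi 0 from LinearMap.congr_fun this x
    refine Bch_hom_ext_zero fun e e' => ?_
    rw [LinearMap.comp_apply, LinearMap.comp_apply, barAug_bgen, map_bgen_zero, map_bgen_zero,
      R.augXT_of_xgen]
  map_gen := map_gen

end ComparisonMaps

section Statement4

variable {k A H E : Type} [CommRing k] [Ring A] [Algebra k A] [Ring H] [HopfAlgebra k H]
  [Ring E] [Algebra k E]

/-- **Proposition 1.2.1: comparison with the normalized Hochschild resolution.**
Let `φ : (X_*, d_*) → (B_*(E), b'_*)` and `ψ : (B_*(E), b'_*) → (X_*, d_*)` be the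
comparison morphisms of complexes of `E`-bimodules, recursively defined by `φ₀ = id`,
`ψ₀ = id`, `φ_{n+1}(𝐱 ⊗ 1) = ξ_{n+1}(φ_n(d_{n+1}(𝐱 ⊗ 1)))` and
`ψ_{n+1}(𝐲 ⊗ 1) = σ̄_{n+1}(ψ_n(b'_{n+1}(𝐲 ⊗ 1)))`.  Then `ψ ∘ φ = id`, and `φ ∘ ψ` is
homotopic to the identity via the `E`-bimodule homotopy `ω` recursively defined by
`ω₁ = 0` and `ω_{n+1}(𝐱) = ξ_{n+1}((φ_n ∘ ψ_n - id - ω_n ∘ b'_n)(𝐱))`; thus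
`(X_*, d_*)` is a direct summand of the normalized Hochschild resolution of `E`. -/
theorem comparison_with_hochschild_resolution
    (S : CrossedProduct k A H E) (R : ResData k A H E S)
    -- the normalized Hochschild resolution and its contracting homotopy `ξ`
    (bp : ∀ n : ℕ, Bch k E (n + 1) →ₗ[k] Bch k E n) (hbp : IsBp k E bp)
    (xi : ∀ n : ℕ, Bch k E n →ₗ[k] Bch k E (n + 1)) (hxi : IsXi k E xi)
    -- the maps `σ⁻¹`, `σ^l` and the contracting homotopy `σ̄` of `(X_*, d_*)`
    (sY : ∀ s : ℕ, Yc k H E s →ₗ[k] Yc k H E (s + 1))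
    (hsY : ∀ (s : ℕ) (e : E) (hs : Fin s → H) (h : H),
      sY s (ygen e hs h) = ((-1 : ℤ) ^ s) • ygen e (Fin.snoc hs h) 1)
    (slY : ∀ l s : ℕ, Yc k H E s →ₗ[k] Xc k A H E l (s - l))
    (slX : ∀ l r s : ℕ, Xc k A H E r s →ₗ[k] Xc k A H E (r + l + 1) (s - l))
    (hslY0 : ∀ s : ℕ, slY 0 s = R.sig0 s)
    (hslX0 : ∀ r s : ℕ, slX 0 r s = R.sig r s)
    (hslY : ∀ (l s : ℕ) (hl : 1 ≤ l) (hls : l ≤ s),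
      slY l s = - ∑ i : Fin l,
        xcast (show (l - 1) + 1 = l by omega) rfl ∘ₗ
          R.sig (l - 1) (s - l) ∘ₗ
          xcast
            (show (i : ℕ) + (l - (i : ℕ)) - 1 = l - 1 by have := i.isLt; omega)
            (show (s - (i : ℕ)) - (l - (i : ℕ)) = s - l by have := i.isLt; omega) ∘ₗ
          R.dl (l - (i : ℕ)) (i : ℕ) (s - (i : ℕ)) ∘ₗ slY (i : ℕ) s)
    (hslX : ∀ (l r s : ℕ) (hl : 1 ≤ l) (hls : l ≤ s),
      slX l r s = - ∑ i : Fin l,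
        R.sig (r + l) (s - l) ∘ₗ
          xcast
            (show (r + (i : ℕ) + 1) + (l - (i : ℕ)) - 1 = r + l by have := i.isLt; omega)
            (show (s - (i : ℕ)) - (l - (i : ℕ)) = s - l by have := i.isLt; omega) ∘ₗ
          R.dl (l - (i : ℕ)) (r + (i : ℕ) + 1) (s - (i : ℕ)) ∘ₗ slX (i : ℕ) r s)
    -- the comparison maps `φ` and `ψ`
    (phi : ∀ n : ℕ, XT k A H E n →ₗ[k] Bch k E n)
    (psi : ∀ n : ℕ, Bch k E n →ₗ[k] XT k A H E n)
    (hphi0 : ∀ e e' : E,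
      phi 0 (DirectSum.lof k (Fin 1) (fun s' : Fin 1 => Xc k A H E (0 - (s' : ℕ)) (s' : ℕ)) 0
        (xgen e (fun i : Fin 0 => i.elim0) (fun i : Fin 0 => i.elim0) e')) =
      bgen e (fun i : Fin 0 => i.elim0) e')
    (hpsi0 : ∀ e e' : E,
      psi 0 (bgen e (fun i : Fin 0 => i.elim0) e') =
        DirectSum.lof k (Fin 1) (fun s' : Fin 1 => Xc k A H E (0 - (s' : ℕ)) (s' : ℕ)) 0
          (xgen e (fun i : Fin 0 => i.elim0) (fun i : Fin 0 => i.elim0) e'))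
    (hphiS : ∀ (n : ℕ) (s : Fin (n + 2)) (e : E) (hs : Fin (s : ℕ) → H)
      (as : Fin (n + 1 - (s : ℕ)) → A),
      phi (n + 1) (DirectSum.lof k (Fin (n + 2))
          (fun s' : Fin (n + 2) => Xc k A H E (n + 1 - (s' : ℕ)) (s' : ℕ)) s
          (xgen e hs as (1 : E))) =
        xi n (phi n (dT R n (DirectSum.lof k (Fin (n + 2))
          (fun s' : Fin (n + 2) => Xc k A H E (n + 1 - (s' : ℕ)) (s' : ℕ)) s
          (xgen e hs as (1 : E))))))
    (hpsiS : ∀ (n : ℕ) (e : E) (xs : Fin (n + 1) → E),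
      psi (n + 1) (bgen e xs (1 : E)) =
        sbar R slY slX sY n (psi n (bp n (bgen e xs (1 : E)))))
    (hphiR : ∀ (n : ℕ) (e : E), phi n ∘ₗ rT e n = rB e ∘ₗ phi n)
    (hpsiR : ∀ (n : ℕ) (e : E), psi n ∘ₗ rB e = rT e n ∘ₗ psi n)
    -- the homotopy `ω`
    (om : ∀ n : ℕ, Bch k E n →ₗ[k] Bch k E (n + 1))
    (hom0 : om 0 = 0)
    (homS : ∀ (n : ℕ) (e : E) (xs : Fin (n + 1) → E),
      om (n + 1) (bgen e xs (1 : E)) =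
        xi (n + 1) (phi (n + 1) (psi (n + 1) (bgen e xs (1 : E)))
          - bgen e xs (1 : E) - om n (bp n (bgen e xs (1 : E)))))
    (homR : ∀ (n : ℕ) (e : E), om n ∘ₗ rB e = rB e ∘ₗ om n) :
    -- `ψ ∘ φ = id`
    (∀ n : ℕ, psi n ∘ₗ phi n = LinearMap.id) ∧
    -- `ω` is a homotopy from `φ ∘ ψ` to the identity
    (bp 0 ∘ₗ om 0 = phi 0 ∘ₗ psi 0 - LinearMap.id) ∧
    (∀ n : ℕ, bp (n + 1) ∘ₗ om (n + 1) + om n ∘ₗ bp n =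
      phi (n + 1) ∘ₗ psi (n + 1) - LinearMap.id) := by
  have hsl : R.IsHomotopy slY slX := ⟨hslY0, hslX0, hslY, hslX⟩
  have phi_isComparison := isComparison_to_hochschild hbp hxi hsl hsY hphi0 hphiR
    fun n _ ⟨s, e, hs, as, hx⟩ => hx ▸ hphiS n s e hs as
  have psi_isComparison := isComparison_from_hochschild hbp hxi hsl hsY hpsi0 hpsiR
    fun n _ ⟨e, xs, hx⟩ => hx ▸ hpsiS n e xs
  have psi_phi_zero : psi 0 ∘ₗ phi 0 = LinearMap.id := XT.hom_ext_zero fun e e' =>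
    (congrArg (psi 0) (hphi0 e e')).trans (hpsi0 e e')
  have phi_psi_zero : phi 0 ∘ₗ psi 0 = LinearMap.id := Bch_hom_ext_zero fun e e' =>
    (congrArg (phi 0) (hpsi0 e e')).trans (hphi0 e e')
  have phi_psi_rB (e : E) (n : ℕ) (x : Bch k E n) :
      phi n (psi n (rB e x)) = rB e (phi n (psi n x)) :=
    (congrArg (phi n) (psi_isComparison.map_act e n x)).trans (phi_isComparison.map_act e n _)
  have bp_phi_psi (n : ℕ) (x : Bch k E (n + 1)) :
      bp n (phi (n + 1) (psi (n + 1) x)) = phi n (psi n (bp n x)) :=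
    (phi_isComparison.d_map n _).trans (congrArg (phi n) (psi_isComparison.d_map n x))
  refine ⟨phi_isComparison.comp_eq_id psi_isComparison hxi.apply_mem_span psi_phi_zero, ?_, ?_⟩
  · rw [hom0, LinearMap.comp_zero, phi_psi_zero, sub_self]
  · exact (hbp.contractedComplex hxi).homotopy_of_map_gen (χ := fun n => phi n ∘ₗ psi n)
      phi_psi_rB bp_phi_psi phi_psi_zero (fun e n => LinearMap.congr_fun (homR n e)) hom0
      fun n _ ⟨e, xs, hx⟩ => hx ▸ homS n e xs

end Statement4

end HopfCrossed
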